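/- Let $A \subset \mathbb{R}$ be a compact set and let $d \ge 10$ be an integer. If the Hausdorff dimension of $A$ satisfies $\dim_H(A) > \frac{d-2}{2(d-4)} - \frac{40}{57(d-4)}$ (equivalently, $\dim_H(A) > \frac{d+1}{2d} - \frac{23d-228}{114d(d-4)}$), then the distance set $\Delta(A^d)$ of the $d$-fold Cartesian product $A^d \subset \mathbb{R}^d$ has non-empty interior. -/

import Mathlib

/-- The distance set `Δ(E) = {|x - y| : x, y ∈ E}` of a set `E ⊆ ℝⁿ`. -/
def distSet {n : ℕ} (E : Set (EuclideanSpace ℝ (Fin n))) : Set ℝ :=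
  {t : ℝ | ∃ x ∈ E, ∃ y ∈ E, dist x y = t}

/-- The `n`-fold Cartesian product `Aⁿ ⊆ ℝⁿ` of a set `A ⊆ ℝ`. -/
def prodSet (A : Set ℝ) (n : ℕ) : Set (EuclideanSpace ℝ (Fin n)) :=
  {x | ∀ i, x i ∈ A}

/-!
Since `|x - y|² = ∑ (xᵢ - yᵢ)²`, the squared distances of `Aᵈ` form the `d`-fold sumset of
`{(a - b)² : a, b ∈ A}`, and it suffices to put on them a measure with integrable Fourier transform.

Let `μ` be a Frostman measure on `A` of dimension `s > 1 / 2`. The law of `(a - b)²` under `μ × μ`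
has Fourier decay `|t| ^ -(s - 1 / 2)`, so a convolution of `d - 6` copies decays like
`|t| ^ -((d - 6) (s - 1 / 2))`. The other six coordinates are split into two triples, each of which
carries a Frostman measure `η` on its squared distances of any dimension
`σ < 2 - (s + 1 / s) / 2`. The Fourier transform of `η ∗ η` is `η̂ ²`, whose average over `|t| ∼ R`
is `O(R ^ -σ)`, so the product is integrable once `1 - σ < (d - 6) (s - 1 / 2)`.

To construct `η`, one shows that a union of `δ ^ -σ` intervals of length `δ` contains
`|p - z|² + t` only for a small proportion of the `p, z ∈ A²` and of the third squared differences
`t`. By Cauchy-Schwarz in `p` this is a bound on how often `|p - z|² + t` and `|p' - z|² + t`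
fall into the same cells for a typical pair `p, p'`. In Fourier space it becomes an energy estimate,
which holds for all pairs that do not span a tube of exceptionally large mass; the exceptional pairs
are few because the mass of strips changes little, in `L²`, from one scale to the next.
-/

namespace MattilaSjolin

open MeasureTheory ProbabilityTheory Set Filter Topology
open scoped ENNReal NNReal FourierTransform SchwartzMap

section GaussianWeight

/-- The Gaussian weight `exp (-x² / 2)`, with values in `ℝ≥0∞` so that it can be used under lower
Lebesgue integrals. -/
noncomputable def gaussWeight (x : ℝ) : ℝ≥0∞ := ENNReal.ofReal (Real.exp (-(x ^ 2) / 2))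

@[fun_prop]
lemma measurable_gaussWeight : Measurable gaussWeight := by
  unfold gaussWeight
  fun_prop

lemma gaussWeight_le_one (x : ℝ) : gaussWeight x ≤ 1 := by
  rw [gaussWeight, ENNReal.ofReal_le_one, Real.exp_le_one_iff]
  linarith [sq_nonneg x]

lemma gaussWeight_le_gaussWeight {x y : ℝ} (h : |x| ≤ |y|) : gaussWeight y ≤ gaussWeight x := by
  have := sq_le_sq.mpr h
  exact ENNReal.ofReal_le_ofReal (Real.exp_le_exp.mpr (by linarith))

lemma gaussWeight_neg (x : ℝ) : gaussWeight (-x) = gaussWeight x := by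
  rw [gaussWeight, gaussWeight, neg_sq]

lemma one_le_exp_mul_gaussWeight {x b : ℝ} (h : |x| ≤ b) :
    1 ≤ ENNReal.ofReal (Real.exp (b ^ 2 / 2)) * gaussWeight x := by
  rw [gaussWeight, ← ENNReal.ofReal_mul (by positivity), ← Real.exp_add, ENNReal.one_le_ofReal,
    Real.one_le_exp_iff]
  have : x ^ 2 ≤ b ^ 2 := sq_le_sq' (abs_le.mp h).1 (abs_le.mp h).2
  linarith

/-- The constant `∑ k, (k + 1) exp (-k² / 2)` in the layer-cake estimate
`lintegral_gaussWeight_le_of_measure_le`. -/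
noncomputable def gaussLayerConst : ℝ≥0∞ := ∑' k : ℕ, gaussWeight k * ENNReal.ofReal (k + 1)

lemma gaussLayerConst_ne_top : gaussLayerConst ≠ ⊤ := by
  have hsummable : Summable fun k : ℕ ↦ (k : ℝ) ^ 1 * Real.exp (-(1 / 2) * k)
      + (k : ℝ) ^ 0 * Real.exp (-(1 / 2) * k) :=
    (Real.summable_pow_mul_exp_neg_nat_mul 1 (by norm_num)).add
      (Real.summable_pow_mul_exp_neg_nat_mul 0 (by norm_num))
  refine ne_top_of_le_ne_top hsummable.tsum_ofReal_ne_top (ENNReal.tsum_le_tsum fun k ↦ ?_)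
  rw [gaussWeight, ← ENNReal.ofReal_mul (by positivity)]
  apply ENNReal.ofReal_le_ofReal
  have hk : (k : ℝ) ≤ (k : ℝ) ^ 2 := by exact_mod_cast Nat.le_self_pow (by norm_num) k
  calc Real.exp (-(k : ℝ) ^ 2 / 2) * (k + 1)
      ≤ Real.exp (-(1 / 2) * k) * (k + 1) := by gcongr; linarith
    _ = _ := by ring

lemma lintegral_gaussWeight_le_of_measure_le {α : Type*} [MeasurableSpace α] {m : Measure α}
    {X : α → ℝ} (hX : Measurable X) {A : ℝ≥0∞}
    (h : ∀ r : ℝ, 1 ≤ r → m {a | |X a| ≤ r} ≤ A * ENNReal.ofReal r) :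
    ∫⁻ a, gaussWeight (X a) ∂m ≤ gaussLayerConst * A := by
  have hmeas (k : ℕ) : MeasurableSet {a | |X a| ≤ (k : ℝ) + 1} :=
    measurableSet_le (by fun_prop) measurable_const
  calc ∫⁻ a, gaussWeight (X a) ∂m
      ≤ ∫⁻ a, ∑' k : ℕ, gaussWeight k * ({a | |X a| ≤ (k : ℝ) + 1}.indicator 1 a) ∂m := by
        refine lintegral_mono fun a ↦ le_trans ?_ (ENNReal.le_tsum ⌊|X a|⌋₊)
        have hmem : a ∈ {b | |X b| ≤ (⌊|X a|⌋₊ : ℝ) + 1} := (Nat.lt_floor_add_one |X a|).le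
        rw [indicator_of_mem hmem, Pi.one_apply, mul_one]
        apply gaussWeight_le_gaussWeight
        rw [Nat.abs_cast]
        exact Nat.floor_le (abs_nonneg _)
    _ = ∑' k : ℕ, gaussWeight k * m {a | |X a| ≤ (k : ℝ) + 1} := by
        rw [lintegral_tsum fun k ↦
          ((measurable_one.indicator (hmeas k)).const_mul _).aemeasurable]
        refine tsum_congr fun k ↦ ?_
        rw [lintegral_const_mul _ (measurable_one.indicator (hmeas k)),
          lintegral_indicator_one (hmeas k)]
    _ ≤ ∑' k : ℕ, gaussWeight k * ENNReal.ofReal (k + 1) * A := by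
        refine ENNReal.tsum_le_tsum fun k ↦ ?_
        rw [mul_assoc, mul_comm _ A]
        gcongr
        exact h _ (by linarith [Nat.cast_nonneg (α := ℝ) k])
    _ = gaussLayerConst * A := ENNReal.tsum_mul_right

end GaussianWeight

section Frostman

/-- The Frostman (ball) condition `μ (B(x, r)) ≤ C rˢ` for all centres and all radii. -/
def IsFrostman {X : Type*} [PseudoMetricSpace X] [MeasurableSpace X] (μ : Measure X) (C : ℝ≥0∞)
    (s : ℝ) : Prop :=
  ∀ x r, 0 < r → μ (Metric.closedBall x r) ≤ C * ENNReal.ofReal (r ^ s)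

lemma IsFrostman.lintegral_gaussWeight_le {X : Type*} [PseudoMetricSpace X] [MeasurableSpace X]
    {μ : Measure X} {C : ℝ≥0∞} {s : ℝ} (hμ : IsFrostman μ C s) (hs : s ≤ 1) (x : X) {r : ℝ}
    (hr : 0 < r) {f : X → ℝ} (hf : Measurable f) (hdist : ∀ z, dist z x ≤ r * |f z|) :
    ∫⁻ z, gaussWeight (f z) ∂μ ≤ gaussLayerConst * (C * ENNReal.ofReal (r ^ s)) := by
  refine lintegral_gaussWeight_le_of_measure_le hf fun k hk ↦ ?_
  have hsub : {z | |f z| ≤ k} ⊆ Metric.closedBall x (k * r) := fun z hz ↦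
    (hdist z).trans (by rw [mul_comm]; gcongr; exact hz)
  refine (measure_mono hsub).trans ((hμ x (k * r) (by positivity)).trans ?_)
  rw [mul_assoc, ← ENNReal.ofReal_mul (by positivity), mul_comm (r ^ s),
    Real.mul_rpow (by linarith) hr.le]
  gcongr
  exact Real.rpow_le_self_of_one_le hk hs

lemma IsFrostman.lintegral_gaussWeight_mul_sub_le {μ : Measure ℝ} {C : ℝ≥0∞} {s : ℝ}
    (hμ : IsFrostman μ C s) (hs : s ≤ 1) {Q : ℝ} (hQ : 0 < Q) (z : ℝ) :
    ∫⁻ y, gaussWeight (Q * (z - y)) ∂μ ≤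
      gaussLayerConst * (C * ENNReal.ofReal (Q ^ (-s))) := by
  rw [Real.rpow_neg hQ.le, ← Real.inv_rpow hQ.le]
  refine hμ.lintegral_gaussWeight_le hs z (inv_pos.mpr hQ) (by fun_prop) fun y ↦ ?_
  rw [abs_mul, abs_of_pos hQ, inv_mul_cancel_left₀ hQ.ne', dist_comm, Real.dist_eq]

end Frostman

section SquareFunction

variable {𝕜 Θ Ω : Type*} [RCLike 𝕜] [MeasurableSpace Θ] [MeasurableSpace Ω]

lemma ofReal_integral_norm_integral_sq (m : Measure Θ) [IsFiniteMeasure m] (P : Measure Ω)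
    [SFinite P] {Φ : Θ → Ω → 𝕜} (hΦ : Measurable (Function.uncurry Φ)) {A : Ω → ℝ}
    (hA : Integrable A P) (hΦA : ∀ θ ω, ‖Φ θ ω‖ ≤ A ω) :
    (∫ θ, ((‖∫ ω, Φ θ ω ∂P‖ ^ 2 : ℝ) : 𝕜) ∂m) =
      ∫ w : Ω × Ω, (∫ θ, Φ θ w.1 * (starRingEnd 𝕜) (Φ θ w.2) ∂m) ∂(P.prod P) := by
  have hsq (θ : Θ) : ((‖∫ ω, Φ θ ω ∂P‖ ^ 2 : ℝ) : 𝕜) =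
      ∫ w : Ω × Ω, Φ θ w.1 * (starRingEnd 𝕜) (Φ θ w.2) ∂(P.prod P) := by
    rw [integral_prod_mul (fun ω ↦ Φ θ ω) (fun ω ↦ (starRingEnd 𝕜) (Φ θ ω)), integral_conj,
      RCLike.mul_conj, RCLike.ofReal_pow]
  have hdom : Integrable (fun q : Θ × (Ω × Ω) ↦ (1 : ℝ) * (A q.2.1 * A q.2.2))
      (m.prod (P.prod P)) := (integrable_const (1 : ℝ)).mul_prod (hA.mul_prod hA)
  simp_rw [hsq]
  refine integral_integral_swap (hdom.mono' (Measurable.aestronglyMeasurable ?_)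
    (ae_of_all _ fun q ↦ ?_))
  · have hfst : Measurable fun q : Θ × (Ω × Ω) ↦ Φ q.1 q.2.1 :=
      hΦ.comp (by fun_prop : Measurable fun q : Θ × (Ω × Ω) ↦ (q.1, q.2.1))
    have hsnd : Measurable fun q : Θ × (Ω × Ω) ↦ Φ q.1 q.2.2 :=
      hΦ.comp (by fun_prop : Measurable fun q : Θ × (Ω × Ω) ↦ (q.1, q.2.2))
    exact hfst.mul (RCLike.continuous_conj.measurable.comp hsnd)
  · simp only [Function.uncurry, norm_mul, RCLike.norm_conj, one_mul]
    exact mul_le_mul (hΦA _ _) (hΦA _ _) (norm_nonneg _) ((norm_nonneg _).trans (hΦA q.1 _))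

lemma lintegral_enorm_integral_sq (m : Measure Θ) [IsFiniteMeasure m] (P : Measure Ω)
    [SFinite P] {Φ : Θ → Ω → 𝕜} (hΦ : Measurable (Function.uncurry Φ)) {A : Ω → ℝ}
    (hA : Integrable A P) (hΦA : ∀ θ ω, ‖Φ θ ω‖ ≤ A ω) :
    ∫⁻ θ, ‖∫ ω, Φ θ ω ∂P‖ₑ ^ 2 ∂m =
      ‖∫ w : Ω × Ω, (∫ θ, Φ θ w.1 * (starRingEnd 𝕜) (Φ θ w.2) ∂m) ∂(P.prod P)‖ₑ := by
  have hintg : Integrable (fun θ ↦ ‖∫ ω, Φ θ ω ∂P‖ ^ 2) m := by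
    refine Integrable.of_bound (((hΦ.stronglyMeasurable.integral_prod_right').norm.measurable
      |>.pow_const 2).aestronglyMeasurable) ((∫ ω, A ω ∂P) ^ 2) (ae_of_all _ fun θ ↦ ?_)
    rw [norm_pow, norm_norm]
    exact pow_le_pow_left₀ (norm_nonneg _)
      (norm_integral_le_of_norm_le hA (ae_of_all _ (hΦA θ))) 2
  rw [← ofReal_integral_norm_integral_sq m P hΦ hA hΦA, integral_ofReal, ← ofReal_norm,
    RCLike.norm_ofReal, abs_of_nonneg (integral_nonneg fun θ ↦ by positivity),
    ofReal_integral_eq_lintegral_ofReal hintg (ae_of_all _ fun θ ↦ by positivity)]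
  refine lintegral_congr fun θ ↦ ?_
  rw [ENNReal.ofReal_pow (norm_nonneg _), ofReal_norm]

lemma lintegral_enorm_integral_sq_le (m : Measure Θ) [IsFiniteMeasure m] (P : Measure Ω)
    [SFinite P] {Φ : Θ → Ω → 𝕜} (hΦ : Measurable (Function.uncurry Φ)) {A : Ω → ℝ}
    (hA : Integrable A P) (hΦA : ∀ θ ω, ‖Φ θ ω‖ ≤ A ω) :
    ∫⁻ θ, ‖∫ ω, Φ θ ω ∂P‖ₑ ^ 2 ∂m ≤
      ∫⁻ w, ‖∫ θ, Φ θ w.1 * (starRingEnd 𝕜) (Φ θ w.2) ∂m‖ₑ ∂(P.prod P) := by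
  rw [lintegral_enorm_integral_sq m P hΦ hA hΦA]
  exact enorm_integral_le_lintegral_enorm _

lemma lintegral_enorm_integral_sq_of_kernel (m : Measure Θ) [IsFiniteMeasure m] (P : Measure Ω)
    [IsFiniteMeasure P] {Φ : Θ → Ω → 𝕜} (hΦ : Measurable (Function.uncurry Φ)) {B : ℝ}
    (hΦB : ∀ θ ω, ‖Φ θ ω‖ ≤ B) {k : Ω × Ω → ℝ} (hk0 : ∀ w, 0 ≤ k w)
    (hk : ∀ w, ∫ θ, Φ θ w.1 * (starRingEnd 𝕜) (Φ θ w.2) ∂m = (k w : 𝕜))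
    (hki : Integrable k (P.prod P)) :
    ∫⁻ θ, ‖∫ ω, Φ θ ω ∂P‖ₑ ^ 2 ∂m = ∫⁻ w, ENNReal.ofReal (k w) ∂(P.prod P) := by
  rw [lintegral_enorm_integral_sq m P hΦ (integrable_const B) hΦB]
  simp_rw [hk]
  rw [integral_ofReal, ← ofReal_norm, RCLike.norm_ofReal, abs_of_nonneg (integral_nonneg hk0),
    ofReal_integral_eq_lintegral_ofReal hki (ae_of_all _ hk0)]

end SquareFunction

section CauchySchwarz

variable {α : Type*} [MeasurableSpace α]

lemma sq_lintegral_mul_le (m : Measure α) {f g : α → ℝ≥0∞} (hf : AEMeasurable f m)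
    (hg : AEMeasurable g m) :
    (∫⁻ a, f a * g a ∂m) ^ 2 ≤ (∫⁻ a, f a ^ 2 ∂m) * ∫⁻ a, g a ^ 2 ∂m := by
  have h := ENNReal.lintegral_mul_le_Lp_mul_Lq m (p := 2) (q := 2) (by constructor <;> norm_num)
    hf hg
  simp only [Pi.mul_apply, ENNReal.rpow_ofNat] at h
  calc _ ≤ ((∫⁻ a, f a ^ 2 ∂m) ^ (1 / 2 : ℝ) * (∫⁻ a, g a ^ 2 ∂m) ^ (1 / 2 : ℝ)) ^ 2 := by gcongr
    _ = _ := by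
      rw [mul_pow, ← ENNReal.rpow_ofNat, ← ENNReal.rpow_mul, ← ENNReal.rpow_ofNat,
        ← ENNReal.rpow_mul]
      norm_num

lemma sq_lintegral_le (m : Measure α) {f : α → ℝ≥0∞} (hf : AEMeasurable f m) :
    (∫⁻ a, f a ∂m) ^ 2 ≤ m univ * ∫⁻ a, f a ^ 2 ∂m := by
  simpa using sq_lintegral_mul_le m (f := fun _ ↦ 1) aemeasurable_const hf

end CauchySchwarz

section CenteredGaussian

/-- The centred Gaussian probability measure on `ℝ` with standard deviation `|Q|`. -/
noncomputable def centeredGaussian (Q : ℝ) : Measure ℝ := gaussianReal 0 (Real.toNNReal (Q ^ 2))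

instance (Q : ℝ) : IsProbabilityMeasure (centeredGaussian Q) := by
  unfold centeredGaussian
  infer_instance

lemma lintegral_mul_gaussWeight_div {Q : ℝ} (hQ : 0 < Q) {f : ℝ → ℝ≥0∞} (hf : Measurable f) :
    ∫⁻ x, f x * gaussWeight (x / Q) =
      ENNReal.ofReal (Q * √(2 * Real.pi)) * ∫⁻ x, f x ∂(centeredGaussian Q) := by
  have hv : Real.toNNReal (Q ^ 2) ≠ 0 := by simpa using hQ.ne'
  rw [centeredGaussian, gaussianReal_of_var_ne_zero _ hv,
    lintegral_withDensity_eq_lintegral_mul _ (by fun_prop) hf,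
    ← lintegral_const_mul _ (by fun_prop)]
  refine lintegral_congr fun x ↦ ?_
  have hpdf : gaussianPDF 0 (Real.toNNReal (Q ^ 2)) x =
      ENNReal.ofReal (Q * √(2 * Real.pi))⁻¹ * gaussWeight (x / Q) := by
    rw [gaussianPDF, gaussianPDFReal, gaussWeight, ← ENNReal.ofReal_mul (by positivity),
      Real.coe_toNNReal _ (by positivity), Real.sqrt_mul (by positivity), Real.sqrt_sq hQ.le,
      mul_comm (√_) Q, sub_zero]
    congr 3
    field_simp
  rw [Pi.mul_apply, hpdf, mul_assoc, ← mul_assoc, ← ENNReal.ofReal_mul (by positivity),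
    mul_inv_cancel₀ (by positivity), ENNReal.ofReal_one, one_mul, mul_comm]

lemma integral_exp_mul_I_centeredGaussian (Q x : ℝ) :
    ∫ η, Complex.exp (↑(η * x) * Complex.I) ∂(centeredGaussian Q) =
      (Real.exp (-((Q * x) ^ 2) / 2) : ℂ) := by
  have h := charFun_gaussianReal (μ := 0) (v := Real.toNNReal (Q ^ 2)) x
  rw [charFun_apply_real, ← centeredGaussian] at h
  have hQ : ((Real.toNNReal (Q ^ 2) : ℝ) : ℂ) = (Q : ℂ) ^ 2 := by
    rw [Real.coe_toNNReal _ (sq_nonneg Q), Complex.ofReal_pow]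
  calc _ = ∫ η : ℝ, Complex.exp (x * η * Complex.I) ∂(centeredGaussian Q) := by
        simp_rw [Complex.ofReal_mul, mul_comm]
    _ = _ := by
        rw [h, hQ]
        push_cast
        ring_nf

lemma conj_exp_mul_I (x : ℝ) : (starRingEnd ℂ) (Complex.exp (x * Complex.I)) =
    Complex.exp (↑(-x) * Complex.I) := by
  rw [← Complex.exp_conj]
  simp

lemma lintegral_enorm_sq_oscillatory_le {Ω : Type*} [MeasurableSpace Ω] (P : Measure Ω) [SFinite P]
    {f : Ω → ℝ} (hf : Measurable f) {a : Ω → ℂ} (ha : Measurable a) (hai : Integrable a P)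
    (Q : ℝ) :
    ∫⁻ η, ‖∫ ω, a ω * Complex.exp (↑(η * f ω) * Complex.I) ∂P‖ₑ ^ 2 ∂(centeredGaussian Q) ≤
      ∫⁻ w, ‖a w.1‖ₑ * ‖a w.2‖ₑ * gaussWeight (Q * (f w.1 - f w.2)) ∂(P.prod P) := by
  refine (lintegral_enorm_integral_sq_le _ P (by simp only [Function.uncurry_def]; fun_prop)
    hai.norm fun η ω ↦ by rw [norm_mul, Complex.norm_exp_ofReal_mul_I, mul_one]).trans_eq ?_
  refine lintegral_congr fun w ↦ ?_
  have hprod (η : ℝ) : a w.1 * Complex.exp (↑(η * f w.1) * Complex.I)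
        * (starRingEnd ℂ) (a w.2 * Complex.exp (↑(η * f w.2) * Complex.I)) =
      (a w.1 * (starRingEnd ℂ) (a w.2)) *
        Complex.exp (↑(η * (f w.1 - f w.2)) * Complex.I) := by
    rw [map_mul, conj_exp_mul_I, mul_mul_mul_comm, ← Complex.exp_add]
    push_cast
    ring_nf
  simp_rw [hprod]
  rw [integral_const_mul, integral_exp_mul_I_centeredGaussian, enorm_mul, enorm_mul,
    RCLike.enorm_conj, gaussWeight, ← ofReal_norm (Complex.ofReal _), Complex.norm_real,
    Real.norm_of_nonneg (by positivity)]

end CenteredGaussian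

section WeightedCharFun

/-- The characteristic function `η ↦ ∫ a(z) exp (i η z) dμ(z)` of the complex measure `a μ`. -/
noncomputable def weightedCharFun (μ : Measure ℝ) (a : ℝ → ℂ) (η : ℝ) : ℂ :=
  ∫ z, a z * Complex.exp (↑(η * z) * Complex.I) ∂μ

lemma weightedCharFun_one (μ : Measure ℝ) : weightedCharFun μ (fun _ ↦ 1) = charFun μ := by
  ext η
  simp_rw [weightedCharFun, charFun_apply_real, one_mul, Complex.ofReal_mul]

@[fun_prop]
lemma measurable_weightedCharFun (μ : Measure ℝ) [SFinite μ] {a : ℝ → ℂ} (ha : Measurable a) :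
    Measurable (weightedCharFun μ a) := by
  refine (StronglyMeasurable.integral_prod_right' (ν := μ)
    (f := fun p : ℝ × ℝ ↦ a p.2 * Complex.exp (↑(p.1 * p.2) * Complex.I)) ?_).measurable
  exact Measurable.stronglyMeasurable (by fun_prop)

lemma IsFrostman.lintegral_enorm_sq_weightedCharFun_le {μ : Measure ℝ} [IsFiniteMeasure μ]
    {C : ℝ≥0∞} {s : ℝ} (hμ : IsFrostman μ C s) (hs : s ≤ 1) {a : ℝ → ℂ} (ha : Measurable a)
    {c : ℝ} (hc : ∀ᵐ z ∂μ, ‖a z‖ ≤ c) {Q : ℝ} (hQ : 0 < Q) :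
    ∫⁻ η, ‖weightedCharFun μ a η‖ₑ ^ 2 ∂(centeredGaussian Q) ≤
      ENNReal.ofReal c ^ 2 * (μ univ * (gaussLayerConst * C)) * ENNReal.ofReal (Q ^ (-s)) := by
  have hc' : ∀ᵐ z ∂μ, ‖a z‖ₑ ≤ ENNReal.ofReal c := by
    filter_upwards [hc] with z hz
    rw [← ofReal_norm]
    exact ENNReal.ofReal_le_ofReal hz
  refine (lintegral_enorm_sq_oscillatory_le μ measurable_id ha
    (.of_bound ha.aestronglyMeasurable c hc) Q).trans ?_
  simp only [id]
  rw [lintegral_prod _ (by fun_prop)]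
  calc _ ≤ ∫⁻ _, ENNReal.ofReal c ^ 2 * (gaussLayerConst * (C * ENNReal.ofReal (Q ^ (-s)))) ∂μ := by
        refine lintegral_mono_ae ?_
        filter_upwards [hc'] with z hz
        calc _ ≤ ∫⁻ y, ENNReal.ofReal c ^ 2 * gaussWeight (Q * (z - y)) ∂μ := by
              refine lintegral_mono_ae ?_
              filter_upwards [hc'] with y hy
              rw [pow_two]
              gcongr
          _ ≤ _ := by
              rw [lintegral_const_mul _ (by fun_prop)]
              gcongr
              exact hμ.lintegral_gaussWeight_mul_sub_le hs hQ z
    _ = _ := by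
        rw [lintegral_const]
        ring

lemma IsFrostman.lintegral_enorm_sq_weightedCharFun_mul_gaussWeight_le {μ : Measure ℝ}
    [IsFiniteMeasure μ] {C : ℝ≥0∞} {s : ℝ} (hμ : IsFrostman μ C s) (hs : s ≤ 1) {a : ℝ → ℂ}
    (ha : Measurable a) {c : ℝ} (hc : ∀ᵐ z ∂μ, ‖a z‖ ≤ c) {Q : ℝ} (hQ : 0 < Q) :
    ∫⁻ η, ‖weightedCharFun μ a η‖ₑ ^ 2 * gaussWeight (η / Q) ≤
      (ENNReal.ofReal (√(2 * Real.pi)) *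
        (ENNReal.ofReal c ^ 2 * (μ univ * (gaussLayerConst * C)))) *
          ENNReal.ofReal (Q ^ (1 - s)) := by
  rw [lintegral_mul_gaussWeight_div hQ (by fun_prop)]
  refine (mul_le_mul_right (hμ.lintegral_enorm_sq_weightedCharFun_le hs ha hc hQ) _).trans_eq ?_
  rw [sub_eq_add_neg, Real.rpow_add hQ, Real.rpow_one, ENNReal.ofReal_mul hQ.le,
    ENNReal.ofReal_mul hQ.le]
  ring

lemma weightedCharFun_eq_integral_centeredGaussian {μ : Measure ℝ} [IsFiniteMeasure μ]
    {a b : ℝ → ℂ} (hb : Measurable b) (hbi : Integrable b μ)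
    (hab : ∀ᵐ z ∂μ, a z = b z * (Real.exp (-(z ^ 2) / 2) : ℂ)) (η : ℝ) :
    weightedCharFun μ a η = ∫ u, weightedCharFun μ b (u + η) ∂(centeredGaussian 1) := by
  unfold weightedCharFun
  rw [integral_integral_swap]
  · refine integral_congr_ae ?_
    filter_upwards [hab] with z hz
    have hexp (u : ℝ) : b z * Complex.exp (↑((u + η) * z) * Complex.I) =
        (b z * Complex.exp (↑(η * z) * Complex.I)) * Complex.exp (↑(u * z) * Complex.I) := by
      rw [mul_assoc, ← Complex.exp_add]
      push_cast
      ring_nf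
    simp_rw [hexp]
    rw [integral_const_mul, integral_exp_mul_I_centeredGaussian, hz, one_mul]
    ring
  · have hdom : Integrable (fun q : ℝ × ℝ ↦ (1 : ℝ) * ‖b q.2‖) ((centeredGaussian 1).prod μ) :=
      (integrable_const (1 : ℝ)).mul_prod hbi.norm
    refine hdom.mono' (Measurable.aestronglyMeasurable ?_) (ae_of_all _ fun q ↦ ?_)
    · simp only [Function.uncurry_def]
      fun_prop
    · simp only [Function.uncurry_def]
      rw [norm_mul, Complex.norm_exp_ofReal_mul_I, mul_one, one_mul]

lemma enorm_sq_weightedCharFun_le {μ : Measure ℝ} [IsFiniteMeasure μ] {a b : ℝ → ℂ}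
    (hb : Measurable b) (hbi : Integrable b μ)
    (hab : ∀ᵐ z ∂μ, a z = b z * (Real.exp (-(z ^ 2) / 2) : ℂ)) (η : ℝ) :
    ‖weightedCharFun μ a η‖ₑ ^ 2 ≤ ∫⁻ x, ‖weightedCharFun μ b x‖ₑ ^ 2 * gaussWeight (x - η) := by
  rw [weightedCharFun_eq_integral_centeredGaussian hb hbi hab]
  have hsqrt : 1 ≤ √(2 * Real.pi) := Real.one_le_sqrt.mpr (by linarith [Real.pi_gt_three])
  calc _ ≤ (∫⁻ u, ‖weightedCharFun μ b (u + η)‖ₑ ∂(centeredGaussian 1)) ^ 2 := by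
        gcongr
        exact enorm_integral_le_lintegral_enorm _
    _ ≤ ∫⁻ u, ‖weightedCharFun μ b (u + η)‖ₑ ^ 2 ∂(centeredGaussian 1) := by
        simpa using sq_lintegral_le (centeredGaussian 1)
          (f := fun u ↦ ‖weightedCharFun μ b (u + η)‖ₑ) (by fun_prop)
    _ ≤ ENNReal.ofReal (1 * √(2 * Real.pi)) *
          ∫⁻ u, ‖weightedCharFun μ b (u + η)‖ₑ ^ 2 ∂(centeredGaussian 1) :=
        le_mul_of_one_le_left' (by rwa [one_mul, ENNReal.one_le_ofReal])
    _ = ∫⁻ u, ‖weightedCharFun μ b (u + η)‖ₑ ^ 2 * gaussWeight (u + η - η) := by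
        rw [← lintegral_mul_gaussWeight_div one_pos (by fun_prop)]
        simp_rw [add_sub_cancel_right, div_one]
    _ = _ := lintegral_add_right_eq_self
        (fun x ↦ ‖weightedCharFun μ b x‖ₑ ^ 2 * gaussWeight (x - η)) η

end WeightedCharFun

section DyadicSums

lemma summable_two_rpow_pow {x : ℝ} (hx : x < 0) : Summable fun k : ℕ ↦ ((2 : ℝ) ^ x) ^ k :=
  summable_geometric_of_lt_one (by positivity) (Real.rpow_lt_one_of_one_lt_of_neg one_lt_two hx)

lemma exists_two_pow_mul_between (η : ℝ) {Q : ℝ} (hQ : 1 ≤ Q) :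
    ∃ k : ℕ, |η| ≤ 2 ^ k * Q ∧ 2 ^ k * Q ≤ 2 * (Q + |η|) := by
  classical
  have hex : ∃ k : ℕ, |η| ≤ 2 ^ k * Q := by
    obtain ⟨k, hk⟩ := pow_unbounded_of_one_lt |η| (one_lt_two (α := ℝ))
    exact ⟨k, hk.le.trans (le_mul_of_one_le_right (by positivity) hQ)⟩
  refine ⟨Nat.find hex, Nat.find_spec hex, ?_⟩
  rcases hn : Nat.find hex with _ | n
  · rw [pow_zero]
    linarith [abs_nonneg η]
  · have := not_le.mp (Nat.find_min hex (m := n) (by omega))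
    rw [pow_succ]
    linarith

lemma rpow_neg_le_tsum_gaussWeight {α : ℝ} (hα : 0 ≤ α) (η : ℝ) {Q : ℝ} (hQ : 1 ≤ Q) :
    ENNReal.ofReal ((Q + |η|) ^ (-α)) ≤ ENNReal.ofReal (2 ^ α * Real.exp (1 / 2)) *
      ∑' k : ℕ, ENNReal.ofReal ((2 ^ k * Q) ^ (-α)) * gaussWeight (η / (2 ^ k * Q)) := by
  obtain ⟨k, hηk, hkQ⟩ := exists_two_pow_mul_between η hQ
  have hpos : 0 < 2 ^ k * Q := by positivity
  have hpow : (Q + |η|) ^ (-α) ≤ 2 ^ α * (2 ^ k * Q) ^ (-α) :=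
    calc (Q + |η|) ^ (-α) = 2 ^ α * (2 * (Q + |η|)) ^ (-α) := by
          rw [Real.mul_rpow two_pos.le (by positivity), ← mul_assoc, ← Real.rpow_add two_pos,
            add_neg_cancel, Real.rpow_zero, one_mul]
      _ ≤ 2 ^ α * (2 ^ k * Q) ^ (-α) := by
          gcongr 2 ^ α * ?_
          exact Real.rpow_le_rpow_of_nonpos hpos hkQ (by linarith)
  have hgauss := one_le_exp_mul_gaussWeight (x := η / (2 ^ k * Q)) (b := 1)
    (by rwa [abs_div, abs_of_pos hpos, div_le_one hpos])
  rw [one_pow] at hgauss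
  refine le_trans ?_ (mul_le_mul_right (ENNReal.le_tsum k) _)
  calc ENNReal.ofReal ((Q + |η|) ^ (-α)) ≤ ENNReal.ofReal (2 ^ α * (2 ^ k * Q) ^ (-α)) * 1 := by
        rw [mul_one]
        exact ENNReal.ofReal_le_ofReal hpow
    _ ≤ ENNReal.ofReal (2 ^ α * (2 ^ k * Q) ^ (-α)) *
          (ENNReal.ofReal (Real.exp (1 / 2)) * gaussWeight (η / (2 ^ k * Q))) := by gcongr
    _ = _ := by
        rw [ENNReal.ofReal_mul (by positivity), ENNReal.ofReal_mul (by positivity)]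
        ring

lemma exists_lintegral_mul_rpow_neg_le {σ α : ℝ} (hσα : σ < α) (hα : 0 ≤ α) :
    ∃ K : ℝ≥0∞, K ≠ ⊤ ∧ ∀ (f : ℝ → ℝ≥0∞) (D : ℝ≥0∞), Measurable f →
      (∀ Q : ℝ, 1 ≤ Q → ∫⁻ η, f η * gaussWeight (η / Q) ≤ D * ENNReal.ofReal (Q ^ σ)) →
      ∀ Q : ℝ, 1 ≤ Q →
        ∫⁻ η, f η * ENNReal.ofReal ((Q + |η|) ^ (-α)) ≤ K * D * ENNReal.ofReal (Q ^ (σ - α)) := by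
  have hgeo := summable_two_rpow_pow (sub_neg.mpr hσα)
  set c := ENNReal.ofReal (2 ^ α * Real.exp (1 / 2)) with hc
  refine ⟨c * ∑' k : ℕ, ENNReal.ofReal (((2 : ℝ) ^ (σ - α)) ^ k),
    ENNReal.mul_ne_top ENNReal.ofReal_ne_top hgeo.tsum_ofReal_ne_top, fun f D hf hD Q hQ ↦ ?_⟩
  have hQ0 : 0 < Q := by linarith
  have hterm (k : ℕ) :
      ENNReal.ofReal ((2 ^ k * Q) ^ (-α)) * ∫⁻ η, f η * gaussWeight (η / (2 ^ k * Q)) ≤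
        ENNReal.ofReal (((2 : ℝ) ^ (σ - α)) ^ k) * (D * ENNReal.ofReal (Q ^ (σ - α))) :=
    calc _ ≤ ENNReal.ofReal ((2 ^ k * Q) ^ (-α)) * (D * ENNReal.ofReal ((2 ^ k * Q) ^ σ)) := by
          gcongr
          exact hD _ (one_le_mul_of_one_le_of_one_le (one_le_pow₀ one_le_two) hQ)
      _ = D * ENNReal.ofReal ((2 ^ k * Q) ^ (σ - α)) := by
          rw [mul_left_comm, ← ENNReal.ofReal_mul (by positivity), ← Real.rpow_add (by positivity),
            neg_add_eq_sub]
      _ = _ := by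
          rw [Real.mul_rpow (by positivity) hQ0.le, ← Real.rpow_natCast_mul two_pos.le,
            mul_comm (k : ℝ), Real.rpow_mul_natCast two_pos.le, ENNReal.ofReal_mul (by positivity)]
          ring
  calc _ ≤ ∫⁻ η, c * ∑' k : ℕ, ENNReal.ofReal ((2 ^ k * Q) ^ (-α)) *
            (f η * gaussWeight (η / (2 ^ k * Q))) := by
        refine lintegral_mono fun η ↦
          (mul_le_mul_right (rpow_neg_le_tsum_gaussWeight hα η hQ) _).trans_eq ?_
        rw [mul_left_comm, ← ENNReal.tsum_mul_left]
        simp_rw [mul_left_comm (f η), hc]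
    _ = c * ∑' k : ℕ, ENNReal.ofReal ((2 ^ k * Q) ^ (-α)) *
            ∫⁻ η, f η * gaussWeight (η / (2 ^ k * Q)) := by
        rw [lintegral_const_mul _ (Measurable.tsum fun k ↦ by fun_prop),
          lintegral_tsum fun k ↦ by fun_prop]
        congr 2 with k
        rw [lintegral_const_mul _ (by fun_prop)]
    _ ≤ c * ∑' k : ℕ, ENNReal.ofReal (((2 : ℝ) ^ (σ - α)) ^ k) *
            (D * ENNReal.ofReal (Q ^ (σ - α))) :=
        mul_le_mul_right (ENNReal.tsum_le_tsum hterm) _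
    _ = _ := by
        rw [ENNReal.tsum_mul_right]
        ring

end DyadicSums

section FrostmanMoments

lemma rpow_neg_add_dist_le_tsum {X : Type*} [PseudoMetricSpace X] {α h : ℝ} (hα : 0 ≤ α)
    (hh : 0 < h) (c z : X) :
    ENNReal.ofReal ((h + dist z c) ^ (-α)) ≤ 1 + ∑' n : ℕ,
      ENNReal.ofReal (((1 / 2 : ℝ) ^ (n + 1)) ^ (-α)) *
        (Metric.closedBall c ((1 / 2) ^ n)).indicator 1 z := by
  have hpos : 0 < h + dist z c := by positivity
  rcases le_total 1 (h + dist z c) with hle | hle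
  · refine le_trans ?_ le_self_add
    rw [ENNReal.ofReal_le_one]
    exact Real.rpow_le_one_of_one_le_of_nonpos hle (by linarith)
  · obtain ⟨n, hn, hn'⟩ := exists_nat_pow_near_of_lt_one hpos hle one_half_pos one_half_lt_one
    have hmem : z ∈ Metric.closedBall c ((1 / 2 : ℝ) ^ n) :=
      Metric.mem_closedBall.mpr (by linarith)
    refine le_trans ?_ ((ENNReal.le_tsum n).trans le_add_self)
    rw [indicator_of_mem hmem, Pi.one_apply, mul_one]
    exact ENNReal.ofReal_le_ofReal
      (Real.rpow_le_rpow_of_nonpos (by positivity) hn.le (by linarith))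

lemma half_pow_succ_rpow_neg_mul (α s : ℝ) (n : ℕ) :
    ((1 / 2 : ℝ) ^ (n + 1)) ^ (-α) * ((1 / 2 : ℝ) ^ n) ^ s = ((2 : ℝ) ^ (α - s)) ^ n * 2 ^ α := by
  have hhalf (k : ℕ) : (1 / 2 : ℝ) ^ k = 2 ^ (-k : ℝ) := by
    rw [Real.rpow_neg two_pos.le, Real.rpow_natCast, one_div, inv_pow]
  rw [hhalf, hhalf, ← Real.rpow_mul two_pos.le, ← Real.rpow_mul two_pos.le,
    ← Real.rpow_add two_pos, ← Real.rpow_mul_natCast two_pos.le, ← Real.rpow_add two_pos]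
  push_cast
  ring_nf

lemma IsFrostman.exists_lintegral_rpow_neg_le {X : Type*} [PseudoMetricSpace X]
    [MeasurableSpace X] [OpensMeasurableSpace X] {μ : Measure X} [IsFiniteMeasure μ] {C : ℝ≥0∞}
    {s α : ℝ} (hμ : IsFrostman μ C s) (hC : C ≠ ⊤) (hα : 0 ≤ α) (hαs : α < s) :
    ∃ K : ℝ≥0∞, K ≠ ⊤ ∧ ∀ (h : ℝ) (c : X), 0 < h →
      ∫⁻ z, ENNReal.ofReal ((h + dist z c) ^ (-α)) ∂μ ≤ K := by
  have hgeo := (summable_two_rpow_pow (sub_neg.mpr hαs)).tsum_ofReal_ne_top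
  refine ⟨μ univ + (∑' k : ℕ, ENNReal.ofReal (((2 : ℝ) ^ (α - s)) ^ k)) *
    (ENNReal.ofReal (2 ^ α) * C), by have := measure_ne_top μ univ; finiteness,
    fun h c hh ↦ ?_⟩
  have hball (n : ℕ) : MeasurableSet (Metric.closedBall c ((1 / 2 : ℝ) ^ n)) :=
    Metric.isClosed_closedBall.measurableSet
  refine (lintegral_mono (rpow_neg_add_dist_le_tsum hα hh c)).trans ?_
  rw [lintegral_add_left measurable_const, lintegral_const, one_mul, ← ENNReal.tsum_mul_right,
    lintegral_tsum fun n ↦ ((measurable_one.indicator (hball n)).const_mul _).aemeasurable]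
  gcongr with n
  rw [lintegral_const_mul _ (measurable_one.indicator (hball n)),
    lintegral_indicator_one (hball n)]
  calc _ ≤ ENNReal.ofReal (((1 / 2 : ℝ) ^ (n + 1)) ^ (-α)) *
          (C * ENNReal.ofReal (((1 / 2 : ℝ) ^ n) ^ s)) :=
        mul_le_mul_right (hμ c _ (by positivity)) _
    _ = _ := by
        rw [mul_left_comm, ← ENNReal.ofReal_mul (by positivity), half_pow_succ_rpow_neg_mul,
          ENNReal.ofReal_mul (by positivity)]
        ring

lemma lintegral_rpow_neg_le_of_mul_le {Ω : Type*} [MeasurableSpace Ω] {μ : Measure Ω} {g : Ω → ℝ}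
    {α k b : ℝ} (hα : 0 ≤ α) (hk : 0 < k) (hb : 0 < b) (h : ∀ᵐ z ∂μ, k * b ≤ g z) :
    ∫⁻ z, ENNReal.ofReal (g z ^ (-α)) ∂μ ≤
      ENNReal.ofReal (k ^ (-α)) * μ univ * ENNReal.ofReal (b ^ (-α)) := by
  calc _ ≤ ∫⁻ _, ENNReal.ofReal (k ^ (-α)) * ENNReal.ofReal (b ^ (-α)) ∂μ := by
        refine lintegral_mono_ae ?_
        filter_upwards [h] with z hz
        rw [← ENNReal.ofReal_mul (by positivity), ← Real.mul_rpow hk.le hb.le]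
        exact ENNReal.ofReal_le_ofReal
          (Real.rpow_le_rpow_of_nonpos (by positivity) hz (by linarith))
    _ = _ := by
        rw [lintegral_const]
        ring

lemma lintegral_affine_rpow_neg_le_of_one_lt {μ : Measure ℝ} {α B ξ w : ℝ} {K : ℝ≥0∞}
    (hα : 0 ≤ α) (hB : 1 ≤ B) (hξ : 1 < |ξ|) (hw : |w| ≤ 4 * B * |ξ|)
    (hK : ∀ h c : ℝ, 0 < h → ∫⁻ z, ENNReal.ofReal ((h + dist z c) ^ (-α)) ∂μ ≤ K) :
    ∫⁻ z, ENNReal.ofReal ((1 + |2 * ξ * z + w|) ^ (-α)) ∂μ ≤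
      ENNReal.ofReal ((2 / (2 + 4 * B)) ^ (-α)) * K *
        ENNReal.ofReal ((1 + |ξ| + |w|) ^ (-α)) := by
  have hξ0 : ξ ≠ 0 := abs_pos.mp (by linarith)
  rw [mul_right_comm, ← ENNReal.ofReal_mul (by positivity),
    ← Real.mul_rpow (by positivity) (by positivity)]
  refine le_trans ?_ (mul_le_mul_right (hK (1 / (2 * |ξ|)) (-w / (2 * ξ)) (by positivity)) _)
  rw [← lintegral_const_mul' _ _ (by finiteness)]
  refine lintegral_mono fun z ↦ ?_
  rw [← ENNReal.ofReal_mul (by positivity), ← Real.mul_rpow (by positivity) (by positivity)]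
  refine ENNReal.ofReal_le_ofReal
    (Real.rpow_le_rpow_of_nonpos (by positivity) ?_ (by linarith))
  have hfactor : 1 + |2 * ξ * z + w| = 2 * |ξ| * (1 / (2 * |ξ|) + dist z (-w / (2 * ξ))) := by
    have : 2 * ξ * z + w = 2 * ξ * (z - (-w / (2 * ξ))) := by field_simp; ring
    rw [this, abs_mul, abs_mul, abs_two, Real.dist_eq]
    field_simp
  rw [hfactor]
  refine mul_le_mul_of_nonneg_right ?_ (by positivity)
  rw [div_mul_eq_mul_div, div_le_iff₀ (by positivity)]
  nlinarith

lemma IsFrostman.exists_lintegral_affine_rpow_neg_le {μ : Measure ℝ} [IsFiniteMeasure μ]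
    {C : ℝ≥0∞} {s α B : ℝ} (hμ : IsFrostman μ C s) (hC : C ≠ ⊤) (hα : 0 ≤ α) (hαs : α < s)
    (hB : 1 ≤ B) (hz : ∀ᵐ z ∂μ, |z| ≤ B) :
    ∃ K : ℝ≥0∞, K ≠ ⊤ ∧ ∀ ξ w : ℝ, ∫⁻ z, ENNReal.ofReal ((1 + |2 * ξ * z + w|) ^ (-α)) ∂μ ≤
      K * ENNReal.ofReal ((1 + |ξ| + |w|) ^ (-α)) := by
  obtain ⟨K, hK, hmoment⟩ := hμ.exists_lintegral_rpow_neg_le hC hα hαs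
  refine ⟨ENNReal.ofReal ((1 / 4 : ℝ) ^ (-α)) * μ univ +
    ENNReal.ofReal ((1 / (2 + 4 * B) : ℝ) ^ (-α)) * μ univ +
    ENNReal.ofReal ((2 / (2 + 4 * B) : ℝ) ^ (-α)) * K,
    by have := measure_ne_top μ univ; finiteness, fun ξ w ↦ ?_⟩
  have hpos : 0 < 1 + |ξ| + |w| := by positivity
  have hξw := mul_nonneg (show (0 : ℝ) ≤ B by linarith) (abs_nonneg ξ)
  rcases le_total (4 * B * |ξ|) |w| with hw | hw
  · refine (lintegral_rpow_neg_le_of_mul_le hα (k := 1 / 4) (by norm_num) hpos ?_).trans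
      (mul_le_mul_left (le_self_add.trans le_self_add) _)
    filter_upwards [hz] with z hz
    have htri : |w| ≤ |2 * ξ * z + w| + |2 * ξ * z| := by
      simpa using abs_sub (2 * ξ * z + w) (2 * ξ * z)
    have hprod : |2 * ξ * z| ≤ 2 * B * |ξ| := by
      rw [abs_mul, abs_mul, abs_two]
      nlinarith [abs_nonneg ξ]
    nlinarith [abs_nonneg w, abs_nonneg ξ]
  rcases le_or_gt |ξ| 1 with hξ | hξ
  · refine (lintegral_rpow_neg_le_of_mul_le hα (k := 1 / (2 + 4 * B)) (by positivity) hpos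
      (ae_of_all _ fun z ↦ ?_)).trans (mul_le_mul_left (le_add_self.trans le_self_add) _)
    rw [one_div_mul_eq_div, div_le_iff₀ (by positivity)]
    nlinarith [abs_nonneg (2 * ξ * z + w)]
  · exact (lintegral_affine_rpow_neg_le_of_one_lt hα hB hξ hw hmoment).trans
      (mul_le_mul_left le_add_self _)

end FrostmanMoments

section Plancherel

lemma lintegral_gaussWeight_mul_sub {Q : ℝ} (hQ : 0 < Q) (x : ℝ) :
    ∫⁻ y, gaussWeight (Q * (x - y)) = ENNReal.ofReal (√(2 * Real.pi) / Q) := by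
  have h := lintegral_mul_gaussWeight_div (inv_pos.mpr hQ) (f := fun _ ↦ 1) measurable_const
  simp only [one_mul, lintegral_one, measure_univ, mul_one, div_inv_eq_mul] at h
  rw [lintegral_sub_left_eq_self (fun y ↦ gaussWeight (Q * y)) x, div_eq_inv_mul, ← h]
  simp_rw [mul_comm]

lemma tendsto_gaussWeight_div_natCast_add_one (r : ℝ) :
    Tendsto (fun n : ℕ ↦ gaussWeight (r / (n + 1))) atTop (𝓝 1) := by
  have hcont : Continuous gaussWeight := ENNReal.continuous_ofReal.comp (by fun_prop)
  have hlim : Tendsto (fun n : ℕ ↦ r / ((n : ℝ) + 1)) atTop (𝓝 0) :=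
    tendsto_const_nhds.div_atTop
      (tendsto_atTop_add_const_right _ _ tendsto_natCast_atTop_atTop)
  have hzero : gaussWeight 0 = 1 := by simp [gaussWeight]
  rw [← hzero]
  exact (hcont.tendsto 0).comp hlim

lemma lintegral_le_of_lintegral_mul_gaussWeight_le {f : ℝ → ℝ≥0∞} (hf : Measurable f) {D : ℝ≥0∞}
    (h : ∀ Q : ℝ, 1 ≤ Q → ∫⁻ r, f r * gaussWeight (r / Q) ≤ D) : ∫⁻ r, f r ≤ D := by
  have hlim : Tendsto (fun n : ℕ ↦ ∫⁻ r, f r * gaussWeight (r / ((n : ℝ) + 1))) atTop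
      (𝓝 (∫⁻ r, f r)) := by
    refine lintegral_tendsto_of_tendsto_of_monotone (fun n ↦ by fun_prop)
      (ae_of_all _ fun r n m hnm ↦ ?_) (ae_of_all _ fun r ↦ ?_)
    · dsimp only
      gcongr
      apply gaussWeight_le_gaussWeight
      rw [abs_div, abs_div, abs_of_pos (by positivity : (0 : ℝ) < (m : ℝ) + 1),
        abs_of_pos (by positivity : (0 : ℝ) < (n : ℝ) + 1)]
      gcongr
    · simpa using ENNReal.Tendsto.const_mul (tendsto_gaussWeight_div_natCast_add_one r)
        (Or.inl one_ne_zero) (a := f r)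
  exact le_of_tendsto' hlim fun n ↦ h _ (by linarith [Nat.cast_nonneg (α := ℝ) n])

-- Schur's test for the Gaussian convolution kernel.
lemma lintegral_enorm_mul_enorm_mul_gaussWeight_le {E : Type*} [NormedAddCommGroup E]
    [MeasurableSpace E] [OpensMeasurableSpace E] {a : ℝ → E} (ha : Measurable a) {Q : ℝ}
    (hQ : 0 < Q) :
    ∫⁻ w : ℝ × ℝ, ‖a w.1‖ₑ * ‖a w.2‖ₑ * gaussWeight (Q * (w.1 - w.2)) ≤
      ENNReal.ofReal (√(2 * Real.pi) / Q) * ∫⁻ ζ, ‖a ζ‖ₑ ^ 2 := by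
  have := ha.enorm
  have hfst : ∫⁻ w : ℝ × ℝ, ‖a w.1‖ₑ ^ 2 * gaussWeight (Q * (w.1 - w.2)) =
      ENNReal.ofReal (√(2 * Real.pi) / Q) * ∫⁻ ζ, ‖a ζ‖ₑ ^ 2 := by
    rw [Measure.volume_eq_prod, lintegral_prod _ (by fun_prop),
      ← lintegral_const_mul _ (by fun_prop)]
    refine lintegral_congr fun x ↦ ?_
    dsimp only
    rw [lintegral_const_mul _ (by fun_prop), lintegral_gaussWeight_mul_sub hQ x, mul_comm]
  have hsnd : ∫⁻ w : ℝ × ℝ, ‖a w.2‖ₑ ^ 2 * gaussWeight (Q * (w.1 - w.2)) =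
      ENNReal.ofReal (√(2 * Real.pi) / Q) * ∫⁻ ζ, ‖a ζ‖ₑ ^ 2 := by
    rw [← hfst, Measure.volume_eq_prod, ← lintegral_prod_swap]
    refine lintegral_congr fun w ↦ ?_
    rw [Prod.fst_swap, Prod.snd_swap, ← gaussWeight_neg, ← mul_neg, neg_sub]
  refine (ENNReal.mul_le_mul_iff_right two_ne_zero ENNReal.ofNat_ne_top).mp ?_
  rw [two_mul (ENNReal.ofReal _ * _)]
  nth_rewrite 1 [← hfst]
  rw [← hsnd, ← lintegral_add_left (by fun_prop), ← lintegral_const_mul _ (by fun_prop)]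
  refine lintegral_mono fun w ↦ ?_
  dsimp only
  rw [← add_mul, ← mul_assoc, ← mul_assoc]
  gcongr
  simp only [enorm_eq_nnnorm]
  exact_mod_cast two_mul_le_add_sq ‖a w.1‖₊ ‖a w.2‖₊

lemma lintegral_enorm_sq_weightedCharFun_volume_le {a : ℝ → ℂ} (ha : Measurable a)
    (hai : Integrable a) :
    ∫⁻ r, ‖weightedCharFun volume a r‖ₑ ^ 2 ≤
      ENNReal.ofReal (2 * Real.pi) * ∫⁻ ζ, ‖a ζ‖ₑ ^ 2 := by
  refine lintegral_le_of_lintegral_mul_gaussWeight_le (by fun_prop) fun Q hQ ↦ ?_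
  have hQ0 : 0 < Q := by linarith
  rw [lintegral_mul_gaussWeight_div hQ0 (by fun_prop)]
  calc _ ≤ ENNReal.ofReal (Q * √(2 * Real.pi)) *
          (ENNReal.ofReal (√(2 * Real.pi) / Q) * ∫⁻ ζ, ‖a ζ‖ₑ ^ 2) :=
        mul_le_mul_right ((lintegral_enorm_sq_oscillatory_le volume measurable_id ha hai Q).trans
          (lintegral_enorm_mul_enorm_mul_gaussWeight_le ha hQ0)) _
    _ = _ := by
        have hconst : Q * √(2 * Real.pi) * (√(2 * Real.pi) / Q) = 2 * Real.pi := by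
          rw [mul_comm Q, mul_assoc, mul_div_cancel₀ _ hQ0.ne', Real.mul_self_sqrt (by positivity)]
        rw [← mul_assoc, ← ENNReal.ofReal_mul (by positivity), hconst]

end Plancherel

section StripDensity

variable (μ : Measure ℝ)

/-- The `μ × μ`-mass of a strip of width `ρ` around the line `y = t x + r`, smoothly cut off. -/
noncomputable def gaussStripMass (ρ t r : ℝ) : ℝ≥0∞ :=
  ∫⁻ p, gaussWeight ((t * p.1 + r - p.2) / ρ) ∂(μ.prod μ)

/-- The `μ × μ`-mass of a smoothed strip around the line `y = t x + r`, divided by its width `ρ`. -/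
noncomputable def stripDensity (ρ t r : ℝ) : ℝ := ρ⁻¹ * (gaussStripMass μ ρ t r).toReal

/-- The Fourier transform in `r` of `stripDensity μ ρ t r`, normalised so that the density is
recovered by `weightedCharFun volume`. -/
noncomputable def stripKernel (ρ t ζ : ℝ) : ℂ :=
  ((√(2 * Real.pi))⁻¹ * Real.exp (-((ρ * ζ) ^ 2) / 2) : ℝ) *
    (charFun μ (-ζ) * charFun μ (t * ζ))

@[fun_prop]
lemma measurable_gaussStripMass [SFinite μ] (ρ : ℝ) :
    Measurable fun q : ℝ × ℝ ↦ gaussStripMass μ ρ q.1 q.2 := by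
  refine Measurable.lintegral_prod_right'
    (f := fun q : (ℝ × ℝ) × (ℝ × ℝ) ↦ gaussWeight ((q.1.1 * q.2.1 + q.1.2 - q.2.2) / ρ)) ?_
  fun_prop

@[fun_prop]
lemma measurable_stripDensity [SFinite μ] (ρ : ℝ) :
    Measurable fun q : ℝ × ℝ ↦ stripDensity μ ρ q.1 q.2 :=
  (measurable_gaussStripMass μ ρ).ennreal_toReal.const_mul _

@[fun_prop]
lemma measurable_stripKernel [SFinite μ] (ρ t : ℝ) : Measurable (stripKernel μ ρ t) := by
  have : Measurable (charFun μ) := measurable_charFun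
  unfold stripKernel
  fun_prop

lemma norm_stripKernel_le (ρ t ζ : ℝ) :
    ‖stripKernel μ ρ t ζ‖ ≤
      (√(2 * Real.pi))⁻¹ * Real.exp (-(ρ ^ 2 / 2) * ζ ^ 2) * (μ.real univ) ^ 2 := by
  rw [stripKernel, norm_mul, norm_mul, Complex.norm_real, Real.norm_of_nonneg (by positivity), sq
    (μ.real univ), show -((ρ * ζ) ^ 2) / 2 = -(ρ ^ 2 / 2) * ζ ^ 2 by ring]
  gcongr <;> exact norm_charFun_le _

variable [IsFiniteMeasure μ]

lemma gaussStripMass_ne_top (ρ t r : ℝ) : gaussStripMass μ ρ t r ≠ ⊤ :=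
  ((lintegral_mono fun _ ↦ gaussWeight_le_one _).trans_lt (by simp)).ne

lemma integrable_stripKernel {ρ : ℝ} (hρ : 0 < ρ) (t : ℝ) : Integrable (stripKernel μ ρ t) := by
  have hdom : Integrable fun ζ : ℝ ↦
      (√(2 * Real.pi))⁻¹ * Real.exp (-(ρ ^ 2 / 2) * ζ ^ 2) * (μ.real univ) ^ 2 :=
    ((integrable_exp_neg_mul_sq (by positivity)).const_mul _).mul_const _
  exact hdom.mono' (measurable_stripKernel μ ρ t).aestronglyMeasurable
    (ae_of_all _ (norm_stripKernel_le μ ρ t))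

lemma integral_centeredGaussian {Q : ℝ} (hQ : 0 < Q) (f : ℝ → ℂ) :
    ∫ x, f x ∂(centeredGaussian Q) =
      ∫ x, (((Q * √(2 * Real.pi))⁻¹ * Real.exp (-((x / Q) ^ 2) / 2) : ℝ) : ℂ) * f x := by
  have hv : Real.toNNReal (Q ^ 2) ≠ 0 := by simpa using hQ.ne'
  rw [centeredGaussian, integral_gaussianReal_eq_integral_smul hv]
  refine integral_congr_ae (ae_of_all _ fun x ↦ ?_)
  dsimp only
  rw [Complex.real_smul, gaussianPDFReal, Real.coe_toNNReal _ (by positivity),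
    Real.sqrt_mul (by positivity), Real.sqrt_sq hQ.le, mul_comm (√_) Q, sub_zero]
  congr 4
  field_simp

lemma toReal_gaussStripMass {ρ : ℝ} (t r : ℝ) :
    ((gaussStripMass μ ρ t r).toReal : ℂ) =
      ∫ ζ, charFun μ (-ζ) * charFun μ (t * ζ) * Complex.exp (↑(r * ζ) * Complex.I)
        ∂(centeredGaussian ρ⁻¹) := by
  have hgauss (p : ℝ × ℝ) :
      ((Real.exp (-(((t * p.1 + r - p.2) / ρ) ^ 2) / 2) : ℝ) : ℂ) =
        ∫ ζ, Complex.exp (↑(ζ * (t * p.1 + r - p.2)) * Complex.I) ∂(centeredGaussian ρ⁻¹) := by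
    rw [integral_exp_mul_I_centeredGaussian, ← div_eq_inv_mul]
  have hsplit (ζ : ℝ) (p : ℝ × ℝ) :
      Complex.exp (↑(ζ * (t * p.1 + r - p.2)) * Complex.I) =
        Complex.exp (↑(t * ζ) * p.1 * Complex.I) * Complex.exp (↑(-ζ) * p.2 * Complex.I) *
          Complex.exp (↑(r * ζ) * Complex.I) := by
    rw [← Complex.exp_add, ← Complex.exp_add]
    push_cast
    ring_nf
  have hreal : (gaussStripMass μ ρ t r).toReal =
      ∫ p, Real.exp (-(((t * p.1 + r - p.2) / ρ) ^ 2) / 2) ∂(μ.prod μ) :=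
    (integral_eq_lintegral_of_nonneg_ae (ae_of_all _ fun p ↦ by positivity)
      (Measurable.aestronglyMeasurable (by fun_prop))).symm
  rw [hreal, ← integral_complex_ofReal]
  simp_rw [hgauss]
  rw [integral_integral_swap]
  · refine integral_congr_ae (ae_of_all _ fun ζ ↦ ?_)
    simp_rw [hsplit ζ]
    rw [integral_mul_const, integral_prod_mul (fun x : ℝ ↦ Complex.exp (↑(t * ζ) * x * Complex.I))
      (fun x : ℝ ↦ Complex.exp (↑(-ζ) * x * Complex.I)), ← charFun_apply_real,
      ← charFun_apply_real, mul_comm (charFun μ (t * ζ))]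
  · refine Integrable.of_bound (Measurable.aestronglyMeasurable
      (by simp only [Function.uncurry_def]; fun_prop)) 1 (ae_of_all _ fun q ↦ ?_)
    rw [Function.uncurry_def, Complex.norm_exp_ofReal_mul_I]

lemma stripDensity_eq_weightedCharFun {ρ : ℝ} (hρ : 0 < ρ) (t r : ℝ) :
    (stripDensity μ ρ t r : ℂ) = weightedCharFun volume (stripKernel μ ρ t) r := by
  rw [stripDensity, Complex.ofReal_mul, toReal_gaussStripMass,
    integral_centeredGaussian (inv_pos.mpr hρ), ← integral_const_mul, weightedCharFun]
  refine integral_congr_ae (ae_of_all _ fun ζ ↦ ?_)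
  have hρ' : (ρ : ℂ) ≠ 0 := by exact_mod_cast hρ.ne'
  simp only [stripKernel, div_inv_eq_mul, mul_comm ζ ρ]
  push_cast
  field_simp

end StripDensity

section StripDensityDifference

lemma sq_exp_sub_exp_le {x y e : ℝ} (hxy : |x| ≤ |y|) (he : 0 ≤ e) (he2 : e ≤ 2) :
    (Real.exp (-(x ^ 2) / 2) - Real.exp (-(y ^ 2) / 2)) ^ 2 ≤ |y| ^ e := by
  set D := Real.exp (-(x ^ 2) / 2) - Real.exp (-(y ^ 2) / 2)
  have hsq := sq_le_sq.mpr hxy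
  have hx1 : Real.exp (-(x ^ 2) / 2) ≤ 1 := Real.exp_le_one_iff.mpr (by linarith [sq_nonneg x])
  have hD0 : 0 ≤ D := sub_nonneg.mpr (Real.exp_le_exp.mpr (by linarith))
  have hD1 : D ≤ 1 := by linarith [Real.exp_pos (-(y ^ 2) / 2)]
  rcases le_total 1 |y| with hy | hy
  · exact (pow_le_one₀ hD0 hD1).trans (Real.one_le_rpow hy he)
  · calc D ^ 2 ≤ D := pow_le_of_le_one hD0 hD1 two_ne_zero
      _ ≤ |y| ^ (2 : ℝ) := by
          rw [Real.rpow_two, sq_abs]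
          linarith [Real.add_one_le_exp (-(y ^ 2) / 2), sq_nonneg y]
      _ ≤ |y| ^ e := Real.rpow_le_rpow_of_exponent_ge' (abs_nonneg y) hy he he2

lemma enorm_sq_stripKernel_sub_le (μ : Measure ℝ) {ρ ρ' e : ℝ} (hρ : 0 < ρ)
    (hρρ' : ρ ≤ ρ') (he : 0 ≤ e) (he2 : e ≤ 2) (t ζ : ℝ) :
    ‖stripKernel μ ρ t ζ - stripKernel μ ρ' t ζ‖ₑ ^ 2 ≤
      ENNReal.ofReal (ρ' ^ e) * (ENNReal.ofReal ((1 + |ζ|) ^ e) *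
        (‖charFun μ ζ‖ₑ ^ 2 * ‖charFun μ (t * ζ)‖ₑ ^ 2)) := by
  have hρ' : 0 < ρ' := hρ.trans_le hρρ'
  have hfactor : stripKernel μ ρ t ζ - stripKernel μ ρ' t ζ =
      (((√(2 * Real.pi))⁻¹ * (Real.exp (-((ρ * ζ) ^ 2) / 2) - Real.exp (-((ρ' * ζ) ^ 2) / 2)) :
        ℝ) : ℂ) * (charFun μ (-ζ) * charFun μ (t * ζ)) := by
    simp only [stripKernel]
    push_cast
    ring
  have hconst : ((√(2 * Real.pi))⁻¹) ^ 2 ≤ 1 :=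
    pow_le_one₀ (by positivity)
      (inv_le_one_of_one_le₀ (Real.one_le_sqrt.mpr (by linarith [Real.pi_gt_three])))
  rw [hfactor, charFun_neg, enorm_mul, enorm_mul, RCLike.enorm_conj, mul_pow,
    mul_pow ‖charFun μ ζ‖ₑ, ← mul_assoc (ENNReal.ofReal _), ← ENNReal.ofReal_mul (by positivity)]
  refine mul_le_mul' ?_ le_rfl
  rw [← ofReal_norm, Complex.norm_real, ← ENNReal.ofReal_pow (norm_nonneg _), Real.norm_eq_abs,
    sq_abs, mul_pow]
  apply ENNReal.ofReal_le_ofReal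
  calc _ ≤ 1 * |ρ' * ζ| ^ e := by
        gcongr
        refine sq_exp_sub_exp_le ?_ he he2
        rw [abs_mul, abs_mul, abs_of_pos hρ, abs_of_pos hρ']
        gcongr
    _ ≤ ρ' ^ e * (1 + |ζ|) ^ e := by
        rw [one_mul, abs_mul, abs_of_pos hρ', Real.mul_rpow hρ'.le (abs_nonneg ζ)]
        gcongr
        linarith

lemma IsFrostman.lintegral_prod_gaussWeight_mul_sub_le {μ : Measure ℝ} [IsFiniteMeasure μ]
    {C : ℝ≥0∞} {s : ℝ} (hμ : IsFrostman μ C s) (hs0 : 0 ≤ s) (hs : s ≤ 1) {T : ℝ} (hT : 1 ≤ T)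
    (ζ : ℝ) :
    ∫⁻ w : ℝ × ℝ, gaussWeight (T * (ζ * w.1 - ζ * w.2)) ∂(μ.prod μ) ≤
      (μ univ ^ 2 + μ univ * (gaussLayerConst * C)) *
        ENNReal.ofReal (2 * (1 + |ζ|) ^ (-s)) := by
  have htwo : 1 ≤ 2 * (2 : ℝ) ^ (-s) :=
    calc (1 : ℝ) ≤ 2 ^ (1 - s) := Real.one_le_rpow one_le_two (by linarith)
      _ = _ := by rw [sub_eq_add_neg, Real.rpow_add two_pos, Real.rpow_one]
  rcases le_or_gt |ζ| 1 with hζ | hζ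
  · have hge : 1 ≤ 2 * (1 + |ζ|) ^ (-s) := htwo.trans (by
      gcongr 2 * ?_
      exact Real.rpow_le_rpow_of_nonpos (by positivity) (by linarith) (by linarith))
    calc _ ≤ ∫⁻ _ : ℝ × ℝ, 1 ∂(μ.prod μ) := lintegral_mono fun w ↦ gaussWeight_le_one _
      _ = μ univ ^ 2 * 1 := by rw [lintegral_one, ← univ_prod_univ, Measure.prod_prod, sq, mul_one]
      _ ≤ _ := mul_le_mul' le_self_add (ENNReal.one_le_ofReal.mpr hge)
  · have hgauss (z y : ℝ) :
        gaussWeight (T * (ζ * z - ζ * y)) = gaussWeight (T * |ζ| * (z - y)) := by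
      rw [gaussWeight, gaussWeight, ← mul_sub, ← mul_assoc, mul_pow, mul_pow, mul_pow _ (z - y),
        mul_pow, sq_abs]
    have hpow : (T * |ζ|) ^ (-s) ≤ 2 * (1 + |ζ|) ^ (-s) :=
      calc (T * |ζ|) ^ (-s) ≤ ((1 + |ζ|) / 2) ^ (-s) :=
            Real.rpow_le_rpow_of_nonpos (by positivity) (by nlinarith) (by linarith)
        _ = 2 ^ s * (1 + |ζ|) ^ (-s) := by
            rw [Real.div_rpow (by positivity) two_pos.le, Real.rpow_neg two_pos.le, div_inv_eq_mul,
              mul_comm]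
        _ ≤ 2 * (1 + |ζ|) ^ (-s) := by
            gcongr
            exact Real.rpow_le_self_of_one_le one_le_two hs
    rw [lintegral_prod _ (by fun_prop)]
    simp_rw [hgauss]
    calc _ ≤ ∫⁻ _, gaussLayerConst * (C * ENNReal.ofReal ((T * |ζ|) ^ (-s))) ∂μ :=
          lintegral_mono (hμ.lintegral_gaussWeight_mul_sub_le hs (by positivity))
      _ = μ univ * (gaussLayerConst * C) * ENNReal.ofReal ((T * |ζ|) ^ (-s)) := by
          rw [lintegral_const]
          ring
      _ ≤ _ := mul_le_mul' le_add_self (ENNReal.ofReal_le_ofReal hpow)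

lemma IsFrostman.exists_lintegral_enorm_sq_charFun_dilation_le {μ : Measure ℝ} [IsFiniteMeasure μ]
    {C : ℝ≥0∞} {s : ℝ} (hμ : IsFrostman μ C s) (hC : C ≠ ⊤) (hs0 : 0 ≤ s) (hs : s ≤ 1) :
    ∃ K : ℝ≥0∞, K ≠ ⊤ ∧ ∀ T ζ : ℝ, 1 ≤ T →
      ∫⁻ t, ‖charFun μ (t * ζ)‖ₑ ^ 2 * gaussWeight (t / T) ≤
        K * ENNReal.ofReal T * ENNReal.ofReal ((1 + |ζ|) ^ (-s)) := by
  refine ⟨ENNReal.ofReal (√(2 * Real.pi)) * (μ univ ^ 2 + μ univ * (gaussLayerConst * C)) * 2, ?_,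
    fun T ζ hT ↦ ?_⟩
  · have := gaussLayerConst_ne_top
    have := measure_ne_top μ univ
    finiteness
  have hT0 : 0 < T := by linarith
  have : Measurable (charFun μ) := measurable_charFun
  have hosc (t : ℝ) : charFun μ (t * ζ) =
      ∫ z, (1 : ℂ) * Complex.exp (↑(t * (ζ * z)) * Complex.I) ∂μ := by
    simp_rw [charFun_apply_real, one_mul, ← mul_assoc, Complex.ofReal_mul]
  have hmean : ∫⁻ t, ‖charFun μ (t * ζ)‖ₑ ^ 2 ∂(centeredGaussian T) ≤
      ∫⁻ w : ℝ × ℝ, gaussWeight (T * (ζ * w.1 - ζ * w.2)) ∂(μ.prod μ) := by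
    simp_rw [hosc]
    simpa using lintegral_enorm_sq_oscillatory_le μ (f := fun z ↦ ζ * z) (by fun_prop)
      (a := fun _ ↦ 1) measurable_const (integrable_const _) T
  rw [lintegral_mul_gaussWeight_div hT0 (by fun_prop)]
  refine (mul_le_mul_right
    (hmean.trans (hμ.lintegral_prod_gaussWeight_mul_sub_le hs0 hs hT ζ)) _).trans_eq ?_
  rw [ENNReal.ofReal_mul hT0.le, ENNReal.ofReal_mul two_pos.le, ENNReal.ofReal_ofNat]
  ring

lemma lintegral_sq_stripDensity_sub_le (μ : Measure ℝ) [IsFiniteMeasure μ] {ρ ρ' e : ℝ}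
    (hρ : 0 < ρ) (hρρ' : ρ ≤ ρ') (he : 0 ≤ e) (he2 : e ≤ 2) (t : ℝ) :
    ∫⁻ r, ENNReal.ofReal ((stripDensity μ ρ t r - stripDensity μ ρ' t r) ^ 2) ≤
      ENNReal.ofReal (2 * Real.pi) * ENNReal.ofReal (ρ' ^ e) *
        ∫⁻ ζ, ENNReal.ofReal ((1 + |ζ|) ^ e) *
          (‖charFun μ ζ‖ₑ ^ 2 * ‖charFun μ (t * ζ)‖ₑ ^ 2) := by
  have hintg := integrable_stripKernel μ hρ t
  have hintg' := integrable_stripKernel μ (hρ.trans_le hρρ') t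
  have hbdd (r : ℝ) {f : ℝ → ℂ} (hf : Integrable f) :
      Integrable fun ζ : ℝ ↦ f ζ * Complex.exp (↑(r * ζ) * Complex.I) :=
    hf.mul_bdd (c := 1) (by fun_prop)
      (ae_of_all _ fun ζ ↦ (Complex.norm_exp_ofReal_mul_I _).le)
  have hfourier (r : ℝ) : ((stripDensity μ ρ t r - stripDensity μ ρ' t r : ℝ) : ℂ) =
      weightedCharFun volume (fun ζ ↦ stripKernel μ ρ t ζ - stripKernel μ ρ' t ζ) r := by
    rw [Complex.ofReal_sub, stripDensity_eq_weightedCharFun μ hρ,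
      stripDensity_eq_weightedCharFun μ (hρ.trans_le hρρ')]
    simp only [weightedCharFun, sub_mul]
    exact (integral_sub (hbdd r hintg) (hbdd r hintg')).symm
  have hplancherel := lintegral_enorm_sq_weightedCharFun_volume_le
    (a := fun ζ ↦ stripKernel μ ρ t ζ - stripKernel μ ρ' t ζ) (by fun_prop) (hintg.sub hintg')
  simp_rw [← hfourier, ← ofReal_norm (Complex.ofReal _), Complex.norm_real,
    ← ENNReal.ofReal_pow (norm_nonneg _), Real.norm_eq_abs, sq_abs] at hplancherel
  refine hplancherel.trans ?_
  rw [mul_assoc, ← lintegral_const_mul' (ENNReal.ofReal (ρ' ^ e)) _ ENNReal.ofReal_ne_top]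
  refine mul_le_mul_right (lintegral_mono fun ζ ↦ ?_) _
  exact enorm_sq_stripKernel_sub_le μ hρ hρρ' he he2 t ζ

lemma IsFrostman.lintegral_enorm_sq_charFun_mul_rpow_ne_top {μ : Measure ℝ} [IsFiniteMeasure μ]
    {C : ℝ≥0∞} {s α : ℝ} (hμ : IsFrostman μ C s) (hC : C ≠ ⊤) (hs : s ≤ 1) (hα : 1 - s < α) :
    ∫⁻ ζ, ‖charFun μ ζ‖ₑ ^ 2 * ENNReal.ofReal ((1 + |ζ|) ^ (-α)) ≠ ⊤ := by
  obtain ⟨K, hK, hdyadic⟩ := exists_lintegral_mul_rpow_neg_le hα (by linarith)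
  have : Measurable (charFun μ) := measurable_charFun
  have hbound := hdyadic (fun η ↦ ‖charFun μ η‖ₑ ^ 2) _ (by fun_prop) (fun Q hQ ↦ by
    simpa only [weightedCharFun_one] using
      hμ.lintegral_enorm_sq_weightedCharFun_mul_gaussWeight_le hs (a := fun _ ↦ 1)
        measurable_const (c := 1) (ae_of_all _ fun _ ↦ by simp) (by linarith)) 1 le_rfl
  refine ne_top_of_le_ne_top ?_ hbound
  have := gaussLayerConst_ne_top
  have := measure_ne_top μ univ
  finiteness

lemma IsFrostman.exists_lintegral_sq_stripDensity_sub_le {μ : Measure ℝ} [IsFiniteMeasure μ]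
    {C : ℝ≥0∞} {s e : ℝ} (hμ : IsFrostman μ C s) (hC : C ≠ ⊤) (hs : s ≤ 1) (he : 0 ≤ e)
    (hes : e < 2 * s - 1) :
    ∃ K : ℝ≥0∞, K ≠ ⊤ ∧ ∀ T ρ ρ' : ℝ, 1 ≤ T → 0 < ρ → ρ ≤ ρ' →
      ∫⁻ t, ∫⁻ r, gaussWeight (t / T) *
          ENNReal.ofReal ((stripDensity μ ρ t r - stripDensity μ ρ' t r) ^ 2) ≤
        K * ENNReal.ofReal (T * ρ' ^ e) := by
  obtain ⟨K, hK, hdil⟩ := hμ.exists_lintegral_enorm_sq_charFun_dilation_le hC (by linarith) hs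
  have hD := hμ.lintegral_enorm_sq_charFun_mul_rpow_ne_top hC hs (α := s - e) (by linarith)
  set D := ∫⁻ ζ, ‖charFun μ ζ‖ₑ ^ 2 * ENNReal.ofReal ((1 + |ζ|) ^ (-(s - e)))
  have : Measurable (charFun μ) := measurable_charFun
  refine ⟨ENNReal.ofReal (2 * Real.pi) * K * D, by finiteness, fun T ρ ρ' hT hρ hρρ' ↦ ?_⟩
  set c := ENNReal.ofReal (2 * Real.pi) * ENNReal.ofReal (ρ' ^ e)
  have hgauss (t : ℝ) : gaussWeight (t / T) ≠ ⊤ := ENNReal.ofReal_ne_top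
  calc _ ≤ ∫⁻ t, c * ∫⁻ ζ, gaussWeight (t / T) * (ENNReal.ofReal ((1 + |ζ|) ^ e) *
            (‖charFun μ ζ‖ₑ ^ 2 * ‖charFun μ (t * ζ)‖ₑ ^ 2)) := by
        refine lintegral_mono fun t ↦ ?_
        dsimp only
        rw [lintegral_const_mul' _ _ (hgauss t), lintegral_const_mul' _ _ (hgauss t),
          mul_left_comm]
        gcongr
        exact lintegral_sq_stripDensity_sub_le μ hρ hρρ' he (by linarith) t
    _ = c * ∫⁻ ζ, ENNReal.ofReal ((1 + |ζ|) ^ e) * ‖charFun μ ζ‖ₑ ^ 2 *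
            ∫⁻ t, ‖charFun μ (t * ζ)‖ₑ ^ 2 * gaussWeight (t / T) := by
        rw [lintegral_const_mul' _ _ (by finiteness), lintegral_lintegral_swap (by fun_prop)]
        congr 2 with ζ
        rw [← lintegral_const_mul _ (by fun_prop)]
        exact lintegral_congr fun t ↦ by ring
    _ ≤ c * ∫⁻ ζ, K * ENNReal.ofReal T *
            (‖charFun μ ζ‖ₑ ^ 2 * ENNReal.ofReal ((1 + |ζ|) ^ (-(s - e)))) := by
        refine mul_le_mul_right (lintegral_mono fun ζ ↦ ?_) _
        refine (mul_le_mul_right (hdil T ζ hT) _).trans_eq ?_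
        rw [neg_sub, sub_eq_add_neg, Real.rpow_add (by positivity),
          ENNReal.ofReal_mul (by positivity)]
        ring
    _ = _ := by
        rw [lintegral_const_mul _ (by fun_prop), ENNReal.ofReal_mul (by linarith : (0 : ℝ) ≤ T)]
        ring

end StripDensityDifference

section Tubes

/-- The determinant of two plane vectors. -/
def planeDet (u v : ℝ × ℝ) : ℝ := u.1 * v.2 - u.2 * v.1

@[fun_prop]
lemma measurable_planeDet {α : Type*} [MeasurableSpace α] {f g : α → ℝ × ℝ} (hf : Measurable f)
    (hg : Measurable g) : Measurable fun a ↦ planeDet (f a) (g a) := by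
  unfold planeDet
  fun_prop

/-- Twice the signed area of the triangle `p p' p''`; it vanishes exactly when the three points are
collinear. -/
def triangleDet (p p' p'' : ℝ × ℝ) : ℝ := planeDet (p'' - p) (p' - p)

/-- The `μ × μ`-mass of the tube of points spanning with `p` and `p'` a triangle of small area. -/
noncomputable def tubeMass (μ : Measure ℝ) (ρ : ℝ) (p p' : ℝ × ℝ) : ℝ≥0∞ :=
  (μ.prod μ) {p'' | |triangleDet p p' p''| ≤ ρ}

lemma triangleDet_eq_mul_of_mem_line {p p' : ℝ × ℝ} {t r : ℝ} (hp : p.2 = t * p.1 + r)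
    (hp' : p'.2 = t * p'.1 + r) (p'' : ℝ × ℝ) :
    triangleDet p p' p'' = (p'.1 - p.1) * (t * p''.1 + r - p''.2) := by
  simp only [triangleDet, planeDet, Prod.fst_sub, Prod.snd_sub, hp, hp']
  ring

@[fun_prop]
lemma measurable_tubeMass (μ : Measure ℝ) [SFinite μ] (ρ : ℝ) :
    Measurable fun w : (ℝ × ℝ) × (ℝ × ℝ) ↦ tubeMass μ ρ w.1 w.2 := by
  refine measurable_measure_prodMk_left
    (s := {q : ((ℝ × ℝ) × (ℝ × ℝ)) × (ℝ × ℝ) | |triangleDet q.1.1 q.1.2 q.2| ≤ ρ}) ?_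
  unfold triangleDet
  exact measurableSet_le (by fun_prop) measurable_const

lemma measure_le_lintegral_of_ae_one_le {X : Type*} [MeasurableSpace X] {μ : Measure X}
    {f : X → ℝ≥0∞} (hf : AEMeasurable f μ) {S : Set X} (h : ∀ᵐ x ∂μ, x ∈ S → 1 ≤ f x) :
    μ S ≤ ∫⁻ x, f x ∂μ :=
  (measure_mono_ae h).trans (meas_le_lintegral₀ hf fun _ hx ↦ hx)

/-- The reciprocal of a lower bound for the Gaussian cutoff on the strips meeting `[-B, B]`. -/
noncomputable def stripConst (B : ℝ) : ℝ := Real.exp ((2 * B + 2) ^ 2 / 2)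

lemma stripConst_pos (B : ℝ) : 0 < stripConst B := Real.exp_pos _

lemma one_le_stripConst_mul_gaussWeight {B R t t' r r' x y : ℝ} (hR : 0 < R) (hx : |x| ≤ B)
    (hy : |t * x + r - y| ≤ R) (ht : |t' - t| ≤ R) (hr : |r' - r| ≤ R) :
    1 ≤ ENNReal.ofReal (stripConst B) * gaussWeight ((t' * x + r' - y) / R) := by
  apply one_le_exp_mul_gaussWeight
  have hB : 0 ≤ B := (abs_nonneg x).trans hx
  rw [abs_div, abs_of_pos hR, div_le_iff₀ hR]
  calc |t' * x + r' - y| = |(t' - t) * x + (r' - r) + (t * x + r - y)| := by ring_nf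
    _ ≤ |t' - t| * |x| + |r' - r| + |t * x + r - y| := by
        rw [← abs_mul]
        exact abs_add_three _ _ _
    _ ≤ R * B + R + R := by gcongr
    _ ≤ (2 * B + 2) * R := by nlinarith

lemma tubeMass_le_gaussStripMass {μ : Measure ℝ} {B : ℝ}
    (hμB : ∀ᵐ z ∂μ, |z| ≤ B) {T ρ : ℝ} (hT : 0 < T) (hρ : 0 < ρ) {p p' : ℝ × ℝ} {t r t' r' : ℝ}
    (hp : p.2 = t * p.1 + r) (hp' : p'.2 = t * p'.1 + r) (hv : 1 / T ≤ |p'.1 - p.1|)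
    (ht : |t' - t| ≤ ρ * T) (hr : |r' - r| ≤ ρ * T) :
    tubeMass μ ρ p p' ≤
      ENNReal.ofReal (stripConst B) * gaussStripMass μ (ρ * T) t' r' := by
  rw [tubeMass, gaussStripMass, ← lintegral_const_mul _ (by fun_prop)]
  refine measure_le_lintegral_of_ae_one_le (by fun_prop) ?_
  filter_upwards [Measure.quasiMeasurePreserving_fst.ae hμB] with q hq hdet
  refine one_le_stripConst_mul_gaussWeight (by positivity) hq ?_ ht hr
  rw [triangleDet_eq_mul_of_mem_line hp hp', abs_mul] at hdet
  rw [div_le_iff₀ hT] at hv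
  nlinarith [mul_le_mul_of_nonneg_right hv (abs_nonneg (t * q.1 + r - q.2))]

lemma lt_stripDensity_of_lt_tubeMass {μ : Measure ℝ} [IsFiniteMeasure μ] {B : ℝ}
    (hμB : ∀ᵐ z ∂μ, |z| ≤ B) {T M ρ : ℝ} (hT : 0 < T) (hM : 0 ≤ M) (hρ : 0 < ρ) {p p' : ℝ × ℝ}
    {t r t' r' : ℝ} (hp : p.2 = t * p.1 + r) (hp' : p'.2 = t * p'.1 + r)
    (hv : 1 / T ≤ |p'.1 - p.1|) (ht : |t' - t| ≤ ρ * T) (hr : |r' - r| ≤ ρ * T)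
    (hlt : ENNReal.ofReal (M * ρ) < tubeMass μ ρ p p') :
    M / (stripConst B * T) < stripDensity μ (ρ * T) t' r' := by
  have hconst := stripConst_pos B
  have h := hlt.trans_le (tubeMass_le_gaussStripMass hμB hT hρ hp hp' hv ht hr)
  rw [← ENNReal.ofReal_toReal (gaussStripMass_ne_top μ (ρ * T) t' r'),
    ← ENNReal.ofReal_mul (by positivity),
    ENNReal.ofReal_lt_ofReal_iff_of_nonneg (by positivity)] at h
  rw [stripDensity, inv_mul_eq_div, div_lt_div_iff₀ (by positivity) (by positivity)]
  nlinarith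

lemma ofReal_half_stripDensity (μ : Measure ℝ) [IsFiniteMeasure μ] {R : ℝ} (hR : 0 ≤ R) (t r : ℝ) :
    ENNReal.ofReal (stripDensity μ R t r / 2) =
      ENNReal.ofReal (2 * R)⁻¹ * gaussStripMass μ R t r := by
  rw [← ENNReal.ofReal_toReal (gaussStripMass_ne_top μ R t r), ← ENNReal.ofReal_mul (by positivity),
    stripDensity, mul_inv]
  ring_nf

lemma stripDensity_le (μ : Measure ℝ) [IsFiniteMeasure μ] {ρ : ℝ} (hρ : 0 ≤ ρ) (t r : ℝ) :
    stripDensity μ ρ t r ≤ μ.real univ ^ 2 / ρ := by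
  have hmass : gaussStripMass μ ρ t r ≤ μ univ ^ 2 :=
    (lintegral_mono fun p ↦ gaussWeight_le_one _).trans_eq
      (by rw [lintegral_one, ← univ_prod_univ, Measure.prod_prod, sq])
  rw [stripDensity, inv_mul_eq_div, measureReal_def, ← ENNReal.toReal_pow]
  gcongr
  finiteness

lemma measure_prod_le_lintegral_of_closedBall {X : Type*} [MeasurableSpace X] {ν : Measure X}
    [SFinite ν] {S : Set (X × X)} {f : ℝ × ℝ → ℝ≥0∞} (hf : Measurable f)
    {k : ℝ × ℝ → X → ℝ≥0∞} (hk : Measurable (Function.uncurry k)) {R : ℝ} (hR : 0 < R)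
    (hS : ∀ᵐ w ∂(ν.prod ν), w ∈ S →
      ∃ q₀ : ℝ × ℝ, ∀ q ∈ Metric.closedBall q₀ R, 1 ≤ f q * (k q w.1 * k q w.2)) :
    (ν.prod ν) S ≤ ∫⁻ q, f q * (ENNReal.ofReal (2 * R)⁻¹ * ∫⁻ p, k q p ∂ν) ^ 2 := by
  set c := ENNReal.ofReal (2 * R)⁻¹ with hc
  have hk' (q : ℝ × ℝ) : Measurable (k q) := hk.of_uncurry_left
  have hvol (q₀ : ℝ × ℝ) : c ^ 2 * volume (Metric.closedBall q₀ R) = 1 := by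
    rw [← closedBall_prod_same, Measure.volume_eq_prod, Measure.prod_prod, Real.volume_closedBall,
      Real.volume_closedBall, ← sq, ← mul_pow, hc, ← ENNReal.ofReal_mul (by positivity),
      inv_mul_cancel₀ (by positivity), ENNReal.ofReal_one, one_pow]
  have hmeas : Measurable fun z : (X × X) × (ℝ × ℝ) ↦ f z.2 * (k z.2 z.1.1 * k z.2 z.1.2) := by
    have : Measurable fun z : (X × X) × (ℝ × ℝ) ↦ k z.2 z.1.1 :=
      hk.comp (measurable_snd.prodMk measurable_fst.fst)
    have : Measurable fun z : (X × X) × (ℝ × ℝ) ↦ k z.2 z.1.2 :=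
      hk.comp (measurable_snd.prodMk measurable_fst.snd)
    fun_prop
  calc (ν.prod ν) S ≤ ∫⁻ w, c ^ 2 * (∫⁻ q, f q * (k q w.1 * k q w.2)) ∂(ν.prod ν) := by
        refine measure_le_lintegral_of_ae_one_le
          (hmeas.lintegral_prod_right'.const_mul _).aemeasurable ?_
        filter_upwards [hS] with w hw hwS
        obtain ⟨q₀, hq₀⟩ := hw hwS
        rw [← hvol q₀, ← setLIntegral_one]
        exact mul_le_mul_right ((setLIntegral_mono' measurableSet_closedBall hq₀).trans
          (setLIntegral_le_lintegral _ _)) _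
    _ = c ^ 2 * ∫⁻ q, f q * (∫⁻ p, k q p ∂ν) ^ 2 := by
        rw [lintegral_const_mul _ hmeas.lintegral_prod_right',
          lintegral_lintegral_swap hmeas.aemeasurable]
        congr 2 with q
        have hkk : Measurable fun w : X × X ↦ k q w.1 * k q w.2 :=
          ((hk' q).comp measurable_fst).mul ((hk' q).comp measurable_snd)
        dsimp only
        rw [lintegral_const_mul _ hkk,
          lintegral_prod_mul (hk' q).aemeasurable (hk' q).aemeasurable, sq]
    _ = _ := by
        rw [← lintegral_const_mul' _ _ (by finiteness)]
        exact lintegral_congr fun q ↦ by ring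

lemma exists_line_of_ne {p p' : ℝ × ℝ} (h : p'.1 ≠ p.1) :
    ∃ t r, p.2 = t * p.1 + r ∧ p'.2 = t * p'.1 + r := by
  have hsub := sub_ne_zero.mpr h
  refine ⟨(p'.2 - p.2) / (p'.1 - p.1), p.2 - (p'.2 - p.2) / (p'.1 - p.1) * p.1, by ring, ?_⟩
  field_simp
  ring

/-- The lines `y = t x + r`, encoded by `(t, r)`, whose smoothed strip has density above `l`. -/
def denseStrips (μ : Measure ℝ) (R l : ℝ) : Set (ℝ × ℝ) := {q | l < stripDensity μ R q.1 q.2}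

lemma measurableSet_denseStrips (μ : Measure ℝ) [SFinite μ] (R l : ℝ) :
    MeasurableSet (denseStrips μ R l) :=
  measurableSet_lt (by fun_prop) (by fun_prop)

lemma denseStrips_eq_empty (μ : Measure ℝ) [IsFiniteMeasure μ] {R l : ℝ} (hR : 0 ≤ R)
    (hl : μ.real univ ^ 2 / R ≤ l) : denseStrips μ R l = ∅ :=
  eq_empty_of_forall_notMem fun q hq ↦ (hq.trans_le (stripDensity_le μ hR q.1 q.2)).not_ge hl

lemma indicator_denseStrips_mul_le (μ : Measure ℝ) [IsFiniteMeasure μ] {R ρ l : ℝ} (hρ : 0 ≤ ρ)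
    (hl : 0 ≤ l) (hρl : μ.real univ ^ 2 / ρ ≤ l / 2) (q : ℝ × ℝ) :
    (denseStrips μ R l).indicator 1 q * ENNReal.ofReal (stripDensity μ R q.1 q.2 / 2) ^ 2 ≤
      ENNReal.ofReal ((stripDensity μ R q.1 q.2 - stripDensity μ ρ q.1 q.2) ^ 2) := by
  by_cases hq : q ∈ denseStrips μ R l
  · have hdense : l < stripDensity μ R q.1 q.2 := hq
    have hsmall := stripDensity_le μ hρ q.1 q.2
    rw [indicator_of_mem hq, Pi.one_apply, one_mul, ← ENNReal.ofReal_pow (by linarith)]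
    exact ENNReal.ofReal_le_ofReal (pow_le_pow_left₀ (by linarith) (by linarith) 2)
  · rw [indicator_of_notMem hq, zero_mul]
    exact zero_le

lemma abs_slope_le {B T t r : ℝ} (hT : 0 < T) {p p' : ℝ × ℝ} (hp : p.2 = t * p.1 + r)
    (hp' : p'.2 = t * p'.1 + r) (hpB : |p.2| ≤ B) (hpB' : |p'.2| ≤ B)
    (hv : 1 / T ≤ |p'.1 - p.1|) : |t| ≤ 2 * B * T := by
  have hmul : |t| * |p'.1 - p.1| ≤ 2 * B := by
    rw [← abs_mul, show t * (p'.1 - p.1) = p'.2 - p.2 by rw [hp, hp']; ring]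
    linarith [abs_sub p'.2 p.2]
  rw [div_le_iff₀ hT] at hv
  nlinarith [abs_nonneg t]

lemma measure_lt_tubeMass_le_lintegral {μ : Measure ℝ} [IsFiniteMeasure μ] {B : ℝ}
    (hμB : ∀ᵐ z ∂μ, |z| ≤ B) {T M ρ : ℝ} (hT : 0 < T) (hM : 0 ≤ M) (hρ : 0 < ρ) (hρ1 : ρ ≤ 1) :
    ((μ.prod μ).prod (μ.prod μ))
        {w | 1 / T ≤ |w.2.1 - w.1.1| ∧ ENNReal.ofReal (M * ρ) < tubeMass μ ρ w.1 w.2} ≤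
      ∫⁻ q : ℝ × ℝ, ENNReal.ofReal (stripConst B) ^ 3 *
        (gaussWeight (q.1 / T) * (denseStrips μ (ρ * T) (M / (stripConst B * T))).indicator 1 q) *
          ENNReal.ofReal (stripDensity μ (ρ * T) q.1 q.2 / 2) ^ 2 := by
  have hR : 0 < ρ * T := by positivity
  have hdense := measurable_one.indicator (β := ℝ≥0∞)
    (measurableSet_denseStrips μ (ρ * T) (M / (stripConst B * T)))
  have hkernel : Measurable (Function.uncurry fun q p : ℝ × ℝ ↦
      gaussWeight ((q.1 * p.1 + q.2 - p.2) / (ρ * T))) := by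
    simp only [Function.uncurry_def]
    fun_prop
  have hfactor : Measurable fun q : ℝ × ℝ ↦ ENNReal.ofReal (stripConst B) ^ 3 *
      (gaussWeight (q.1 / T) *
        (denseStrips μ (ρ * T) (M / (stripConst B * T))).indicator 1 q) := by
    fun_prop
  refine (measure_prod_le_lintegral_of_closedBall hfactor hkernel hR ?_).trans_eq
    (lintegral_congr fun q ↦ by rw [ofReal_half_stripDensity μ hR.le, gaussStripMass])
  have hμB2 : ∀ᵐ p ∂(μ.prod μ), |p.1| ≤ B ∧ |p.2| ≤ B :=
    (Measure.quasiMeasurePreserving_fst.ae hμB).and (Measure.quasiMeasurePreserving_snd.ae hμB)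
  filter_upwards [Measure.quasiMeasurePreserving_fst.ae hμB2,
    Measure.quasiMeasurePreserving_snd.ae hμB2] with w ⟨hp1, hp2⟩ ⟨hp1', hp2'⟩ ⟨hv, hlt⟩
  have hv0 : 0 < |w.2.1 - w.1.1| := lt_of_lt_of_le (by positivity) hv
  obtain ⟨t, r, hp, hp'⟩ := exists_line_of_ne (sub_ne_zero.mp (abs_pos.mp hv0))
  have ht := abs_slope_le hT hp hp' hp2 hp2' hv
  refine ⟨(t, r), fun q hq ↦ ?_⟩
  obtain ⟨hqt, hqr⟩ : |q.1 - t| ≤ ρ * T ∧ |q.2 - r| ≤ ρ * T := by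
    simpa [Prod.dist_eq, Real.dist_eq] using hq
  have hslope : 1 ≤ ENNReal.ofReal (stripConst B) * gaussWeight (q.1 / T) := by
    apply one_le_exp_mul_gaussWeight
    rw [abs_div, abs_of_pos hT, div_le_iff₀ hT]
    have hle := abs_add_le (q.1 - t) t
    rw [sub_add_cancel] at hle
    nlinarith
  have hstrip {x y : ℝ} (hx : |x| ≤ B) (hy : y = t * x + r) :=
    one_le_stripConst_mul_gaussWeight (y := y) hR hx (by simpa [hy] using hR.le) hqt hqr
  have hqdense := lt_stripDensity_of_lt_tubeMass hμB hT hM hρ hp hp' hv hqt hqr hlt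
  rw [indicator_of_mem (by exact hqdense), Pi.one_apply, mul_one]
  calc (1 : ℝ≥0∞) = 1 * (1 * 1) := by simp
    _ ≤ _ := mul_le_mul' hslope (mul_le_mul' (hstrip hp1 hp) (hstrip hp1' hp'))
    _ = _ := by ring

lemma IsFrostman.exists_measure_lt_tubeMass_le {μ : Measure ℝ} [IsFiniteMeasure μ] {C : ℝ≥0∞}
    {s e : ℝ} (hμ : IsFrostman μ C s) (hC : C ≠ ⊤) (hs : s ≤ 1) (he : 0 ≤ e) (hes : e < 2 * s - 1)
    {B : ℝ} (hμB : ∀ᵐ z ∂μ, |z| ≤ B) :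
    ∃ K : ℝ≥0∞, K ≠ ⊤ ∧ ∀ T M ρ : ℝ, 1 ≤ T → 0 < M → 0 < ρ → ρ ≤ 1 →
      ((μ.prod μ).prod (μ.prod μ))
          {w | 1 / T ≤ |w.2.1 - w.1.1| ∧ ENNReal.ofReal (M * ρ) < tubeMass μ ρ w.1 w.2} ≤
        K * ENNReal.ofReal (T * (T / M) ^ e) := by
  obtain ⟨K, hK, hdiff⟩ := hμ.exists_lintegral_sq_stripDensity_sub_le hC hs he hes
  set m := 2 * (μ.real univ ^ 2 + 1)
  have hb := stripConst_pos B
  refine ⟨ENNReal.ofReal (stripConst B) ^ 3 * K * ENNReal.ofReal ((m * stripConst B) ^ e),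
    by finiteness, fun T M ρ hT hM hρ hρ1 ↦ ?_⟩
  have hR : 0 < ρ * T := by positivity
  set l := M / (stripConst B * T) with hl
  have hl0 : 0 < l := by positivity
  -- At the coarse scale `m / l` every strip has density at most `l / 2`.
  have hρ' : μ.real univ ^ 2 / (m / l) ≤ l / 2 := by
    rw [div_div_eq_mul_div, div_le_iff₀ (by positivity)]
    nlinarith
  refine (measure_lt_tubeMass_le_lintegral hμB (by linarith) hM.le hρ hρ1).trans ?_
  rcases le_or_gt (ρ * T) (m / l) with hle | hgt
  · calc _ ≤ ∫⁻ q : ℝ × ℝ, ENNReal.ofReal (stripConst B) ^ 3 * (gaussWeight (q.1 / T) *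
            ENNReal.ofReal
              ((stripDensity μ (ρ * T) q.1 q.2 - stripDensity μ (m / l) q.1 q.2) ^ 2)) := by
          refine lintegral_mono fun q ↦ ?_
          rw [mul_assoc, mul_assoc]
          exact mul_le_mul_right (mul_le_mul_right
            (indicator_denseStrips_mul_le μ (by positivity) hl0.le hρ' q) _) _
      _ ≤ ENNReal.ofReal (stripConst B) ^ 3 * (K * ENNReal.ofReal (T * (m / l) ^ e)) := by
          rw [lintegral_const_mul' _ _ (by finiteness), Measure.volume_eq_prod,
            lintegral_prod _ (by fun_prop)]
          exact mul_le_mul_right (hdiff T (ρ * T) (m / l) hT hR hle) _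
      _ = _ := by
          have hml : m / l = m * stripConst B * (T / M) := by
            rw [hl]
            field_simp
          rw [hml, Real.mul_rpow (by positivity) (by positivity), mul_left_comm T,
            ENNReal.ofReal_mul (by positivity)]
          ring
  · have hml : μ.real univ ^ 2 / (ρ * T) ≤ μ.real univ ^ 2 / (m / l) := by gcongr
    simp [← hl, denseStrips_eq_empty μ hR.le (by linarith : μ.real univ ^ 2 / (ρ * T) ≤ l)]

end Tubes

section ThinTubes

/-- The pairs of points with `1 / T`-separated first coordinates all of whose dyadic tubes, of width
`δ` say, have mass at most `K * δ ^ (1 - β)`. -/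
def thinTubePairs (μ : Measure ℝ) (T K β : ℝ) : Set ((ℝ × ℝ) × (ℝ × ℝ)) :=
  {w | 1 / T ≤ |w.2.1 - w.1.1| ∧
    ∀ n : ℕ, tubeMass μ ((1 / 2) ^ n) w.1 w.2 ≤ ENNReal.ofReal (K * ((1 / 2 : ℝ) ^ n) ^ (1 - β))}

lemma measurableSet_thinTubePairs (μ : Measure ℝ) [SFinite μ] (T K β : ℝ) :
    MeasurableSet (thinTubePairs μ T K β) := by
  have hinter : thinTubePairs μ T K β = {w | 1 / T ≤ |w.2.1 - w.1.1|} ∩ ⋂ n : ℕ, {w |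
      tubeMass μ ((1 / 2) ^ n) w.1 w.2 ≤
        ENNReal.ofReal (K * ((1 / 2 : ℝ) ^ n) ^ (1 - β))} := by
    ext w
    simp [thinTubePairs]
  rw [hinter]
  exact (measurableSet_le measurable_const (by fun_prop)).inter <|
    MeasurableSet.iInter fun n ↦ measurableSet_le (by fun_prop) measurable_const

lemma IsFrostman.measure_abs_sub_fst_lt_le {μ : Measure ℝ} [IsFiniteMeasure μ] {C : ℝ≥0∞} {s : ℝ}
    (hμ : IsFrostman μ C s) {ρ : ℝ} (hρ : 0 < ρ) :
    ((μ.prod μ).prod (μ.prod μ)) {w | |w.2.1 - w.1.1| < ρ} ≤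
      μ univ ^ 3 * C * ENNReal.ofReal (ρ ^ s) := by
  rw [Measure.prod_apply (measurableSet_lt (by fun_prop) measurable_const)]
  calc _ ≤ ∫⁻ _ : ℝ × ℝ, C * ENNReal.ofReal (ρ ^ s) * μ univ ∂(μ.prod μ) := by
        refine lintegral_mono fun p ↦ ?_
        calc _ ≤ (μ.prod μ) (Metric.closedBall p.1 ρ ×ˢ univ) :=
              measure_mono fun x (hx : |x.1 - p.1| < ρ) ↦ ⟨hx.le, trivial⟩
          _ = μ (Metric.closedBall p.1 ρ) * μ univ := Measure.prod_prod _ _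
          _ ≤ _ := mul_le_mul_left (hμ p.1 ρ hρ) _
    _ = _ := by
        rw [lintegral_const, ← univ_prod_univ, Measure.prod_prod]
        ring

lemma compl_thinTubePairs_subset (μ : Measure ℝ) (T K β : ℝ) :
    (thinTubePairs μ T K β)ᶜ ⊆ {w | |w.2.1 - w.1.1| < 1 / T} ∪ ⋃ n : ℕ, {w |
      1 / T ≤ |w.2.1 - w.1.1| ∧ ENNReal.ofReal (K * ((1 / 2 : ℝ) ^ n) ^ (-β) * (1 / 2) ^ n) <
        tubeMass μ ((1 / 2) ^ n) w.1 w.2} := by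
  intro w hw
  rcases lt_or_ge |w.2.1 - w.1.1| (1 / T) with hclose | hfar
  · exact Or.inl hclose
  · obtain ⟨n, hn⟩ : ∃ n : ℕ, ENNReal.ofReal (K * ((1 / 2 : ℝ) ^ n) ^ (1 - β)) <
        tubeMass μ ((1 / 2) ^ n) w.1 w.2 := by
      by_contra! hthin
      exact hw ⟨hfar, hthin⟩
    refine Or.inr (mem_iUnion.mpr ⟨n, hfar, ?_⟩)
    rwa [mul_assoc, ← Real.rpow_add_one (by positivity), neg_add_eq_sub]

lemma IsFrostman.exists_measure_compl_thinTubePairs_le {μ : Measure ℝ} [IsFiniteMeasure μ]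
    {C : ℝ≥0∞} {s e : ℝ} (hμ : IsFrostman μ C s) (hC : C ≠ ⊤) (hs : s ≤ 1) (he : 0 < e)
    (hes : e < 2 * s - 1) {B : ℝ} (hμB : ∀ᵐ z ∂μ, |z| ≤ B) {β : ℝ} (hβ : 0 < β) :
    ∃ D : ℝ≥0∞, D ≠ ⊤ ∧ ∀ T K : ℝ, 1 ≤ T → 0 < K →
      ((μ.prod μ).prod (μ.prod μ)) (thinTubePairs μ T K β)ᶜ ≤
        D * (ENNReal.ofReal (T ^ (-s)) + ENNReal.ofReal (T * (T / K) ^ e)) := by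
  obtain ⟨D, hD, htube⟩ := hμ.exists_measure_lt_tubeMass_le hC hs he.le hes hμB
  set q : ℝ := (1 / 2) ^ (β * e) with hq
  have hq0 : 0 < q := by positivity
  have hq1 : q < 1 := Real.rpow_lt_one (by norm_num) (by norm_num) (by positivity)
  have hgeo : ∑' n : ℕ, ENNReal.ofReal (q ^ n) ≠ ⊤ :=
    (summable_geometric_of_lt_one hq0.le hq1).tsum_ofReal_ne_top
  refine ⟨μ univ ^ 3 * C + D * ∑' n : ℕ, ENNReal.ofReal (q ^ n), by finiteness,
    fun T K hT hK ↦ ?_⟩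
  have hT0 : 0 < T := by linarith
  have hdyadic (n : ℕ) : ((μ.prod μ).prod (μ.prod μ)) {w | 1 / T ≤ |w.2.1 - w.1.1| ∧
      ENNReal.ofReal (K * ((1 / 2 : ℝ) ^ n) ^ (-β) * (1 / 2) ^ n) <
        tubeMass μ ((1 / 2) ^ n) w.1 w.2} ≤
      D * ENNReal.ofReal (T * (T / K) ^ e) * ENNReal.ofReal (q ^ n) := by
    refine (htube T _ _ hT (by positivity) (by positivity)
      (pow_le_one₀ (by norm_num) (by norm_num))).trans_eq ?_
    have hqn : (T / (K * ((1 / 2 : ℝ) ^ n) ^ (-β))) ^ e = (T / K) ^ e * q ^ n := by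
      rw [Real.rpow_neg (by positivity), ← div_div, div_inv_eq_mul,
        Real.mul_rpow (by positivity) (by positivity), ← Real.rpow_mul (by positivity), hq,
        Real.rpow_pow_comm (by positivity)]
    rw [hqn, mul_assoc, ← ENNReal.ofReal_mul (by positivity), mul_assoc]
  calc _ ≤ μ univ ^ 3 * C * ENNReal.ofReal ((1 / T) ^ s) +
        ∑' n : ℕ, D * ENNReal.ofReal (T * (T / K) ^ e) * ENNReal.ofReal (q ^ n) :=
        (measure_mono (compl_thinTubePairs_subset μ T K β)).trans <| (measure_union_le _ _).trans <|
          add_le_add (hμ.measure_abs_sub_fst_lt_le (by positivity))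
            ((measure_iUnion_le _).trans (ENNReal.tsum_le_tsum hdyadic))
    _ = μ univ ^ 3 * C * ENNReal.ofReal (T ^ (-s)) +
        D * (∑' n : ℕ, ENNReal.ofReal (q ^ n)) * ENNReal.ofReal (T * (T / K) ^ e) := by
        rw [ENNReal.tsum_mul_left, one_div, Real.inv_rpow hT0.le, ← Real.rpow_neg hT0.le]
        ring
    _ ≤ _ := by
        rw [mul_add]
        exact add_le_add (mul_le_mul_left le_self_add _) (mul_le_mul_left le_add_self _)

lemma tubeMass_le_of_mem_thinTubePairs {μ : Measure ℝ} {T K β δ : ℝ} (hK : 0 ≤ K) (hβ : 0 ≤ β)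
    (hβ1 : β ≤ 1) (hδ : 0 < δ) (hδ1 : δ ≤ 1) {w : (ℝ × ℝ) × (ℝ × ℝ)}
    (hw : w ∈ thinTubePairs μ T K β) :
    tubeMass μ δ w.1 w.2 ≤ 2 * ENNReal.ofReal (K * δ ^ (1 - β)) := by
  obtain ⟨n, hn, hn'⟩ := exists_nat_pow_near_of_lt_one hδ hδ1 (by norm_num : (0 : ℝ) < 1 / 2)
    (by norm_num)
  calc tubeMass μ δ w.1 w.2 ≤ tubeMass μ ((1 / 2) ^ n) w.1 w.2 :=
        measure_mono fun x hx ↦ le_trans (by exact hx) hn'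
    _ ≤ ENNReal.ofReal (K * ((1 / 2 : ℝ) ^ n) ^ (1 - β)) := hw.2 n
    _ ≤ ENNReal.ofReal (2 * (K * δ ^ (1 - β))) := by
        apply ENNReal.ofReal_le_ofReal
        rw [mul_left_comm]
        gcongr
        calc ((1 / 2 : ℝ) ^ n) ^ (1 - β) ≤ (2 * δ) ^ (1 - β) := by
              rw [pow_succ] at hn
              exact Real.rpow_le_rpow (by positivity) (by linarith) (by linarith)
          _ = 2 ^ (1 - β) * δ ^ (1 - β) := Real.mul_rpow (by norm_num) hδ.le
          _ ≤ 2 * δ ^ (1 - β) := by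
              gcongr
              exact Real.rpow_le_self_of_one_le (by norm_num) (by linarith)
    _ = 2 * ENNReal.ofReal (K * δ ^ (1 - β)) := by
        rw [ENNReal.ofReal_mul (by norm_num), ENNReal.ofReal_ofNat]

lemma norm_mul_abs_planeDet_le (y u v : ℝ × ℝ) :
    ‖y‖ * |planeDet u v| ≤ ‖u‖ * |planeDet y v| + ‖v‖ * |planeDet y u| := by
  have hcoord {a b c : ℝ} (hb : |b| ≤ ‖u‖) (hc : |c| ≤ ‖v‖)
      (h : a * planeDet u v = b * planeDet y v - c * planeDet y u) :
      |a| * |planeDet u v| ≤ ‖u‖ * |planeDet y v| + ‖v‖ * |planeDet y u| := by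
    rw [← abs_mul, h]
    refine (abs_sub _ _).trans ?_
    rw [abs_mul, abs_mul]
    gcongr
  rcases max_choice ‖y.1‖ ‖y.2‖ with hmax | hmax <;> rw [Prod.norm_def, hmax]
  · exact hcoord (norm_fst_le u) (norm_fst_le v) (by unfold planeDet; ring)
  · exact hcoord (norm_snd_le u) (norm_snd_le v) (by unfold planeDet; ring)

lemma ae_prod_norm_le {μ : Measure ℝ} {B : ℝ} (hμB : ∀ᵐ z ∂μ, |z| ≤ B) :
    ∀ᵐ p ∂(μ.prod μ), ‖p‖ ≤ B := by
  filter_upwards [Measure.quasiMeasurePreserving_fst.ae hμB,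
    Measure.quasiMeasurePreserving_snd.ae hμB] with p h₁ h₂
  exact norm_prod_le_iff.mpr ⟨h₁, h₂⟩

lemma measure_slab_inter_thinTubePairs_le_of_le_mul {μ : Measure ℝ} {B : ℝ}
    (hμB : ∀ᵐ z ∂μ, |z| ≤ B) {T K β h δ : ℝ} (hK : 0 ≤ K) (hβ : 0 ≤ β) (hβ1 : β ≤ 1)
    (hδ : 0 < δ) (hδ1 : δ ≤ 1) {p y : ℝ × ℝ} (hp : ‖p‖ ≤ B) (hy : 0 < ‖y‖)
    (hyδ : 4 * B * h ≤ ‖y‖ * δ) :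
    (μ.prod μ) {p' | (p, p') ∈ thinTubePairs μ T K β ∧ |planeDet y (p' - p)| ≤ h} ≤
      2 * ENNReal.ofReal (K * δ ^ (1 - β)) := by
  set S := {p' | (p, p') ∈ thinTubePairs μ T K β ∧ |planeDet y (p' - p)| ≤ h}
  have hS : (μ.prod μ) S ≤ (μ.prod μ) (S ∩ {p' | ‖p'‖ ≤ B}) :=
    measure_mono_ae <| (ae_prod_norm_le hμB).mono fun p' hp' hS ↦ ⟨hS, hp'⟩
  rcases (S ∩ {p' | ‖p'‖ ≤ B}).eq_empty_or_nonempty with hempty | ⟨p₀, ⟨hthin, hy₀⟩, hp₀⟩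
  · rw [hempty, measure_empty] at hS
    exact hS.trans zero_le
  · refine hS.trans ((measure_mono ?_).trans
      (tubeMass_le_of_mem_thinTubePairs hK hβ hβ1 hδ hδ1 hthin))
    rintro x ⟨⟨-, hyx⟩, hx⟩
    have hnorm {q : ℝ × ℝ} (hq : ‖q‖ ≤ B) : ‖q - p‖ ≤ 2 * B := by linarith [norm_sub_le q p]
    refine le_of_mul_le_mul_left ((norm_mul_abs_planeDet_le y (x - p) (p₀ - p)).trans ?_) hy
    have hB : 0 ≤ B := (norm_nonneg p).trans hp
    calc _ ≤ 2 * B * h + 2 * B * h :=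
          add_le_add (mul_le_mul (hnorm hx) hy₀ (abs_nonneg _) (by positivity))
            (mul_le_mul (hnorm hp₀) hyx (abs_nonneg _) (by positivity))
      _ ≤ _ := by linarith

lemma div_one_add_norm_rpow_le {a γ : ℝ} (ha : 1 ≤ a) (hγ : 0 ≤ γ) (hγ1 : γ ≤ 1) (y : ℝ × ℝ) :
    (a / (1 + ‖y‖)) ^ γ ≤ a * ((1 + |y.1|) ^ (-(γ / 2)) * (1 + |y.2|) ^ (-(γ / 2))) := by
  have hcoord {x : ℝ} (hx : |x| ≤ ‖y‖) : (1 + ‖y‖) ^ (-(γ / 2)) ≤ (1 + |x|) ^ (-(γ / 2)) :=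
    Real.rpow_le_rpow_of_nonpos (by positivity) (by linarith) (by linarith)
  rw [div_eq_mul_inv, Real.mul_rpow (by positivity) (by positivity), Real.inv_rpow (by positivity),
    ← Real.rpow_neg (by positivity), show -γ = -(γ / 2) + -(γ / 2) by ring,
    Real.rpow_add (by positivity)]
  exact mul_le_mul (Real.rpow_le_self_of_one_le ha hγ1)
    (mul_le_mul (hcoord (norm_fst_le y)) (hcoord (norm_snd_le y)) (by positivity) (by positivity))
    (by positivity) (by positivity)

lemma measure_slab_inter_thinTubePairs_le {μ : Measure ℝ} [IsFiniteMeasure μ] {B : ℝ} (hB : 1 ≤ B)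
    (hμB : ∀ᵐ z ∂μ, |z| ≤ B) {T K β h : ℝ} (hK : 1 ≤ K) (hβ : 0 ≤ β) (hβ1 : β ≤ 1) (hh : 1 ≤ h)
    {p : ℝ × ℝ} (hp : ‖p‖ ≤ B) (y : ℝ × ℝ) :
    (μ.prod μ) {p' | (p, p') ∈ thinTubePairs μ T K β ∧ |planeDet y (p' - p)| ≤ h} ≤
      (2 + μ univ ^ 2) * ENNReal.ofReal (K * (8 * B * h *
        ((1 + |y.1|) ^ (-((1 - β) / 2)) * (1 + |y.2|) ^ (-((1 - β) / 2))))) := by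
  have hBh : 1 ≤ B * h := one_le_mul_of_one_le_of_one_le hB hh
  set δ := 8 * B * h / (1 + ‖y‖) with hδ
  have hδ0 : 0 < δ := by positivity
  suffices hδ_bound : (μ.prod μ)
      {p' | (p, p') ∈ thinTubePairs μ T K β ∧ |planeDet y (p' - p)| ≤ h} ≤
      (2 + μ univ ^ 2) * ENNReal.ofReal (K * δ ^ (1 - β)) by
    refine hδ_bound.trans (mul_le_mul_right (ENNReal.ofReal_le_ofReal ?_) _)
    gcongr
    exact div_one_add_norm_rpow_le (by linarith) (by linarith) (by linarith) y
  rcases le_or_gt 1 δ with hδ1 | hδ1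
  · calc _ ≤ (μ.prod μ) univ := measure_mono (subset_univ _)
      _ = μ univ ^ 2 * 1 := by rw [← univ_prod_univ, Measure.prod_prod, sq, mul_one]
      _ ≤ _ := by
        refine mul_le_mul' le_add_self (ENNReal.one_le_ofReal.mpr ?_)
        exact one_le_mul_of_one_le_of_one_le hK (Real.one_le_rpow hδ1 (by linarith))
  · have hlarge : 7 ≤ ‖y‖ := by
      rw [hδ, div_lt_one (by positivity)] at hδ1
      linarith
    refine (measure_slab_inter_thinTubePairs_le_of_le_mul hμB (by linarith) hβ hβ1 hδ0 hδ1.le hp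
      (by linarith) ?_).trans (mul_le_mul_left le_self_add _)
    rw [hδ, mul_div_assoc', le_div_iff₀ (by positivity)]
    nlinarith

lemma setLIntegral_thinTubePairs_gaussWeight_planeDet_le {μ : Measure ℝ} [IsFiniteMeasure μ]
    {B : ℝ} (hB : 1 ≤ B) (hμB : ∀ᵐ z ∂μ, |z| ≤ B) {T K β : ℝ} (hK : 1 ≤ K) (hβ : 0 ≤ β)
    (hβ1 : β ≤ 1) {p : ℝ × ℝ} (hp : ‖p‖ ≤ B) (y : ℝ × ℝ) :
    ∫⁻ p' in {p' | (p, p') ∈ thinTubePairs μ T K β},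
        gaussWeight (planeDet y (p' - p) / (3 * B)) ∂(μ.prod μ) ≤
      gaussLayerConst * ((2 + μ univ ^ 2) * ENNReal.ofReal (24 * B ^ 2 * K) *
        (ENNReal.ofReal ((1 + |y.1|) ^ (-((1 - β) / 2))) *
          ENNReal.ofReal ((1 + |y.2|) ^ (-((1 - β) / 2))))) := by
  have hfiber : MeasurableSet {p' | (p, p') ∈ thinTubePairs μ T K β} :=
    measurable_prodMk_left (measurableSet_thinTubePairs μ T K β)
  refine lintegral_gaussWeight_le_of_measure_le (by fun_prop) fun r hr ↦ ?_
  rw [Measure.restrict_apply' hfiber]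
  calc _ ≤ (μ.prod μ) {p' | (p, p') ∈ thinTubePairs μ T K β ∧
        |planeDet y (p' - p)| ≤ 3 * B * r} := by
        refine measure_mono fun p' ⟨(hr' : |_ / _| ≤ r), hp'⟩ ↦ ⟨hp', ?_⟩
        rwa [abs_div, abs_of_pos (by positivity : 0 < 3 * B), div_le_iff₀' (by positivity)] at hr'
    _ ≤ _ := measure_slab_inter_thinTubePairs_le hB hμB hK hβ hβ1 (by nlinarith) hp y
    _ = _ := by
        rw [← ENNReal.ofReal_mul (by positivity), mul_assoc (2 + μ univ ^ 2),
          mul_assoc (2 + μ univ ^ 2), ← ENNReal.ofReal_mul (by positivity),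
          ← ENNReal.ofReal_mul (by positivity)]
        ring_nf

lemma IsFrostman.exists_setLIntegral_thinTubePairs_gaussWeight_le {μ : Measure ℝ}
    [IsFiniteMeasure μ] {C : ℝ≥0∞} {s β : ℝ} (hμ : IsFrostman μ C s) (hC : C ≠ ⊤) {B : ℝ}
    (hB : 1 ≤ B) (hμB : ∀ᵐ z ∂μ, |z| ≤ B) (hβ : 0 ≤ β) (hβ1 : β ≤ 1) (hβs : 1 - β < 2 * s) :
    ∃ D : ℝ≥0∞, D ≠ ⊤ ∧ ∀ (T K ξ : ℝ) (q : ℝ × ℝ), 1 ≤ K →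
      ∫⁻ w in thinTubePairs μ T K β,
          gaussWeight (planeDet ((2 * ξ) • w.1 + q) (w.2 - w.1) / (3 * B))
            ∂((μ.prod μ).prod (μ.prod μ)) ≤
        D * ENNReal.ofReal K * (ENNReal.ofReal ((1 + |ξ| + |q.1|) ^ (-((1 - β) / 2))) *
          ENNReal.ofReal ((1 + |ξ| + |q.2|) ^ (-((1 - β) / 2)))) := by
  obtain ⟨M, hM, hmoment⟩ := hμ.exists_lintegral_affine_rpow_neg_le hC (α := (1 - β) / 2)
    (by linarith) (by linarith) hB hμB
  have hconst := gaussLayerConst_ne_top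
  refine ⟨gaussLayerConst * ((2 + μ univ ^ 2) * ENNReal.ofReal (24 * B ^ 2)) * M ^ 2,
    by finiteness, fun T K ξ q hK ↦ ?_⟩
  have hmeas := measurableSet_thinTubePairs μ T K β
  rw [← lintegral_indicator hmeas,
    lintegral_prod _ (Measurable.indicator (by fun_prop) hmeas).aemeasurable]
  set c := gaussLayerConst * ((2 + μ univ ^ 2) * ENNReal.ofReal (24 * B ^ 2 * K)) with hc
  calc _ ≤ ∫⁻ p, c * (ENNReal.ofReal ((1 + |2 * ξ * p.1 + q.1|) ^ (-((1 - β) / 2))) *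
        ENNReal.ofReal ((1 + |2 * ξ * p.2 + q.2|) ^ (-((1 - β) / 2)))) ∂(μ.prod μ) := by
        refine lintegral_mono_ae ((ae_prod_norm_le hμB).mono fun p hp ↦ ?_)
        rw [hc, mul_assoc gaussLayerConst]
        refine le_trans (le_of_eq ?_) (setLIntegral_thinTubePairs_gaussWeight_planeDet_le (T := T)
          hB hμB hK hβ hβ1 hp ((2 * ξ) • p + q))
        have hfiber : MeasurableSet {p' | (p, p') ∈ thinTubePairs μ T K β} :=
          measurable_prodMk_left hmeas
        rw [← lintegral_indicator hfiber]
        rfl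
    _ = c * ((∫⁻ z, ENNReal.ofReal ((1 + |2 * ξ * z + q.1|) ^ (-((1 - β) / 2))) ∂μ) *
          ∫⁻ z, ENNReal.ofReal ((1 + |2 * ξ * z + q.2|) ^ (-((1 - β) / 2))) ∂μ) := by
        rw [← lintegral_prod_mul (by fun_prop) (by fun_prop), ← lintegral_const_mul _ (by fun_prop)]
    _ ≤ c * ((M * ENNReal.ofReal ((1 + |ξ| + |q.1|) ^ (-((1 - β) / 2)))) *
          (M * ENNReal.ofReal ((1 + |ξ| + |q.2|) ^ (-((1 - β) / 2))))) := by
        gcongr <;> exact hmoment ξ _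
    _ = _ := by
        rw [hc, ENNReal.ofReal_mul (by positivity)]
        ring

end ThinTubes

section QuadraticPhase

lemma lintegral_gaussWeight_sub_mul_gaussWeight_sub (y : ℝ × ℝ) {v : ℝ × ℝ} (hv : v.1 ≠ 0) :
    ∫⁻ ζ, gaussWeight (y.1 - 2 * ζ * v.1) * gaussWeight (y.2 - 2 * ζ * v.2) =
      gaussWeight (planeDet y v / √(v.1 ^ 2 + v.2 ^ 2)) *
        ENNReal.ofReal (√(2 * Real.pi) / (2 * √(v.1 ^ 2 + v.2 ^ 2))) := by
  have hnorm : 0 < v.1 ^ 2 + v.2 ^ 2 := by positivity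
  set r := √(v.1 ^ 2 + v.2 ^ 2)
  have : 0 < r := Real.sqrt_pos.mpr hnorm
  have hr2 : r ^ 2 = v.1 ^ 2 + v.2 ^ 2 := Real.sq_sqrt hnorm.le
  have hsquare (ζ : ℝ) : gaussWeight (y.1 - 2 * ζ * v.1) * gaussWeight (y.2 - 2 * ζ * v.2) =
      gaussWeight (planeDet y v / r) *
        gaussWeight ((2 * r) * ((y.1 * v.1 + y.2 * v.2) / (2 * r ^ 2) - ζ)) := by
    have hdecomp : (planeDet y v / r) ^ 2 +
        ((2 * r) * ((y.1 * v.1 + y.2 * v.2) / (2 * r ^ 2) - ζ)) ^ 2 =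
          (y.1 - 2 * ζ * v.1) ^ 2 + (y.2 - 2 * ζ * v.2) ^ 2 := by
      rw [planeDet, div_pow, mul_pow, mul_pow, hr2]
      field_simp
      ring
    unfold gaussWeight
    rw [← ENNReal.ofReal_mul (by positivity), ← ENNReal.ofReal_mul (by positivity),
      ← Real.exp_add, ← Real.exp_add]
    congr 2
    linarith
  simp_rw [hsquare]
  rw [lintegral_const_mul _ (by fun_prop), lintegral_gaussWeight_mul_sub (by positivity)]

lemma lintegral_gaussWeight_sub_mul_gaussWeight_sub_le {R T : ℝ} (hT : 0 < T) (y : ℝ × ℝ)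
    {v : ℝ × ℝ} (hvR : ‖v‖ ≤ 2 * R) (hvT : 1 / T ≤ |v.1|) :
    ∫⁻ ζ, gaussWeight (y.1 - 2 * ζ * v.1) * gaussWeight (y.2 - 2 * ζ * v.2) ≤
      ENNReal.ofReal (√(2 * Real.pi) * T) * gaussWeight (planeDet y v / (3 * R)) := by
  have hv₁ : 0 < |v.1| := (by positivity : 0 < 1 / T).trans_le hvT
  have hv : v.1 ≠ 0 := abs_pos.mp hv₁
  have hR : 0 < R := by linarith [norm_fst_le v, Real.norm_eq_abs v.1]
  set r := √(v.1 ^ 2 + v.2 ^ 2)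
  have hv₁r : |v.1| ≤ r := Real.le_sqrt_of_sq_le (by rw [sq_abs]; linarith [sq_nonneg v.2])
  have hrR : r ≤ 3 * R := by
    have h₁ : v.1 ^ 2 ≤ (2 * R) ^ 2 := sq_le_sq.mpr (by
      rw [abs_of_pos (by positivity : 0 < 2 * R)]; exact (norm_fst_le v).trans hvR)
    have h₂ : v.2 ^ 2 ≤ (2 * R) ^ 2 := sq_le_sq.mpr (by
      rw [abs_of_pos (by positivity : 0 < 2 * R)]; exact (norm_snd_le v).trans hvR)
    exact Real.sqrt_le_iff.mpr ⟨by positivity, by nlinarith⟩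
  have hr0 : 0 < r := hv₁.trans_le hv₁r
  rw [lintegral_gaussWeight_sub_mul_gaussWeight_sub y hv, mul_comm]
  refine mul_le_mul' (ENNReal.ofReal_le_ofReal ?_) (gaussWeight_le_gaussWeight ?_)
  · rw [div_eq_mul_inv, inv_eq_one_div]
    refine mul_le_mul_of_nonneg_left ?_ (by positivity)
    rw [div_le_comm₀ (by positivity) hT]
    linarith
  · rw [abs_div, abs_div, abs_of_pos hr0, abs_of_pos (by positivity : 0 < 3 * R)]
    gcongr

/-- The quadratic Fourier transform `∫ exp (i (ξ z ^ 2 + η z)) dμ(z)`. -/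
noncomputable def quadCharFun (μ : Measure ℝ) (ξ η : ℝ) : ℂ :=
  weightedCharFun μ (fun z ↦ Complex.exp (↑(ξ * z ^ 2) * Complex.I)) η

@[fun_prop]
lemma measurable_quadCharFun (μ : Measure ℝ) [SFinite μ] {α : Type*} [MeasurableSpace α]
    {f g : α → ℝ} (hf : Measurable f) (hg : Measurable g) :
    Measurable fun a ↦ quadCharFun μ (f a) (g a) := by
  have huncurry : Measurable fun q : ℝ × ℝ ↦ quadCharFun μ q.1 q.2 := by
    refine (StronglyMeasurable.integral_prod_right' (ν := μ) (f := fun p : (ℝ × ℝ) × ℝ ↦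
      Complex.exp (↑(p.1.1 * p.2 ^ 2) * Complex.I) *
        Complex.exp (↑(p.1.2 * p.2) * Complex.I)) ?_).measurable
    exact Measurable.stronglyMeasurable (by fun_prop)
  exact huncurry.comp (hf.prodMk hg)

/-- The quadratic phase `exp (i ξ z ^ 2)` with the growing weight `exp (z ^ 2 / 2)`: its transform
dominates `quadCharFun` pointwise after averaging over unit scale. -/
noncomputable def quadPhaseGrowth (ξ z : ℝ) : ℂ :=
  Complex.exp (↑(ξ * z ^ 2) * Complex.I) * (Real.exp (z ^ 2 / 2) : ℂ)

@[fun_prop]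
lemma measurable_quadPhaseGrowth (ξ : ℝ) : Measurable (quadPhaseGrowth ξ) := by
  unfold quadPhaseGrowth
  fun_prop

variable {μ : Measure ℝ} {B : ℝ}

lemma ae_norm_quadPhaseGrowth_le (hμB : ∀ᵐ z ∂μ, |z| ≤ B) (ξ : ℝ) :
    ∀ᵐ z ∂μ, ‖quadPhaseGrowth ξ z‖ ≤ Real.exp (B ^ 2 / 2) := by
  filter_upwards [hμB] with z hz
  rw [quadPhaseGrowth, norm_mul, Complex.norm_exp_ofReal_mul_I, one_mul, Complex.norm_real,
    Real.norm_of_nonneg (by positivity), Real.exp_le_exp]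
  have : z ^ 2 ≤ B ^ 2 := sq_le_sq' (abs_le.mp hz).1 (abs_le.mp hz).2
  linarith

lemma enorm_sq_quadCharFun_le [IsFiniteMeasure μ] (hμB : ∀ᵐ z ∂μ, |z| ≤ B) (ξ η : ℝ) :
    ‖quadCharFun μ ξ η‖ₑ ^ 2 ≤
      ∫⁻ x, ‖weightedCharFun μ (quadPhaseGrowth ξ) x‖ₑ ^ 2 * gaussWeight (x - η) := by
  refine enorm_sq_weightedCharFun_le (measurable_quadPhaseGrowth ξ)
    (.of_bound (by fun_prop) _ (ae_norm_quadPhaseGrowth_le hμB ξ)) (ae_of_all _ fun z ↦ ?_) η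
  rw [quadPhaseGrowth, mul_assoc, ← Complex.ofReal_mul, ← Real.exp_add,
    show z ^ 2 / 2 + -(z ^ 2) / 2 = 0 by ring]
  simp

/-- The energy of the frequencies `(ξ, ζ)`, integrated over `ζ`, at which the squared distances to
the two points of the pair `w` oscillate. -/
noncomputable def pairEnergy (μ : Measure ℝ) (ξ : ℝ) (w : (ℝ × ℝ) × (ℝ × ℝ)) : ℝ≥0∞ :=
  ∫⁻ ζ, ‖quadCharFun μ ξ (2 * ζ * (w.2 - w.1).1 - 2 * ξ * w.1.1)‖ₑ ^ 2 *
    ‖quadCharFun μ ξ (2 * ζ * (w.2 - w.1).2 - 2 * ξ * w.1.2)‖ₑ ^ 2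

@[fun_prop]
lemma measurable_pairEnergy (μ : Measure ℝ) [SFinite μ] {α : Type*} [MeasurableSpace α]
    {f : α → ℝ} {g : α → (ℝ × ℝ) × (ℝ × ℝ)} (hf : Measurable f) (hg : Measurable g) :
    Measurable fun a ↦ pairEnergy μ (f a) (g a) := by
  unfold pairEnergy
  exact Measurable.lintegral_prod_right' (f := fun q : α × ℝ ↦
    ‖quadCharFun μ (f q.1) (2 * q.2 * ((g q.1).2 - (g q.1).1).1 - 2 * f q.1 * (g q.1).1.1)‖ₑ ^ 2 *
      ‖quadCharFun μ (f q.1) (2 * q.2 * ((g q.1).2 - (g q.1).1).2 - 2 * f q.1 * (g q.1).1.2)‖ₑ ^ 2)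
    (by fun_prop)

lemma pairEnergy_le [IsFiniteMeasure μ] (hμB : ∀ᵐ z ∂μ, |z| ≤ B) {T : ℝ} (hT : 0 < T) (ξ : ℝ)
    {w : (ℝ × ℝ) × (ℝ × ℝ)} (hw₁ : ‖w.1‖ ≤ B) (hw₂ : ‖w.2‖ ≤ B) (hwT : 1 / T ≤ |w.2.1 - w.1.1|) :
    pairEnergy μ ξ w ≤ ∫⁻ q : ℝ × ℝ, ‖weightedCharFun μ (quadPhaseGrowth ξ) q.1‖ₑ ^ 2 *
      ‖weightedCharFun μ (quadPhaseGrowth ξ) q.2‖ₑ ^ 2 * (ENNReal.ofReal (√(2 * Real.pi) * T) *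
        gaussWeight (planeDet ((2 * ξ) • w.1 + q) (w.2 - w.1) / (3 * B))) := by
  set F : ℝ → ℝ≥0∞ := fun x ↦ ‖weightedCharFun μ (quadPhaseGrowth ξ) x‖ₑ ^ 2
  have hFm : Measurable F := by fun_prop
  set v := w.2 - w.1
  have hvB : ‖v‖ ≤ 2 * B := (norm_sub_le _ _).trans (by linarith)
  calc _ ≤ ∫⁻ ζ, (∫⁻ x, F x * gaussWeight (x - (2 * ζ * v.1 - 2 * ξ * w.1.1))) *
        ∫⁻ x, F x * gaussWeight (x - (2 * ζ * v.2 - 2 * ξ * w.1.2)) :=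
        lintegral_mono fun ζ ↦
          mul_le_mul' (enorm_sq_quadCharFun_le hμB ξ _) (enorm_sq_quadCharFun_le hμB ξ _)
    _ = ∫⁻ ζ, ∫⁻ q : ℝ × ℝ, F q.1 * F q.2 * (gaussWeight (((2 * ξ) • w.1 + q).1 - 2 * ζ * v.1) *
          gaussWeight (((2 * ξ) • w.1 + q).2 - 2 * ζ * v.2)) := by
        refine lintegral_congr fun ζ ↦ ?_
        rw [← lintegral_prod_mul (by fun_prop) (by fun_prop), ← Measure.volume_eq_prod]
        refine lintegral_congr fun q ↦ ?_
        rw [mul_mul_mul_comm]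
        congr 3 <;> simp only [Prod.fst_add, Prod.snd_add, Prod.smul_fst, Prod.smul_snd,
          smul_eq_mul] <;> ring
    _ = ∫⁻ q : ℝ × ℝ, F q.1 * F q.2 * ∫⁻ ζ, gaussWeight (((2 * ξ) • w.1 + q).1 - 2 * ζ * v.1) *
          gaussWeight (((2 * ξ) • w.1 + q).2 - 2 * ζ * v.2) := by
        rw [lintegral_lintegral_swap (by fun_prop)]
        exact lintegral_congr fun q ↦ lintegral_const_mul _ (by fun_prop)
    _ ≤ _ := lintegral_mono fun q ↦ mul_le_mul_right
        (lintegral_gaussWeight_sub_mul_gaussWeight_sub_le hT _ hvB hwT) _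

lemma IsFrostman.exists_lintegral_enorm_sq_weightedCharFun_quadPhaseGrowth_le [IsFiniteMeasure μ]
    {C : ℝ≥0∞} {s : ℝ} (hμ : IsFrostman μ C s) (hC : C ≠ ⊤) (hs : s ≤ 1)
    (hμB : ∀ᵐ z ∂μ, |z| ≤ B) {α : ℝ} (hsα : 1 - s < α) :
    ∃ D : ℝ≥0∞, D ≠ ⊤ ∧ ∀ ξ Q : ℝ, 1 ≤ Q →
      ∫⁻ x, ‖weightedCharFun μ (quadPhaseGrowth ξ) x‖ₑ ^ 2 *
        ENNReal.ofReal ((Q + |x|) ^ (-α)) ≤ D * ENNReal.ofReal (Q ^ (1 - s - α)) := by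
  obtain ⟨K, hK, hweight⟩ := exists_lintegral_mul_rpow_neg_le hsα (by linarith)
  have hconst := gaussLayerConst_ne_top
  refine ⟨K * (ENNReal.ofReal (√(2 * Real.pi)) * (ENNReal.ofReal (Real.exp (B ^ 2 / 2)) ^ 2 *
    (μ univ * (gaussLayerConst * C)))), by finiteness, fun ξ ↦ ?_⟩
  exact hweight _ _ (by fun_prop) fun Q hQ ↦
    hμ.lintegral_enorm_sq_weightedCharFun_mul_gaussWeight_le hs (measurable_quadPhaseGrowth ξ)
      (ae_norm_quadPhaseGrowth_le hμB ξ) (by linarith)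

lemma setLIntegral_thinTubePairs_pairEnergy_le [IsFiniteMeasure μ] (hμB : ∀ᵐ z ∂μ, |z| ≤ B)
    {T : ℝ} (hT : 0 < T) (K β ξ : ℝ) :
    ∫⁻ w in thinTubePairs μ T K β, pairEnergy μ ξ w ∂((μ.prod μ).prod (μ.prod μ)) ≤
      ∫⁻ q : ℝ × ℝ, ‖weightedCharFun μ (quadPhaseGrowth ξ) q.1‖ₑ ^ 2 *
        ‖weightedCharFun μ (quadPhaseGrowth ξ) q.2‖ₑ ^ 2 * (ENNReal.ofReal (√(2 * Real.pi) * T) *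
          ∫⁻ w in thinTubePairs μ T K β, gaussWeight (planeDet ((2 * ξ) • w.1 + q) (w.2 - w.1) /
            (3 * B)) ∂((μ.prod μ).prod (μ.prod μ))) := by
  set F : ℝ → ℝ≥0∞ := fun x ↦ ‖weightedCharFun μ (quadPhaseGrowth ξ) x‖ₑ ^ 2
  have : Measurable F := by fun_prop
  set c := ENNReal.ofReal (√(2 * Real.pi) * T)
  calc _ ≤ ∫⁻ w in thinTubePairs μ T K β, (∫⁻ q : ℝ × ℝ, F q.1 * F q.2 *
        (c * gaussWeight (planeDet ((2 * ξ) • w.1 + q) (w.2 - w.1) / (3 * B))))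
          ∂((μ.prod μ).prod (μ.prod μ)) := by
        refine lintegral_mono_ae ((ae_restrict_iff' (measurableSet_thinTubePairs μ T K β)).mpr ?_)
        filter_upwards [Measure.quasiMeasurePreserving_fst.ae (ae_prod_norm_le hμB),
          Measure.quasiMeasurePreserving_snd.ae (ae_prod_norm_le hμB)] with w hw₁ hw₂ hw
        exact pairEnergy_le hμB hT ξ hw₁ hw₂ hw.1
    _ = _ := by
        rw [lintegral_lintegral_swap (by fun_prop)]
        refine lintegral_congr fun q ↦ ?_
        rw [lintegral_const_mul _ (by fun_prop), lintegral_const_mul _ (by fun_prop)]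

lemma IsFrostman.exists_setLIntegral_thinTubePairs_pairEnergy_le [IsFiniteMeasure μ] {C : ℝ≥0∞}
    {s : ℝ} (hμ : IsFrostman μ C s) (hC : C ≠ ⊤) (hs : s ≤ 1) (hB : 1 ≤ B)
    (hμB : ∀ᵐ z ∂μ, |z| ≤ B) {β : ℝ} (hβ : 0 ≤ β) (hβs : β < 2 * s - 1) :
    ∃ D : ℝ≥0∞, D ≠ ⊤ ∧ ∀ T K ξ : ℝ, 0 < T → 1 ≤ K →
      ∫⁻ w in thinTubePairs μ T K β, pairEnergy μ ξ w ∂((μ.prod μ).prod (μ.prod μ)) ≤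
        D * ENNReal.ofReal (T * K) * ENNReal.ofReal ((1 + |ξ|) ^ (β - (2 * s - 1))) := by
  obtain ⟨D₁, hD₁, hthin⟩ := hμ.exists_setLIntegral_thinTubePairs_gaussWeight_le hC hB hμB hβ
    (by linarith) (by linarith)
  obtain ⟨D₂, hD₂, hmoment⟩ :=
    hμ.exists_lintegral_enorm_sq_weightedCharFun_quadPhaseGrowth_le hC hs hμB
      (α := (1 - β) / 2) (by linarith)
  refine ⟨ENNReal.ofReal (√(2 * Real.pi)) * D₁ * D₂ ^ 2, by finiteness, fun T K ξ hT hK ↦ ?_⟩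
  set c := ENNReal.ofReal (√(2 * Real.pi) * T) with hc
  set F : ℝ → ℝ≥0∞ := fun x ↦ ‖weightedCharFun μ (quadPhaseGrowth ξ) x‖ₑ ^ 2
  have hFm : Measurable F := by fun_prop
  set m : ℝ → ℝ≥0∞ := fun x ↦ ENNReal.ofReal ((1 + |ξ| + |x|) ^ (-((1 - β) / 2)))
  have hFmoment := hmoment ξ (1 + |ξ|) (by linarith [abs_nonneg ξ])
  calc _ ≤ ∫⁻ q : ℝ × ℝ, F q.1 * F q.2 * (c * (D₁ * ENNReal.ofReal K * (m q.1 * m q.2))) :=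
        (setLIntegral_thinTubePairs_pairEnergy_le hμB hT K β ξ).trans <|
          lintegral_mono fun q ↦ mul_le_mul_right (mul_le_mul_right (hthin T K ξ q hK) _) _
    _ = c * (D₁ * ENNReal.ofReal K) * ((∫⁻ x, F x * m x) * ∫⁻ x, F x * m x) := by
        rw [← lintegral_prod_mul (by fun_prop) (by fun_prop), ← lintegral_const_mul _ (by fun_prop),
          ← Measure.volume_eq_prod]
        refine lintegral_congr fun q ↦ ?_
        ring
    _ ≤ c * (D₁ * ENNReal.ofReal K) *
          ((D₂ * ENNReal.ofReal ((1 + |ξ|) ^ (1 - s - (1 - β) / 2))) *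
            (D₂ * ENNReal.ofReal ((1 + |ξ|) ^ (1 - s - (1 - β) / 2)))) :=
        mul_le_mul_right (mul_le_mul' hFmoment hFmoment) _
    _ = _ := by
        rw [show β - (2 * s - 1) = (1 - s - (1 - β) / 2) + (1 - s - (1 - β) / 2) by ring,
          Real.rpow_add (by positivity), ENNReal.ofReal_mul (by positivity), hc,
          ENNReal.ofReal_mul (by positivity), ENNReal.ofReal_mul (by positivity)]
        ring

end QuadraticPhase

section Cells

variable {α β : Type*} [MeasurableSpace α] [MeasurableSpace β]

lemma ennreal_sq_sum_le_card_mul_sum_sq {ι : Type*} (I : Finset ι) (f : ι → ℝ≥0∞) :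
    (∑ i ∈ I, f i) ^ 2 ≤ I.card * ∑ i ∈ I, f i ^ 2 := by
  have h := ENNReal.rpow_sum_le_const_mul_sum_rpow I f (p := 2) (by norm_num)
  simpa [show (2 : ℝ) - 1 = 1 by norm_num] using h

lemma sq_measure_preimage_finset_le {ι : Type*} [MeasurableSpace ι] [MeasurableSingletonClass ι]
    (Ω : Measure α) [SFinite Ω] {φ : α → ι} (hφ : Measurable φ) (I : Finset ι) :
    Ω (φ ⁻¹' I) ^ 2 ≤ I.card * (Ω.prod Ω) {w | φ w.1 = φ w.2} := by
  classical
  have hfiber (i : ι) : MeasurableSet (φ ⁻¹' {i}) := hφ (measurableSet_singleton i)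
  set ψ : α × α → ι × ι := Prod.map φ φ with hψ
  have hψfiber (i j : ι) : ψ ⁻¹' {(i, j)} = (φ ⁻¹' {i}) ×ˢ (φ ⁻¹' {j}) := by
    rw [← singleton_prod_singleton, hψ, preimage_prod_map_prod]
  rw [← sum_measure_preimage_singleton I fun i _ ↦ hfiber i]
  refine (ennreal_sq_sum_le_card_mul_sum_sq I _).trans (mul_le_mul_right ?_ _)
  calc ∑ i ∈ I, Ω (φ ⁻¹' {i}) ^ 2 = ∑ b ∈ I.diag, (Ω.prod Ω) (ψ ⁻¹' {b}) := by
        simp_rw [Finset.sum_diag, hψfiber, Measure.prod_prod, sq]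
    _ = (Ω.prod Ω) (ψ ⁻¹' I.diag) := sum_measure_preimage_singleton _ fun b _ ↦ by
        rw [← Prod.mk.eta (p := b), hψfiber]
        exact (hfiber _).prod (hfiber _)
    _ ≤ _ := measure_mono fun w hw ↦ (Finset.mem_diag.mp hw).2

lemma abs_sub_le_of_floor_div_eq {δ x y : ℝ} (hδ : 0 < δ) (h : ⌊x / δ⌋ = ⌊y / δ⌋) :
    |x - y| ≤ δ := by
  have hlt := Int.abs_sub_lt_one_of_floor_eq_floor h
  rw [← sub_div, abs_div, abs_of_pos hδ, div_lt_one hδ] at hlt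
  exact hlt.le

lemma sq_measure_floor_div_mem_le (Ω : Measure α) [SFinite Ω] {f g : α → ℝ} (hf : Measurable f)
    (hg : Measurable g) {δ : ℝ} (hδ : 0 < δ) (I : Finset ℤ) :
    Ω {ω | ⌊f ω / δ⌋ ∈ I ∧ ⌊g ω / δ⌋ ∈ I} ^ 2 ≤
      (I.card : ℝ≥0∞) ^ 2 * (Ω.prod Ω) {w | |f w.1 - f w.2| ≤ δ ∧ |g w.1 - g w.2| ≤ δ} := by
  have h := sq_measure_preimage_finset_le Ω
    ((hf.div_const δ).floor.prodMk (hg.div_const δ).floor) (I ×ˢ I)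
  rw [Finset.coe_product, Finset.card_product, Nat.cast_mul, ← sq] at h
  refine h.trans (mul_le_mul_right (measure_mono fun w hw ↦ ?_) _)
  obtain ⟨hfw, hgw⟩ := Prod.mk.inj hw
  exact ⟨abs_sub_le_of_floor_div_eq hδ hfw, abs_sub_le_of_floor_div_eq hδ hgw⟩

lemma sq_measure_prod_le (P : Measure α) [SFinite P] (Ω : Measure β) [SFinite Ω]
    {A : Set (α × β)} (hA : MeasurableSet A) :
    (P.prod Ω) A ^ 2 ≤
      Ω univ * ∫⁻ w, Ω {ω | (w.1, ω) ∈ A ∧ (w.2, ω) ∈ A} ∂(P.prod P) := by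
  have hpair : MeasurableSet {q : (α × α) × β | (q.1.1, q.2) ∈ A ∧ (q.1.2, q.2) ∈ A} :=
    ((by fun_prop : Measurable fun q : (α × α) × β ↦ (q.1.1, q.2)) hA).inter
      ((by fun_prop : Measurable fun q : (α × α) × β ↦ (q.1.2, q.2)) hA)
  rw [Measure.prod_apply_symm hA]
  calc _ ≤ Ω univ * ∫⁻ y, P ((fun x ↦ (x, y)) ⁻¹' A) ^ 2 ∂Ω :=
        sq_lintegral_le Ω (measurable_measure_prodMk_right hA).aemeasurable
    _ = Ω univ * ∫⁻ y, (P.prod P) ((fun w ↦ (w, y)) ⁻¹'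
          {q : (α × α) × β | (q.1.1, q.2) ∈ A ∧ (q.1.2, q.2) ∈ A}) ∂Ω := by
        congr! 3 with y
        rw [sq, ← Measure.prod_prod]
        rfl
    _ = _ := by
        rw [← Measure.prod_apply_symm hpair, Measure.prod_apply hpair]
        rfl

end Cells

section SimultaneousCoincidence

variable {Ω : Type*} [MeasurableSpace Ω]

lemma lintegral_enorm_integral_exp_sq (P : Measure Ω) [IsFiniteMeasure P] {f g : Ω → ℝ}
    (hf : Measurable f) (hg : Measurable g) (Q : ℝ) :
    ∫⁻ θ, ‖∫ ω, Complex.exp (↑(θ.1 * f ω + θ.2 * g ω) * Complex.I) ∂P‖ₑ ^ 2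
        ∂((centeredGaussian Q).prod (centeredGaussian Q)) =
      ∫⁻ w, gaussWeight (Q * (f w.1 - f w.2)) * gaussWeight (Q * (g w.1 - g w.2)) ∂(P.prod P) := by
  rw [lintegral_enorm_integral_sq_of_kernel ((centeredGaussian Q).prod (centeredGaussian Q)) P
    (Φ := fun θ ω ↦ Complex.exp (↑(θ.1 * f ω + θ.2 * g ω) * Complex.I)) (B := 1)
    (k := fun w ↦ Real.exp (-(Q * (f w.1 - f w.2)) ^ 2 / 2) *
      Real.exp (-(Q * (g w.1 - g w.2)) ^ 2 / 2))]
  · refine lintegral_congr fun w ↦ ?_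
    rw [ENNReal.ofReal_mul (by positivity), gaussWeight, gaussWeight]
  · rw [Function.uncurry_def]
    fun_prop
  · exact fun θ ω ↦ (Complex.norm_exp_ofReal_mul_I _).le
  · exact fun w ↦ by positivity
  · intro w
    have hsplit (θ : ℝ × ℝ) : Complex.exp (↑(θ.1 * f w.1 + θ.2 * g w.1) * Complex.I) *
        (starRingEnd ℂ) (Complex.exp (↑(θ.1 * f w.2 + θ.2 * g w.2) * Complex.I)) =
        Complex.exp (↑(θ.1 * (f w.1 - f w.2)) * Complex.I) *
          Complex.exp (↑(θ.2 * (g w.1 - g w.2)) * Complex.I) := by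
      rw [conj_exp_mul_I, ← Complex.exp_add, ← Complex.exp_add]
      push_cast
      ring_nf
    simp_rw [hsplit]
    rw [integral_prod_mul (fun η : ℝ ↦ Complex.exp (↑(η * (f w.1 - f w.2)) * Complex.I))
      (fun η : ℝ ↦ Complex.exp (↑(η * (g w.1 - g w.2)) * Complex.I)),
      integral_exp_mul_I_centeredGaussian, integral_exp_mul_I_centeredGaussian]
    refine Eq.trans ?_ (Complex.ofReal_mul _ _).symm
    push_cast
    rfl
  · refine .of_bound (by fun_prop) 1 (ae_of_all _ fun w ↦ ?_)
    rw [Real.norm_of_nonneg (by positivity)]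
    exact mul_le_one₀ (Real.exp_le_one_iff.mpr (by nlinarith [sq_nonneg (Q * (f w.1 - f w.2))]))
      (by positivity)
      (Real.exp_le_one_iff.mpr (by nlinarith [sq_nonneg (Q * (g w.1 - g w.2))]))

lemma lintegral_centeredGaussian_inv_le {δ : ℝ} (hδ : 0 < δ) {f : ℝ → ℝ≥0∞} (hf : Measurable f) :
    ∫⁻ x, f x ∂(centeredGaussian δ⁻¹) ≤ ENNReal.ofReal δ * ∫⁻ x, gaussWeight (δ * x) * f x := by
  have hsqrt : 1 ≤ √(2 * Real.pi) := Real.one_le_sqrt.mpr (by linarith [Real.pi_gt_three])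
  have h := lintegral_mul_gaussWeight_div (inv_pos.mpr hδ) hf
  simp_rw [div_inv_eq_mul, mul_comm _ δ, mul_comm (f _)] at h
  rw [h, ← mul_assoc, ← ENNReal.ofReal_mul hδ.le, mul_inv_cancel_left₀ hδ.ne']
  exact le_mul_of_one_le_left zero_le (ENNReal.one_le_ofReal.mpr hsqrt)

lemma measure_abs_sub_le_two_mul_le_lintegral_gaussWeight (Q : Measure (Ω × Ω)) {f g : Ω → ℝ}
    (hf : Measurable f) (hg : Measurable g) {δ : ℝ} (hδ : 0 < δ) :
    Q {w | |f w.1 - f w.2| ≤ 2 * δ ∧ |g w.1 - g w.2| ≤ 2 * δ} ≤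
      ENNReal.ofReal (Real.exp 4) * ∫⁻ w, gaussWeight (δ⁻¹ * (f w.1 - f w.2)) *
        gaussWeight (δ⁻¹ * (g w.1 - g w.2)) ∂Q := by
  have hscale {x : ℝ} (hx : |x| ≤ 2 * δ) :
      1 ≤ ENNReal.ofReal (Real.exp 2) * gaussWeight (δ⁻¹ * x) := by
    have h := one_le_exp_mul_gaussWeight (x := δ⁻¹ * x) (b := 2) (by
      rwa [abs_mul, abs_of_pos (inv_pos.mpr hδ), inv_mul_le_iff₀ hδ, mul_comm])
    norm_num at h
    exact h
  have hset : MeasurableSet {w : Ω × Ω | |f w.1 - f w.2| ≤ 2 * δ ∧ |g w.1 - g w.2| ≤ 2 * δ} :=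
    ((by fun_prop : Measurable fun w : Ω × Ω ↦ |f w.1 - f w.2|) measurableSet_Iic).inter
      ((by fun_prop : Measurable fun w : Ω × Ω ↦ |g w.1 - g w.2|) measurableSet_Iic)
  rw [← lintegral_const_mul _ (by fun_prop), ← lintegral_indicator_one hset]
  refine lintegral_mono (indicator_le fun w hw ↦ ?_)
  refine (one_le_mul (hscale hw.1) (hscale hw.2)).trans_eq ?_
  rw [mul_mul_mul_comm, ← ENNReal.ofReal_mul (by positivity), ← Real.exp_add]
  norm_num

lemma measure_abs_sub_le_two_mul_le (P : Measure Ω) [IsFiniteMeasure P] {f g : Ω → ℝ}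
    (hf : Measurable f) (hg : Measurable g) {δ : ℝ} (hδ : 0 < δ) :
    (P.prod P) {w | |f w.1 - f w.2| ≤ 2 * δ ∧ |g w.1 - g w.2| ≤ 2 * δ} ≤
      ENNReal.ofReal (Real.exp 4 * δ ^ 2) * ∫⁻ ξ, gaussWeight (δ * ξ) *
        ∫⁻ ζ, ‖∫ ω, Complex.exp (↑(ξ * f ω + ζ * g ω) * Complex.I) ∂P‖ₑ ^ 2 := by
  set G : ℝ × ℝ → ℝ≥0∞ := fun θ ↦
    ‖∫ ω, Complex.exp (↑(θ.1 * f ω + θ.2 * g ω) * Complex.I) ∂P‖ₑ ^ 2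
  have hGm : Measurable G := by
    refine Measurable.pow_const (StronglyMeasurable.enorm ?_) 2
    refine StronglyMeasurable.integral_prod_right' (ν := P) (f := fun q : (ℝ × ℝ) × Ω ↦
      Complex.exp (↑(q.1.1 * f q.2 + q.1.2 * g q.2) * Complex.I)) ?_
    exact Measurable.stronglyMeasurable (by fun_prop)
  calc _ ≤ ENNReal.ofReal (Real.exp 4) * ∫⁻ w, gaussWeight (δ⁻¹ * (f w.1 - f w.2)) *
        gaussWeight (δ⁻¹ * (g w.1 - g w.2)) ∂(P.prod P) :=
        measure_abs_sub_le_two_mul_le_lintegral_gaussWeight _ hf hg hδ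
    _ = ENNReal.ofReal (Real.exp 4) *
          ∫⁻ ξ, ∫⁻ ζ, G (ξ, ζ) ∂(centeredGaussian δ⁻¹) ∂(centeredGaussian δ⁻¹) := by
        rw [← lintegral_enorm_integral_exp_sq P hf hg, lintegral_prod _ hGm.aemeasurable]
    _ ≤ ENNReal.ofReal (Real.exp 4) * (ENNReal.ofReal δ *
          ∫⁻ ξ, gaussWeight (δ * ξ) * (ENNReal.ofReal δ * ∫⁻ ζ, G (ξ, ζ))) := by
        refine mul_le_mul_right ((lintegral_centeredGaussian_inv_le hδ
          hGm.lintegral_prod_right').trans ?_) _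
        refine mul_le_mul_right (lintegral_mono fun ξ ↦ mul_le_mul_right ?_ _) _
        refine (lintegral_centeredGaussian_inv_le hδ
          (hGm.comp measurable_prodMk_left)).trans (mul_le_mul_right (lintegral_mono fun ζ ↦ ?_) _)
        exact mul_le_of_le_one_left' (gaussWeight_le_one _)
    _ = _ := by
        simp_rw [mul_left_comm _ (ENNReal.ofReal δ)]
        rw [lintegral_const_mul' _ _ (by finiteness), ENNReal.ofReal_mul (by positivity), sq,
          ENNReal.ofReal_mul hδ.le]
        ring

end SimultaneousCoincidence

section ShiftedSqDist

/-- The squared distance `|z - p|²` between two points `z = ω.1` and `p` of the plane, shifted by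
`t = ω.2`; in the application `t` is the contribution of the remaining coordinates. -/
def shiftedSqDist (p : ℝ × ℝ) (ω : (ℝ × ℝ) × ℝ) : ℝ :=
  (ω.1.1 - p.1) ^ 2 + (ω.1.2 - p.2) ^ 2 + ω.2

@[fun_prop]
lemma measurable_shiftedSqDist {α : Type*} [MeasurableSpace α] {p : α → ℝ × ℝ}
    {ω : α → (ℝ × ℝ) × ℝ} (hp : Measurable p) (hω : Measurable ω) :
    Measurable fun x ↦ shiftedSqDist (p x) (ω x) := by
  unfold shiftedSqDist
  fun_prop

variable (μ κ : Measure ℝ)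

lemma enorm_sq_integral_exp_shiftedSqDist [SFinite μ] [SFinite κ] (p p' : ℝ × ℝ) (ξ ζ : ℝ) :
    ‖∫ ω, Complex.exp (↑(ξ * shiftedSqDist p ω + ζ * (shiftedSqDist p ω - shiftedSqDist p' ω)) *
        Complex.I) ∂((μ.prod μ).prod κ)‖ₑ ^ 2 =
      ‖charFun κ ξ‖ₑ ^ 2 * (‖quadCharFun μ ξ (2 * ζ * (p' - p).1 - 2 * ξ * p.1)‖ₑ ^ 2 *
        ‖quadCharFun μ ξ (2 * ζ * (p' - p).2 - 2 * ξ * p.2)‖ₑ ^ 2) := by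
  set c : ℝ := ξ * (p.1 ^ 2 + p.2 ^ 2) + ζ * (p.1 ^ 2 + p.2 ^ 2 - p'.1 ^ 2 - p'.2 ^ 2) with hc
  set η₁ : ℝ := 2 * ζ * (p' - p).1 - 2 * ξ * p.1 with hη₁
  set η₂ : ℝ := 2 * ζ * (p' - p).2 - 2 * ξ * p.2 with hη₂
  set phase : ℝ → ℝ → ℂ := fun η z ↦
    Complex.exp (↑(ξ * z ^ 2) * Complex.I) * Complex.exp (↑(η * z) * Complex.I) with hphase
  have hsplit (ω : (ℝ × ℝ) × ℝ) :
      Complex.exp (↑(ξ * shiftedSqDist p ω + ζ * (shiftedSqDist p ω - shiftedSqDist p' ω)) *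
        Complex.I) = Complex.exp (↑c * Complex.I) *
          (phase η₁ ω.1.1 * phase η₂ ω.1.2 * (1 * Complex.exp (↑(ξ * ω.2) * Complex.I))) := by
    simp only [hphase, ← Complex.exp_add, one_mul, hc, hη₁, hη₂, shiftedSqDist, Prod.fst_sub,
      Prod.snd_sub]
    push_cast
    ring_nf
  simp_rw [hsplit]
  rw [integral_const_mul, integral_prod_mul (fun z : ℝ × ℝ ↦ phase η₁ z.1 * phase η₂ z.2)
    (fun t : ℝ ↦ 1 * Complex.exp (↑(ξ * t) * Complex.I)), integral_prod_mul, ← weightedCharFun_one,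
    enorm_mul, enorm_mul, enorm_mul, ← ofReal_norm (Complex.exp _), Complex.norm_exp_ofReal_mul_I,
    ENNReal.ofReal_one, one_mul, mul_comm, mul_pow, mul_pow]
  rfl

lemma measure_abs_shiftedSqDist_sub_le [IsFiniteMeasure μ] [IsFiniteMeasure κ]
    (w : (ℝ × ℝ) × (ℝ × ℝ)) {δ : ℝ} (hδ : 0 < δ) :
    (((μ.prod μ).prod κ).prod ((μ.prod μ).prod κ))
        {x | |shiftedSqDist w.1 x.1 - shiftedSqDist w.1 x.2| ≤ δ ∧
          |shiftedSqDist w.2 x.1 - shiftedSqDist w.2 x.2| ≤ δ} ≤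
      ENNReal.ofReal (Real.exp 4 * δ ^ 2) *
        ∫⁻ ξ, gaussWeight (δ * ξ) * (‖charFun κ ξ‖ₑ ^ 2 * pairEnergy μ ξ w) := by
  have h := measure_abs_sub_le_two_mul_le ((μ.prod μ).prod κ)
    (f := shiftedSqDist w.1) (g := fun ω ↦ shiftedSqDist w.1 ω - shiftedSqDist w.2 ω)
    (by fun_prop) (by fun_prop) hδ
  have hpair (ξ : ℝ) : ∫⁻ ζ, ‖∫ ω, Complex.exp (↑(ξ * shiftedSqDist w.1 ω +
      ζ * (shiftedSqDist w.1 ω - shiftedSqDist w.2 ω)) * Complex.I) ∂((μ.prod μ).prod κ)‖ₑ ^ 2 =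
        ‖charFun κ ξ‖ₑ ^ 2 * pairEnergy μ ξ w := by
    simp_rw [enorm_sq_integral_exp_shiftedSqDist]
    exact lintegral_const_mul' _ _ (by finiteness)
  simp_rw [hpair] at h
  refine le_trans (measure_mono ?_) h
  rintro x ⟨hx₁, hx₂⟩
  refine ⟨hx₁.trans (by linarith), ?_⟩
  rw [sub_sub_sub_comm]
  exact (abs_sub _ _).trans (by linarith)

end ShiftedSqDist

section CoincidenceBound

lemma gaussWeight_mul_rpow_neg_le {Q : ℝ} (hQ : 0 < Q) {θ : ℝ} (hθ : 0 ≤ θ) (δ ξ : ℝ) :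
    gaussWeight (δ * ξ) * ENNReal.ofReal ((1 + |ξ|) ^ (-θ)) ≤
      ENNReal.ofReal (Real.exp (1 ^ 2 / 2)) * gaussWeight (ξ / Q) +
        ENNReal.ofReal (Q ^ (-θ)) * gaussWeight (δ * ξ) := by
  rcases le_or_gt |ξ| Q with hξ | hξ
  · refine le_add_right ((mul_le_one' (gaussWeight_le_one _) (ENNReal.ofReal_le_one.mpr ?_)).trans
      (one_le_exp_mul_gaussWeight ?_))
    · exact Real.rpow_le_one_of_one_le_of_nonpos (by linarith [abs_nonneg ξ]) (by linarith)
    · rwa [abs_div, abs_of_pos hQ, div_le_one hQ]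
  · rw [mul_comm]
    refine le_add_left (mul_le_mul_left (ENNReal.ofReal_le_ofReal ?_) _)
    exact Real.rpow_le_rpow_of_nonpos hQ (by linarith) (by linarith)

lemma IsFrostman.exists_lintegral_enorm_sq_charFun_mul_le {κ : Measure ℝ} [IsFiniteMeasure κ]
    {C : ℝ≥0∞} (hC : C ≠ ⊤) {s : ℝ} (hs : s ≤ 1) (hκ : IsFrostman κ C s) {θ l : ℝ} (hθ : 0 ≤ θ)
    (hl : l * (1 - s + θ) ≤ 1 - s) :
    ∃ D : ℝ≥0∞, D ≠ ⊤ ∧ ∀ δ : ℝ, 0 < δ → δ ≤ 1 →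
      ∫⁻ ξ, gaussWeight (δ * ξ) * (‖charFun κ ξ‖ₑ ^ 2 * ENNReal.ofReal ((1 + |ξ|) ^ (-θ))) ≤
        D * ENNReal.ofReal (δ ^ (s - 1 + l * θ)) := by
  obtain ⟨L, hL, hκL⟩ : ∃ L : ℝ≥0∞, L ≠ ⊤ ∧ ∀ Q : ℝ, 0 < Q →
      ∫⁻ ξ, ‖charFun κ ξ‖ₑ ^ 2 * gaussWeight (ξ / Q) ≤ L * ENNReal.ofReal (Q ^ (1 - s)) := by
    refine ⟨_, ?_, fun Q hQ ↦ by
      simpa only [weightedCharFun_one] using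
        hκ.lintegral_enorm_sq_weightedCharFun_mul_gaussWeight_le hs (a := fun _ ↦ 1)
          measurable_const (c := 1) (ae_of_all _ fun _ ↦ by simp) hQ⟩
    have := gaussLayerConst_ne_top
    finiteness
  set c : ℝ≥0∞ := ENNReal.ofReal (Real.exp (1 ^ 2 / 2))
  have : Measurable (charFun κ) := measurable_charFun
  refine ⟨c * L + L, by finiteness, fun δ hδ hδ1 ↦ ?_⟩
  set Q : ℝ := δ ^ (-l) with hQ
  have hQ0 : 0 < Q := by positivity
  have hlow : Q ^ (1 - s) ≤ δ ^ (s - 1 + l * θ) := by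
    rw [hQ, ← Real.rpow_mul hδ.le]
    exact Real.rpow_le_rpow_of_exponent_ge hδ hδ1 (by linarith)
  have hhigh : Q ^ (-θ) * δ⁻¹ ^ (1 - s) = δ ^ (s - 1 + l * θ) := by
    rw [hQ, ← Real.rpow_mul hδ.le, Real.inv_rpow hδ.le, ← Real.rpow_neg hδ.le, ← Real.rpow_add hδ]
    ring_nf
  calc _ ≤ ∫⁻ ξ, (c * (‖charFun κ ξ‖ₑ ^ 2 * gaussWeight (ξ / Q)) +
          ENNReal.ofReal (Q ^ (-θ)) * (‖charFun κ ξ‖ₑ ^ 2 * gaussWeight (ξ / δ⁻¹))) := by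
        refine lintegral_mono fun ξ ↦ ?_
        rw [mul_left_comm, div_inv_eq_mul, mul_comm ξ δ, mul_left_comm c, mul_left_comm _ (_ ^ 2),
          ← mul_add]
        exact mul_le_mul_right (gaussWeight_mul_rpow_neg_le hQ0 hθ δ ξ) _
    _ = c * (∫⁻ ξ, ‖charFun κ ξ‖ₑ ^ 2 * gaussWeight (ξ / Q)) +
          ENNReal.ofReal (Q ^ (-θ)) * ∫⁻ ξ, ‖charFun κ ξ‖ₑ ^ 2 * gaussWeight (ξ / δ⁻¹) := by
        rw [lintegral_add_left (by fun_prop), lintegral_const_mul _ (by fun_prop),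
          lintegral_const_mul _ (by fun_prop)]
    _ ≤ c * (L * ENNReal.ofReal (Q ^ (1 - s))) +
          ENNReal.ofReal (Q ^ (-θ)) * (L * ENNReal.ofReal (δ⁻¹ ^ (1 - s))) :=
        add_le_add (mul_le_mul_right (hκL Q hQ0) _)
          (mul_le_mul_right (hκL δ⁻¹ (inv_pos.mpr hδ)) _)
    _ ≤ c * (L * ENNReal.ofReal (δ ^ (s - 1 + l * θ))) +
          L * ENNReal.ofReal (δ ^ (s - 1 + l * θ)) := by
        rw [mul_left_comm (ENNReal.ofReal (Q ^ (-θ))), ← ENNReal.ofReal_mul (by positivity), hhigh]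
        exact add_le_add_left
          (mul_le_mul_right (mul_le_mul_right (ENNReal.ofReal_le_ofReal hlow) _) _) _
    _ = _ := by ring

variable {μ κ : Measure ℝ} [IsFiniteMeasure μ] [IsFiniteMeasure κ] {C C' : ℝ≥0∞} {s B β l : ℝ}

lemma IsFrostman.exists_setLIntegral_thinTubePairs_coincidence_le (hμ : IsFrostman μ C s)
    (hκ : IsFrostman κ C' s) (hC : C ≠ ⊤) (hC' : C' ≠ ⊤) (hs : s ≤ 1) (hB : 1 ≤ B)
    (hμB : ∀ᵐ z ∂μ, |z| ≤ B) (hβ : 0 ≤ β) (hβs : β < 2 * s - 1) (hl : l * (s - β) ≤ 1 - s) :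
    ∃ D : ℝ≥0∞, D ≠ ⊤ ∧ ∀ T K δ : ℝ, 0 < T → 1 ≤ K → 0 < δ → δ ≤ 1 →
      ∫⁻ w in thinTubePairs μ T K β, (((μ.prod μ).prod κ).prod ((μ.prod μ).prod κ))
        {x | |shiftedSqDist w.1 x.1 - shiftedSqDist w.1 x.2| ≤ δ ∧
          |shiftedSqDist w.2 x.1 - shiftedSqDist w.2 x.2| ≤ δ} ∂((μ.prod μ).prod (μ.prod μ)) ≤
      D * ENNReal.ofReal (T * K * δ ^ (1 + s + l * (2 * s - 1 - β))) := by
  obtain ⟨D₁, hD₁, henergy⟩ :=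
    hμ.exists_setLIntegral_thinTubePairs_pairEnergy_le hC hs hB hμB hβ hβs
  obtain ⟨D₂, hD₂, hmoment⟩ := hκ.exists_lintegral_enorm_sq_charFun_mul_le hC' hs
    (θ := 2 * s - 1 - β) (l := l) (by linarith) (by linarith)
  refine ⟨ENNReal.ofReal (Real.exp 4) * D₁ * D₂, by finiteness, fun T K δ hT hK hδ hδ1 ↦ ?_⟩
  have : Measurable (charFun κ) := measurable_charFun
  set ν := ((μ.prod μ).prod (μ.prod μ)).restrict (thinTubePairs μ T K β)
  set a := ENNReal.ofReal (Real.exp 4 * δ ^ 2) with ha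
  set b := D₁ * ENNReal.ofReal (T * K) with hb
  calc _ ≤ ∫⁻ w, a * (∫⁻ ξ, gaussWeight (δ * ξ) * (‖charFun κ ξ‖ₑ ^ 2 * pairEnergy μ ξ w)) ∂ν :=
        lintegral_mono fun w ↦ measure_abs_shiftedSqDist_sub_le μ κ w hδ
    _ = a * ∫⁻ ξ, gaussWeight (δ * ξ) * (‖charFun κ ξ‖ₑ ^ 2 * ∫⁻ w, pairEnergy μ ξ w ∂ν) := by
        rw [lintegral_const_mul' _ _ (by finiteness), lintegral_lintegral_swap (by fun_prop)]
        congr! 3 with ξ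
        rw [lintegral_const_mul _ (by fun_prop), lintegral_const_mul _ (by fun_prop)]
    _ ≤ a * ∫⁻ ξ, b * (gaussWeight (δ * ξ) *
          (‖charFun κ ξ‖ₑ ^ 2 * ENNReal.ofReal ((1 + |ξ|) ^ (-(2 * s - 1 - β))))) := by
        refine mul_le_mul_right (lintegral_mono fun ξ ↦ ?_) _
        rw [mul_left_comm b, mul_left_comm b, neg_sub]
        exact mul_le_mul_right (mul_le_mul_right (henergy T K ξ hT hK) _) _
    _ ≤ a * (b * (D₂ * ENNReal.ofReal (δ ^ (s - 1 + l * (2 * s - 1 - β))))) := by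
        rw [lintegral_const_mul' _ _ (by finiteness)]
        exact mul_le_mul_right (mul_le_mul_right (hmoment δ hδ hδ1) _) _
    _ = _ := by
        have hexp : δ ^ (1 + s + l * (2 * s - 1 - β)) =
            δ ^ 2 * δ ^ (s - 1 + l * (2 * s - 1 - β)) := by
          rw [← Real.rpow_two, ← Real.rpow_add hδ]
          ring_nf
        rw [hexp, ENNReal.ofReal_mul (by positivity),
          ENNReal.ofReal_mul (p := δ ^ 2) (by positivity), ha, hb,
          ENNReal.ofReal_mul (by positivity)]
        ring

end CoincidenceBound

section ShiftedSqDistLaw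

lemma lintegral_measure_floor_div_mem_le {α β : Type*} [MeasurableSpace α] [MeasurableSpace β]
    (ν : Measure (α × α)) (Ω : Measure β) [SFinite Ω] {f : α → β → ℝ}
    (hf : Measurable (Function.uncurry f)) {δ : ℝ} (hδ : 0 < δ) (I : Finset ℤ) {D : ℝ≥0∞} {a : ℝ}
    (ha : 0 ≤ a)
    (hν : ∫⁻ w, (Ω.prod Ω) {x | |f w.1 x.1 - f w.1 x.2| ≤ δ ∧ |f w.2 x.1 - f w.2 x.2| ≤ δ} ∂ν ≤
      D * ENNReal.ofReal a) :
    ∫⁻ w, Ω {ω | ⌊f w.1 ω / δ⌋ ∈ I ∧ ⌊f w.2 ω / δ⌋ ∈ I} ∂ν ≤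
      (ν univ * D + 1) * (I.card * ENNReal.ofReal √a) := by
  have hfm (x : α) : Measurable (f x) := hf.comp measurable_prodMk_left
  have hmeas : Measurable fun w : α × α ↦ Ω {ω | ⌊f w.1 ω / δ⌋ ∈ I ∧ ⌊f w.2 ω / δ⌋ ∈ I} := by
    have hfloor (g : α × α → α) (hg : Measurable g) :
        Measurable fun q : (α × α) × β ↦ ⌊f (g q.1) q.2 / δ⌋ :=
      ((hf.comp (by fun_prop : Measurable fun q : (α × α) × β ↦ (g q.1, q.2))).div_const δ).floor
    exact measurable_measure_prodMk_left
      ((hfloor _ measurable_fst I.measurableSet).inter (hfloor _ measurable_snd I.measurableSet))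
  have hle (x : ℝ≥0∞) : x ≤ (x + 1) ^ 2 :=
    le_self_add.trans (le_self_pow₀ le_add_self two_ne_zero)
  rw [← ENNReal.pow_le_pow_left_iff two_ne_zero]
  calc _ ≤ ν univ * ∫⁻ w, Ω {ω | ⌊f w.1 ω / δ⌋ ∈ I ∧ ⌊f w.2 ω / δ⌋ ∈ I} ^ 2 ∂ν :=
        sq_lintegral_le ν hmeas.aemeasurable
    _ ≤ ν univ * ((I.card : ℝ≥0∞) ^ 2 * (D * ENNReal.ofReal a)) := by
        refine mul_le_mul_right (le_trans ?_ (mul_le_mul_right hν _)) _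
        rw [← lintegral_const_mul' _ _ (by finiteness)]
        exact lintegral_mono fun w ↦ sq_measure_floor_div_mem_le Ω (hfm w.1) (hfm w.2) hδ I
    _ = (ν univ * D) * (I.card * ENNReal.ofReal √a) ^ 2 := by
        rw [mul_pow, ← ENNReal.ofReal_pow (by positivity), Real.sq_sqrt ha]
        ring
    _ ≤ _ := by
        rw [mul_pow (ν univ * D + 1)]
        exact mul_le_mul_left (hle _) _

variable {μ κ : Measure ℝ} [IsFiniteMeasure μ] [IsFiniteMeasure κ] {C C' : ℝ≥0∞} {s B : ℝ}

lemma IsFrostman.exists_sq_measure_floor_shiftedSqDist_div_mem_le (hμ : IsFrostman μ C s)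
    (hκ : IsFrostman κ C' s) (hC : C ≠ ⊤) (hC' : C' ≠ ⊤) (hs : s ≤ 1) (hB : 1 ≤ B)
    (hμB : ∀ᵐ z ∂μ, |z| ≤ B) {e : ℝ} (he : 0 < e) (hes : e < 2 * s - 1) {β : ℝ} (hβ : 0 < β)
    (hβs : β < 2 * s - 1) {l : ℝ} (hl : l * (s - β) ≤ 1 - s) :
    ∃ D : ℝ≥0∞, D ≠ ⊤ ∧ ∀ T K δ : ℝ, 1 ≤ T → 1 ≤ K → 0 < δ → δ ≤ 1 → ∀ I : Finset ℤ,
      ((μ.prod μ).prod ((μ.prod μ).prod κ)) {x | ⌊shiftedSqDist x.1 x.2 / δ⌋ ∈ I} ^ 2 ≤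
        D * (ENNReal.ofReal (T ^ (-s)) + ENNReal.ofReal (T * (T / K) ^ e) +
          I.card * ENNReal.ofReal √(T * K * δ ^ (1 + s + l * (2 * s - 1 - β)))) := by
  obtain ⟨D₁, hD₁, hthin⟩ := hμ.exists_setLIntegral_thinTubePairs_coincidence_le hκ hC hC' hs hB
    hμB hβ.le hβs hl
  obtain ⟨D₂, hD₂, hthick⟩ := hμ.exists_measure_compl_thinTubePairs_le hC hs he hes hμB hβ
  set P := μ.prod μ
  set Ω := P.prod κ
  set E := (P.prod P) univ * D₁ + 1 with hE
  refine ⟨Ω univ * (Ω univ * D₂ + E), by finiteness, fun T K δ hT hK hδ hδ1 I ↦ ?_⟩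
  set X := ENNReal.ofReal (T ^ (-s)) + ENNReal.ofReal (T * (T / K) ^ e)
  set Y := (I.card : ℝ≥0∞) * ENNReal.ofReal √(T * K * δ ^ (1 + s + l * (2 * s - 1 - β)))
  have hA : MeasurableSet {x : (ℝ × ℝ) × ((ℝ × ℝ) × ℝ) | ⌊shiftedSqDist x.1 x.2 / δ⌋ ∈ I} :=
    (by fun_prop : Measurable fun x : (ℝ × ℝ) × ((ℝ × ℝ) × ℝ) ↦ ⌊shiftedSqDist x.1 x.2 / δ⌋)
      I.measurableSet
  refine (sq_measure_prod_le P Ω hA).trans ?_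
  rw [mul_assoc, ← lintegral_add_compl _ (measurableSet_thinTubePairs μ T K β)]
  refine mul_le_mul_right ((add_le_add (b := E * Y) (d := Ω univ * (D₂ * X)) ?_ ?_).trans ?_) _
  · refine (lintegral_measure_floor_div_mem_le _ Ω (by fun_prop) hδ I (by positivity)
      (hthin T K δ (by linarith) hK hδ hδ1)).trans (mul_le_mul_left ?_ _)
    rw [hE]
    gcongr
    exact Measure.restrict_le_self
  · refine (lintegral_mono fun w ↦ measure_mono (subset_univ _)).trans ?_
    rw [setLIntegral_const]
    exact mul_le_mul_right (hthick T K hT (by linarith)) _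
  · calc E * Y + Ω univ * (D₂ * X) ≤ E * Y + Ω univ * (D₂ * X) + (E * X + Ω univ * D₂ * Y) :=
          le_self_add
      _ = _ := by ring

lemma exists_pos_lt_half_one_add {s σ : ℝ} (hs₀ : 1 / 2 < s) (hs : s ≤ 1)
    (hσ : σ < 2 - (s + 1 / s) / 2) :
    ∃ β l : ℝ, 0 < β ∧ β < 2 * s - 1 ∧ l * (s - β) ≤ 1 - s ∧
      σ < (1 + s + l * (2 * s - 1 - β)) / 2 := by
  set l : ℝ := (1 - s) / s with hl
  have hl₀ : 0 ≤ l := div_nonneg (by linarith) (by linarith)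
  have hls : l * s = 1 - s := div_mul_cancel₀ _ (by linarith)
  have hlimit : (1 + s + l * (2 * s - 1)) / 2 = 2 - (s + 1 / s) / 2 := by
    rw [hl]
    field_simp
    ring
  have hcont : ContinuousAt (fun β : ℝ ↦ l * β / 2) 0 := by fun_prop
  have hclose := hcont.eventually_lt_const
    (by linarith : l * 0 / 2 < 2 - (s + 1 / s) / 2 - σ)
  obtain ⟨β, ⟨hβs, hβσ⟩, hβ : 0 < β⟩ :=
    (((eventually_lt_nhds (by linarith : 0 < 2 * s - 1)).and hclose).filter_mono
      nhdsWithin_le_nhds |>.and self_mem_nhdsWithin).exists (f := 𝓝[>] (0 : ℝ))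
  exact ⟨β, l, hβ, hβs, by nlinarith, by linarith⟩

lemma IsFrostman.exists_sq_measure_floor_shiftedSqDist_div_mem_le_rpow (hμ : IsFrostman μ C s)
    (hκ : IsFrostman κ C' s) (hC : C ≠ ⊤) (hC' : C' ≠ ⊤) (hs₀ : 1 / 2 < s) (hs : s ≤ 1)
    (hB : 1 ≤ B) (hμB : ∀ᵐ z ∂μ, |z| ≤ B) {σ : ℝ} (hσ : σ < 2 - (s + 1 / s) / 2) :
    ∃ D : ℝ≥0∞, D ≠ ⊤ ∧ ∃ γ : ℝ, 0 < γ ∧ ∀ δ : ℝ, 0 < δ → δ ≤ 1 → ∀ (I : Finset ℤ) (M : ℝ≥0∞),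
      I.card ≤ M * ENNReal.ofReal (δ ^ (-σ)) →
      ((μ.prod μ).prod ((μ.prod μ).prod κ)) {x | ⌊shiftedSqDist x.1 x.2 / δ⌋ ∈ I} ^ 2 ≤
        D * (2 + M) * ENNReal.ofReal (δ ^ γ) := by
  obtain ⟨β, l, hβ, hβs, hl, hβσ⟩ := exists_pos_lt_half_one_add hs₀ hs hσ
  set g : ℝ := (1 + s + l * (2 * s - 1 - β)) / 2 - σ with hg
  have : 0 < g := by linarith
  set e : ℝ := s - 1 / 2 with he
  have he0 : 0 < e := by linarith
  obtain ⟨D, hD, hmass⟩ := hμ.exists_sq_measure_floor_shiftedSqDist_div_mem_le hκ hC hC' hs hB hμB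
    he0 (by linarith) hβ hβs hl
  set k : ℝ := g / (2 + 1 / e)
  have hk0 : 0 < k := by positivity
  have hkg : k * (2 + 1 / e) = g := div_mul_cancel₀ _ (by positivity)
  refine ⟨D, hD, k / 2, by positivity, fun δ hδ hδ1 I M hI ↦ ?_⟩
  have hmono {a b : ℝ} (hab : k / 2 ≤ a) (hb : b = δ ^ a) :
      ENNReal.ofReal b ≤ ENNReal.ofReal (δ ^ (k / 2)) :=
    ENNReal.ofReal_le_ofReal (hb.trans_le (Real.rpow_le_rpow_of_exponent_ge hδ hδ1 hab))
  refine (hmass (δ ^ (-k)) (δ ^ (-(k * (1 + 2 / e)))) δ ?_ ?_ hδ hδ1 I).trans ?_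
  · exact Real.one_le_rpow_of_pos_of_le_one_of_nonpos hδ hδ1 (by linarith)
  · exact Real.one_le_rpow_of_pos_of_le_one_of_nonpos hδ hδ1 (neg_nonpos.mpr (by positivity))
  rw [mul_assoc D]
  refine mul_le_mul_right ?_ _
  calc _ ≤ ENNReal.ofReal (δ ^ (k / 2)) + ENNReal.ofReal (δ ^ (k / 2)) +
        M * ENNReal.ofReal (δ ^ (k / 2)) := by
        refine add_le_add (add_le_add (hmono (a := k * s) (by nlinarith) ?_)
          (hmono (a := k) (by linarith) ?_)) ((mul_le_mul_left hI _).trans ?_)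
        · rw [← Real.rpow_mul hδ.le, neg_mul_neg]
        · rw [← Real.rpow_sub hδ, ← Real.rpow_mul hδ.le, ← Real.rpow_add hδ]
          field_simp
          ring_nf
        · rw [mul_assoc, ← ENNReal.ofReal_mul (by positivity)]
          refine mul_le_mul_right (hmono (a := k) (by linarith) ?_) _
          rw [← Real.rpow_add hδ, ← Real.rpow_add hδ, Real.sqrt_eq_rpow, ← Real.rpow_mul hδ.le,
            ← Real.rpow_add hδ]
          congr 1
          linear_combination -hkg - hg
    _ = _ := by ring

end ShiftedSqDistLaw

section HeavyCells

/-- The union of those cells `[nδ, (n + 1)δ)` whose `Λ`-mass is at least `δ ^ τ`. -/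
def heavyCells (Λ : Measure ℝ) (τ δ : ℝ) : Set ℝ :=
  {x | ENNReal.ofReal (δ ^ τ) ≤ Λ {y | ⌊y / δ⌋ = ⌊x / δ⌋}}

lemma measurableSet_floor_div_eq (δ : ℝ) (n : ℤ) : MeasurableSet {y : ℝ | ⌊y / δ⌋ = n} :=
  (by fun_prop : Measurable fun y : ℝ ↦ ⌊y / δ⌋) (measurableSet_singleton n)

variable {Λ : Measure ℝ} {τ δ : ℝ}

lemma exists_finset_heavyCells_eq [IsFiniteMeasure Λ] (τ : ℝ) (hδ : 0 < δ) :
    ∃ I : Finset ℤ, I.card ≤ Λ univ * ENNReal.ofReal (δ ^ (-τ)) ∧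
      heavyCells Λ τ δ = {x | ⌊x / δ⌋ ∈ I} := by
  have hdisj : Pairwise (Function.onFun Disjoint fun n : ℤ ↦ {y : ℝ | ⌊y / δ⌋ = n}) :=
    fun m n hmn ↦ Set.disjoint_left.mpr fun y hm hn ↦ hmn (hm.symm.trans hn)
  have hfin : {n : ℤ | ENNReal.ofReal (δ ^ τ) ≤ Λ {y | ⌊y / δ⌋ = n}}.Finite :=
    Measure.finite_const_le_meas_of_disjoint_iUnion Λ
      (ENNReal.ofReal_pos.mpr (Real.rpow_pos_of_pos hδ τ)) (measurableSet_floor_div_eq δ) hdisj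
      (by finiteness)
  refine ⟨hfin.toFinset, ?_, by ext; simp [heavyCells]⟩
  have hcard : (hfin.toFinset.card : ℝ≥0∞) * ENNReal.ofReal (δ ^ τ) ≤ Λ univ :=
    calc _ = ∑ _n ∈ hfin.toFinset, ENNReal.ofReal (δ ^ τ) := by
          rw [Finset.sum_const, nsmul_eq_mul]
      _ ≤ ∑ n ∈ hfin.toFinset, Λ {y | ⌊y / δ⌋ = n} :=
          Finset.sum_le_sum fun n hn ↦ hfin.mem_toFinset.mp hn
      _ = Λ (⋃ n ∈ hfin.toFinset, {y | ⌊y / δ⌋ = n}) :=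
          (measure_biUnion_finset (fun m _ n _ hmn ↦ hdisj hmn)
            fun n _ ↦ measurableSet_floor_div_eq δ n).symm
      _ ≤ Λ univ := measure_mono (subset_univ _)
  calc (hfin.toFinset.card : ℝ≥0∞)
      = hfin.toFinset.card * ENNReal.ofReal (δ ^ τ) * ENNReal.ofReal (δ ^ (-τ)) := by
        rw [mul_assoc, ← ENNReal.ofReal_mul (by positivity), ← Real.rpow_add hδ]
        simp
    _ ≤ _ := mul_le_mul_left hcard _

lemma measure_closedBall_le_of_forall_measure_floor_le {b : ℝ≥0∞} (hδ : 0 < δ)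
    (h : ∀ n : ℤ, Λ {y | ⌊y / δ⌋ = n} ≤ b) (x : ℝ) {r : ℝ} (hr : r ≤ δ) :
    Λ (Metric.closedBall x r) ≤ 3 * b := by
  set n := ⌊(x - r) / δ⌋
  have hsub : Metric.closedBall x r ⊆
      {y | ⌊y / δ⌋ = n} ∪ {y | ⌊y / δ⌋ = n + 1} ∪ {y | ⌊y / δ⌋ = n + 2} := by
    intro y hy
    rw [Real.closedBall_eq_Icc] at hy
    have hlower : n ≤ ⌊y / δ⌋ := Int.floor_le_floor (div_le_div_of_nonneg_right hy.1 hδ.le)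
    have hupper : ⌊y / δ⌋ < n + 3 := by
      have hn : (x - r) / δ < n + 1 := Int.lt_floor_add_one _
      have hyn : y / δ ≤ (x - r) / δ + 2 := by
        rw [div_add' _ _ _ hδ.ne']
        exact div_le_div_of_nonneg_right (by linarith [hy.2]) hδ.le
      rw [Int.floor_lt]
      push_cast
      linarith
    simp only [mem_union, Set.mem_ofPred_eq]
    lia
  calc Λ (Metric.closedBall x r) ≤ b + b + b :=
        (measure_mono hsub).trans ((measure_union_le _ _).trans
          (add_le_add ((measure_union_le _ _).trans (add_le_add (h _) (h _))) (h _)))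
    _ = 3 * b := by ring

lemma measure_restrict_compl_floor_div_eq_le {U : Set ℝ} (hU : heavyCells Λ τ δ ⊆ U) (n : ℤ) :
    Λ.restrict Uᶜ {y | ⌊y / δ⌋ = n} ≤ ENNReal.ofReal (δ ^ τ) := by
  by_cases hn : ENNReal.ofReal (δ ^ τ) ≤ Λ {y | ⌊y / δ⌋ = n}
  · have hsub : {y | ⌊y / δ⌋ = n} ⊆ U := by
      rintro y rfl
      exact hU hn
    rw [Measure.restrict_apply (measurableSet_floor_div_eq δ n), ← Set.sdiff_eq,
      Set.sdiff_eq_empty.mpr hsub, measure_empty]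
    exact zero_le
  · exact (Measure.restrict_apply_le _ _).trans (not_le.mp hn).le

lemma isFrostman_restrict_compl_iUnion_heavyCells (Λ : Measure ℝ) (hτ : 0 ≤ τ) (k : ℕ) :
    IsFrostman (Λ.restrict (⋃ j, heavyCells Λ τ ((1 / 2) ^ (j + k)))ᶜ)
      (Λ univ * ENNReal.ofReal (((1 / 2) ^ k) ^ (-τ)) + 3 * ENNReal.ofReal (2 ^ τ)) τ := by
  intro x r hr
  rcases lt_or_ge r ((1 / 2) ^ k) with hrk | hrk
  · refine le_trans ?_ (mul_le_mul_left le_add_self _)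
    obtain ⟨j, hjr, hrj⟩ := exists_nat_pow_near_of_lt_one hr
      (hrk.le.trans (pow_le_one₀ (by norm_num) (by norm_num))) (y := (1 / 2 : ℝ)) (by norm_num)
      (by norm_num)
    have hkj : k ≤ j := by
      have := (pow_lt_pow_iff_right_of_lt_one₀ (by norm_num) (by norm_num)).mp (hjr.trans hrk)
      lia
    have hU : heavyCells Λ τ ((1 / 2) ^ j) ⊆ ⋃ j, heavyCells Λ τ ((1 / 2) ^ (j + k)) := by
      refine (subset_iUnion (fun j ↦ heavyCells Λ τ ((1 / 2) ^ (j + k))) (j - k)).trans' ?_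
      rw [Nat.sub_add_cancel hkj]
    calc _ ≤ 3 * ENNReal.ofReal (((1 / 2) ^ j) ^ τ) :=
          measure_closedBall_le_of_forall_measure_floor_le (by positivity)
            (measure_restrict_compl_floor_div_eq_le hU) x hrj
      _ ≤ 3 * ENNReal.ofReal (2 ^ τ * r ^ τ) := by
          rw [← Real.mul_rpow (by norm_num) hr.le]
          rw [pow_succ] at hjr
          gcongr
          linarith
      _ = _ := by rw [ENNReal.ofReal_mul (by positivity), mul_assoc]
  · refine le_trans ?_ (mul_le_mul_left le_self_add _)
    calc _ ≤ Λ univ * 1 := by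
          rw [mul_one]
          exact (Measure.restrict_apply_le _ _).trans (measure_mono (subset_univ _))
      _ ≤ Λ univ * (ENNReal.ofReal (((1 / 2) ^ k) ^ (-τ)) * ENNReal.ofReal (r ^ τ)) := by
          refine mul_le_mul_right ?_ _
          rw [← ENNReal.ofReal_mul (by positivity), ENNReal.one_le_ofReal,
            Real.rpow_neg (by positivity), inv_mul_eq_div, one_le_div (by positivity)]
          exact Real.rpow_le_rpow (by positivity) hrk hτ
      _ = _ := by ring

lemma exists_measure_iUnion_lt_of_sq_le_pow (h₀ : Λ univ ≠ 0) {S : ℕ → Set ℝ} {D : ℝ≥0∞}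
    (hD : D ≠ ⊤) {q : ℝ} (hq : q < 1) (h : ∀ j, Λ (S j) ^ 2 ≤ D * (ENNReal.ofReal q ^ j) ^ 2) :
    ∃ k, Λ (⋃ j, S (j + k)) < Λ univ := by
  have hS (j : ℕ) : Λ (S j) ≤ (D + 1) * ENNReal.ofReal q ^ j := by
    rw [← ENNReal.pow_le_pow_left_iff two_ne_zero, mul_pow]
    exact (h j).trans (mul_le_mul_left
      (le_self_add.trans (le_self_pow₀ le_add_self two_ne_zero)) _)
  have hsum : ∑' j, Λ (S j) ≠ ⊤ := by
    refine ne_top_of_le_ne_top ?_ (ENNReal.tsum_le_tsum hS)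
    rw [ENNReal.tsum_mul_left, ENNReal.tsum_geometric]
    refine ENNReal.mul_ne_top (by finiteness) (ENNReal.inv_ne_top.mpr (tsub_pos_of_lt ?_).ne')
    rwa [ENNReal.ofReal_lt_one]
  obtain ⟨k, hk⟩ := ((ENNReal.tendsto_sum_nat_add _ hsum).eventually_lt_const
    (pos_iff_ne_zero.mpr h₀)).exists
  exact ⟨k, (measure_iUnion_le _).trans_lt hk⟩

lemma exists_isFrostman_le_of_sq_measure_floor_div_mem_le [IsFiniteMeasure Λ] (h₀ : Λ univ ≠ 0)
    (hτ : 0 ≤ τ) {γ : ℝ} (hγ : 0 < γ) {D : ℝ≥0∞} (hD : D ≠ ⊤)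
    (h : ∀ δ : ℝ, 0 < δ → δ ≤ 1 → ∀ I : Finset ℤ,
      I.card ≤ Λ univ * ENNReal.ofReal (δ ^ (-τ)) →
        Λ {x | ⌊x / δ⌋ ∈ I} ^ 2 ≤ D * ENNReal.ofReal (δ ^ γ)) :
    ∃ η ≤ Λ, η univ ≠ 0 ∧ ∃ C : ℝ≥0∞, C ≠ ⊤ ∧ IsFrostman η C τ := by
  set q : ℝ := (1 / 2) ^ (γ / 2) with hq
  have hq1 : q < 1 := Real.rpow_lt_one (by norm_num) (by norm_num) (by positivity)
  have hqpow (j : ℕ) : ENNReal.ofReal (((1 / 2 : ℝ) ^ j) ^ γ) = (ENNReal.ofReal q ^ j) ^ 2 := by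
    rw [← ENNReal.ofReal_pow (by positivity), ← ENNReal.ofReal_pow (by positivity), hq,
      Real.rpow_pow_comm (by norm_num), ← Real.rpow_mul_natCast (by positivity)]
    simp
  have hheavy (j : ℕ) : Λ (heavyCells Λ τ ((1 / 2) ^ j)) ^ 2 ≤ D * (ENNReal.ofReal q ^ j) ^ 2 := by
    obtain ⟨I, hI, hheavyI⟩ := exists_finset_heavyCells_eq (Λ := Λ) τ
      (by positivity : (0 : ℝ) < (1 / 2) ^ j)
    rw [hheavyI, ← hqpow]
    exact h _ (by positivity) (pow_le_one₀ (by norm_num) (by norm_num)) I hI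
  obtain ⟨k, hk⟩ := exists_measure_iUnion_lt_of_sq_le_pow h₀ hD hq1 hheavy
  refine ⟨_, Measure.restrict_le_self, ?_, _, by finiteness,
    isFrostman_restrict_compl_iUnion_heavyCells Λ hτ k⟩
  intro hzero
  rw [Measure.restrict_apply_univ] at hzero
  have hle := measure_univ_le_add_compl (μ := Λ) (⋃ j, heavyCells Λ τ ((1 / 2) ^ (j + k)))
  rw [hzero, add_zero] at hle
  exact hle.not_gt hk

end HeavyCells

section FrostmanLemma

/-- The `s`-dimensional Hausdorff content: the infimum of `∑ diam ^ s` over countable covers by sets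
of arbitrary size. -/
noncomputable def hausdorffContent (X : Type*) [EMetricSpace X] (s : ℝ) : OuterMeasure X :=
  OuterMeasure.boundedBy fun S ↦ Metric.ediam S ^ s

lemma hausdorffContent_ne_zero_of_lt_dimH {X : Type*} [EMetricSpace X] {s : ℝ} (hs : 0 < s)
    {A : Set X} (h : ENNReal.ofReal s < dimH A) : hausdorffContent X s A ≠ 0 := by
  borelize X
  intro h₀
  have htop : μH[s] A = ⊤ := by
    simpa only [Real.coe_toNNReal s hs.le] using hausdorffMeasure_of_lt_dimH (d := s.toNNReal) h
  refine ENNReal.one_ne_top (top_le_iff.mp (htop.symm.trans_le ?_))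
  rw [Measure.hausdorffMeasure_apply]
  refine iSup₂_le fun r hr ↦ ?_
  have hlt : hausdorffContent X s A < min 1 (r ^ s) := by
    rw [h₀]
    exact lt_min one_pos (ENNReal.rpow_pos_of_nonneg hr hs.le)
  rw [hausdorffContent, OuterMeasure.boundedBy_apply] at hlt
  simp only [iInf_lt_iff] at hlt
  obtain ⟨t, hAt, hsum⟩ := hlt
  refine iInf_le_of_le t (iInf_le_of_le hAt (iInf_le_of_le (fun n ↦ ?_)
    (hsum.le.trans (min_le_left _ _))))
  rcases (t n).eq_empty_or_nonempty with hn | hn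
  · simp [hn]
  · have hle : Metric.ediam (t n) ^ s ≤ r ^ s :=
      calc _ = ⨆ _ : (t n).Nonempty, Metric.ediam (t n) ^ s := by rw [iSup_pos hn]
        _ ≤ _ := (ENNReal.le_tsum n).trans (hsum.le.trans (min_le_right _ _))
    exact (ENNReal.rpow_le_rpow_iff hs).mp hle

lemma toReal_inter_Iic_le_add (c : OuterMeasure ℝ) {A : Set ℝ} (hcA : c A ≠ ⊤) {x y : ℝ}
    (hxy : x ≤ y) :
    (c (A ∩ Iic y)).toReal ≤ (c (A ∩ Iic x)).toReal + (c (A ∩ Ioc x y)).toReal := by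
  have hfin (S : Set ℝ) : c (A ∩ S) ≠ ⊤ := ne_top_of_le_ne_top hcA (c.mono inter_subset_left)
  rw [← ENNReal.toReal_add (hfin _) (hfin _)]
  refine ENNReal.toReal_mono (ENNReal.add_ne_top.mpr ⟨hfin _, hfin _⟩) ?_
  rw [← Iic_union_Ioc_eq_Iic hxy, inter_union_distrib_left]
  exact measure_union_le _ _

lemma exists_stieltjesFunction_eq_toReal_inter_Iic (c : OuterMeasure ℝ) {A : Set ℝ}
    (hcA : c A ≠ ⊤) {s : ℝ} (hs : 0 < s)
    (hc : ∀ x y : ℝ, x ≤ y → c (Ioc x y) ≤ ENNReal.ofReal ((y - x) ^ s)) :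
    ∃ F : StieltjesFunction ℝ, ∀ x, F x = (c (A ∩ Iic x)).toReal := by
  have hmono : Monotone fun x ↦ (c (A ∩ Iic x)).toReal := fun x y hxy ↦
    ENNReal.toReal_mono (ne_top_of_le_ne_top hcA (c.mono inter_subset_left))
      (c.mono (inter_subset_inter_right _ (Iic_subset_Iic.mpr hxy)))
  have hholder (x y : ℝ) (hxy : x ≤ y) :
      (c (A ∩ Iic y)).toReal ≤ (c (A ∩ Iic x)).toReal + (y - x) ^ s :=
    (toReal_inter_Iic_le_add c hcA hxy).trans (add_le_add_right (ENNReal.toReal_le_of_le_ofReal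
      (Real.rpow_nonneg (sub_nonneg.mpr hxy) s) ((c.mono inter_subset_right).trans (hc x y hxy))) _)
  refine ⟨⟨_, hmono, fun x ↦ ?_⟩, fun x ↦ rfl⟩
  have hlim : Tendsto (fun y ↦ (c (A ∩ Iic x)).toReal + (y - x) ^ s) (𝓝[Ici x] x)
      (𝓝 (c (A ∩ Iic x)).toReal) := by
    have hcont : ContinuousAt (fun y ↦ (c (A ∩ Iic x)).toReal + (y - x) ^ s) x :=
      continuousAt_const.add (ContinuousAt.rpow_const (by fun_prop) (Or.inr hs.le))
    simpa [Real.zero_rpow hs.ne'] using hcont.tendsto.mono_left nhdsWithin_le_nhds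
  refine tendsto_of_tendsto_of_tendsto_of_le_of_le' tendsto_const_nhds hlim ?_ ?_
  · filter_upwards [self_mem_nhdsWithin] with y hy using hmono hy
  · filter_upwards [self_mem_nhdsWithin] with y hy using hholder x y hy

lemma exists_measure_Ioc_le_of_outerMeasure (c : OuterMeasure ℝ) {A : Set ℝ}
    (hA : Bornology.IsBounded A) (hcA : c A ≠ ⊤) {s : ℝ} (hs : 0 < s)
    (hc : ∀ x y : ℝ, x ≤ y → c (Ioc x y) ≤ ENNReal.ofReal ((y - x) ^ s)) :
    ∃ μ : Measure ℝ, μ univ = c A ∧ ∀ x y, x ≤ y → μ (Ioc x y) ≤ c (A ∩ Ioc x y) := by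
  obtain ⟨F, hF⟩ := exists_stieltjesFunction_eq_toReal_inter_Iic c hcA hs hc
  refine ⟨F.measure, ?_, fun x y hxy ↦ ?_⟩
  · obtain ⟨a, ha⟩ := hA.bddBelow
    obtain ⟨b, hb⟩ := hA.bddAbove
    have hbot : Tendsto F atBot (𝓝 0) := by
      refine tendsto_const_nhds.congr' ?_
      filter_upwards [Iio_mem_atBot a] with x hx
      have hempty : A ∩ Iic x = ∅ :=
        disjoint_iff_inter_eq_empty.mp (Set.disjoint_left.mpr fun y hy hyx ↦
          ((ha hy).trans hyx).not_gt hx)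
      rw [hF, hempty, measure_empty, ENNReal.toReal_zero]
    have htop : Tendsto F atTop (𝓝 (c A).toReal) := by
      refine tendsto_const_nhds.congr' ?_
      filter_upwards [Ici_mem_atTop b] with x hx
      rw [hF, (inter_eq_left (t := Iic x)).mpr fun y hy ↦ (hb hy).trans hx]
    rw [F.measure_univ hbot htop, sub_zero, ENNReal.ofReal_toReal hcA]
  · rw [F.measure_Ioc, hF, hF]
    exact ENNReal.ofReal_le_of_le_toReal (by linarith [toReal_inter_Iic_le_add c hcA hxy])

lemma measure_compl_eq_zero_of_forall_Ioc_le {μ : Measure ℝ} {c : OuterMeasure ℝ} {A : Set ℝ}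
    (hA : IsClosed A) (h : ∀ x y, x ≤ y → μ (Ioc x y) ≤ c (A ∩ Ioc x y)) : μ Aᶜ = 0 := by
  refine measure_null_of_locally_null _ fun x hx ↦ ?_
  obtain ⟨ρ, hρ, hball⟩ := Metric.isOpen_iff.mp hA.isOpen_compl x hx
  refine ⟨Ioc (x - ρ / 2) (x + ρ / 2),
    mem_nhdsWithin_of_mem_nhds (Ioc_mem_nhds (by linarith) (by linarith)), ?_⟩
  have hempty : A ∩ Ioc (x - ρ / 2) (x + ρ / 2) = ∅ := by
    refine disjoint_iff_inter_eq_empty.mp (Set.disjoint_left.mpr fun y hyA hy ↦ hball ?_ hyA)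
    rw [Metric.mem_ball, Real.dist_eq, abs_lt]
    constructor <;> linarith [hy.1, hy.2]
  have hle := h (x - ρ / 2) (x + ρ / 2) (by linarith)
  rwa [hempty, measure_empty, nonpos_iff_eq_zero] at hle

-- On the line Frostman's lemma needs no compactness argument: the distribution function of the
-- Hausdorff content restricted to `A` is already Hölder continuous of order `s`.
lemma exists_isFrostman_of_lt_dimH {s : ℝ} (hs : 0 < s) {A : Set ℝ} (hA : IsCompact A)
    (h : ENNReal.ofReal s < dimH A) :
    ∃ μ : Measure ℝ, IsFiniteMeasure μ ∧ μ univ ≠ 0 ∧ (∀ᵐ x ∂μ, x ∈ A) ∧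
      IsFrostman μ (ENNReal.ofReal (3 ^ s)) s := by
  have hcontent (S : Set ℝ) : hausdorffContent ℝ s S ≤ Metric.ediam S ^ s :=
    OuterMeasure.boundedBy_le S
  have hIoc (x y : ℝ) (hxy : x ≤ y) :
      hausdorffContent ℝ s (Ioc x y) ≤ ENNReal.ofReal ((y - x) ^ s) := by
    refine (hcontent _).trans_eq ?_
    rw [Real.ediam_Ioc, ENNReal.ofReal_rpow_of_nonneg (sub_nonneg.mpr hxy) hs.le]
  have hfin : hausdorffContent ℝ s A ≠ ⊤ := ne_top_of_le_ne_top
    (ENNReal.rpow_ne_top_of_nonneg hs.le hA.isBounded.ediam_ne_top) (hcontent A)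
  obtain ⟨μ, hμ, hμIoc⟩ := exists_measure_Ioc_le_of_outerMeasure _ hA.isBounded hfin hs hIoc
  refine ⟨μ, ⟨hμ.trans_lt hfin.lt_top⟩, hμ.trans_ne (hausdorffContent_ne_zero_of_lt_dimH hs h),
    measure_compl_eq_zero_of_forall_Ioc_le hA.isClosed hμIoc, fun x r hr ↦ ?_⟩
  calc μ (Metric.closedBall x r) ≤ μ (Ioc (x - 2 * r) (x + r)) := by
        refine measure_mono ?_
        rw [Real.closedBall_eq_Icc]
        exact Icc_subset_Ioc (by linarith) le_rfl
    _ ≤ ENNReal.ofReal ((x + r - (x - 2 * r)) ^ s) :=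
        (hμIoc _ _ (by linarith)).trans
          (((hausdorffContent ℝ s).mono inter_subset_right).trans (hIoc _ _ (by linarith)))
    _ = _ := by
        rw [← ENNReal.ofReal_mul (by positivity), ← Real.mul_rpow (by norm_num) hr.le]
        ring_nf

end FrostmanLemma

section SqDistSet

/-- The squared distances `∑ (x i - y i) ^ 2` between points of `A ^ k`. Working with squares makes
the family additive in `k`. -/
def sqDistSet (A : Set ℝ) (k : ℕ) : Set ℝ :=
  {t | ∃ x y : Fin k → ℝ, (∀ i, x i ∈ A) ∧ (∀ i, y i ∈ A) ∧ ∑ i, (x i - y i) ^ 2 = t}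

variable {A : Set ℝ} {k l : ℕ}

lemma sq_sub_mem_sqDistSet_one {x y : ℝ} (hx : x ∈ A) (hy : y ∈ A) :
    (x - y) ^ 2 ∈ sqDistSet A 1 :=
  ⟨fun _ ↦ x, fun _ ↦ y, fun _ ↦ hx, fun _ ↦ hy, by simp⟩

lemma add_mem_sqDistSet {a b : ℝ} (ha : a ∈ sqDistSet A k) (hb : b ∈ sqDistSet A l) :
    a + b ∈ sqDistSet A (k + l) := by
  obtain ⟨x, y, hx, hy, rfl⟩ := ha
  obtain ⟨x', y', hx', hy', rfl⟩ := hb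
  refine ⟨Fin.append x x', Fin.append y y', ?_, ?_, by simp [Fin.sum_univ_add]⟩
  · exact fun i ↦ Fin.addCases (fun j ↦ by simpa using hx j) (fun j ↦ by simpa using hx' j) i
  · exact fun i ↦ Fin.addCases (fun j ↦ by simpa using hy j) (fun j ↦ by simpa using hy' j) i

lemma isCompact_sqDistSet (hA : IsCompact A) (k : ℕ) : IsCompact (sqDistSet A k) := by
  have hpi : IsCompact (univ.pi fun _ : Fin k ↦ A) := isCompact_univ_pi fun _ ↦ hA
  convert (hpi.prod hpi).image
    (by fun_prop : Continuous fun p : (Fin k → ℝ) × (Fin k → ℝ) ↦ ∑ i, (p.1 i - p.2 i) ^ 2)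
  ext t
  simp [sqDistSet, and_assoc]

lemma interior_distSet_prodSet_nonempty (h : (interior (sqDistSet A k)).Nonempty) :
    (interior (distSet (prodSet A k))).Nonempty := by
  obtain ⟨t, ht⟩ := h
  have hpos : 0 < t := by
    have hsub : sqDistSet A k ⊆ Ici 0 := by
      rintro _ ⟨x, y, -, -, rfl⟩
      exact mem_Ici.mpr (Finset.sum_nonneg fun i _ ↦ sq_nonneg _)
    exact interior_Ici.subset (interior_mono hsub ht)
  have hopen : IsOpen (Ioi 0 ∩ (fun u : ℝ ↦ u ^ 2) ⁻¹' interior (sqDistSet A k)) :=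
    isOpen_Ioi.inter (isOpen_interior.preimage (continuous_pow 2))
  refine ⟨√t, interior_maximal ?_ hopen
    ⟨Real.sqrt_pos.mpr hpos, by rwa [mem_preimage, Real.sq_sqrt hpos.le]⟩⟩
  rintro u ⟨hu₀, hu⟩
  obtain ⟨x, y, hx, hy, hxy⟩ := interior_subset hu
  refine ⟨WithLp.toLp 2 x, hx, WithLp.toLp 2 y, hy, ?_⟩
  rw [EuclideanSpace.dist_eq]
  simp only [Real.dist_eq, sq_abs]
  rw [hxy, Real.sqrt_sq (le_of_lt hu₀)]

lemma ae_prod_mem_and {α β : Type*} [MeasurableSpace α] [MeasurableSpace β] {μ : Measure α}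
    {ν : Measure β} {p : α → Prop} {q : β → Prop} (hp : ∀ᵐ x ∂μ, p x)
    (hq : ∀ᵐ y ∂ν, q y) : ∀ᵐ z ∂μ.prod ν, p z.1 ∧ q z.2 :=
  (Measure.quasiMeasurePreserving_fst.ae hp).and (Measure.quasiMeasurePreserving_snd.ae hq)

end SqDistSet

section FrostmanOnSqDistSet

variable {μ : Measure ℝ} {C : ℝ≥0∞} {s : ℝ} {A : Set ℝ}

lemma IsFrostman.map_restrict (hμ : IsFrostman μ C s) {f : ℝ → ℝ} (hf : Measurable f) {W : Set ℝ}
    (hW : MeasurableSet W) {L : ℝ} (hL : 0 < L)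
    (h : ∀ x ∈ W, ∀ y ∈ W, |x - y| ≤ L * |f x - f y|) :
    IsFrostman ((μ.restrict W).map f) (C * ENNReal.ofReal ((2 * L) ^ s)) s := by
  intro t r hr
  rw [Measure.map_apply hf measurableSet_closedBall, Measure.restrict_apply₀' hW.nullMeasurableSet]
  rcases (f ⁻¹' Metric.closedBall t r ∩ W).eq_empty_or_nonempty with hempty | ⟨x, hxt, hxW⟩
  · simp [hempty]
  have hsub : f ⁻¹' Metric.closedBall t r ∩ W ⊆ Metric.closedBall x (2 * L * r) := by
    rintro y ⟨hyt, hyW⟩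
    have hdist : |f y - f x| ≤ r + r := by
      rw [← Real.dist_eq]
      exact (dist_triangle_right _ _ t).trans (add_le_add hyt hxt)
    rw [Metric.mem_closedBall, Real.dist_eq]
    nlinarith [h y hyW x hxW]
  refine (measure_mono hsub).trans ((hμ x _ (by positivity)).trans_eq ?_)
  rw [Real.mul_rpow (by positivity) hr.le, ENNReal.ofReal_mul (by positivity), mul_assoc]

lemma IsFrostman.exists_measure_closedBall_lt (hμ : IsFrostman μ C s) (hC : C ≠ ⊤) (hs : 0 < s)
    (x : ℝ) {b : ℝ≥0∞} (hb : b ≠ 0) : ∃ r > 0, μ (Metric.closedBall x r) < b := by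
  have hlim : Tendsto (fun r : ℝ ↦ C * ENNReal.ofReal (r ^ s)) (𝓝[>] 0) (𝓝 0) := by
    have hpow : ContinuousAt (fun r : ℝ ↦ r ^ s) 0 :=
      ContinuousAt.rpow_const continuousAt_id (Or.inr hs.le)
    simpa [Real.zero_rpow hs.ne'] using ENNReal.Tendsto.const_mul (a := C)
      (ENNReal.tendsto_ofReal (hpow.tendsto.mono_left nhdsWithin_le_nhds)) (Or.inr hC)
  obtain ⟨r, hrb, hr⟩ :=
    ((hlim.eventually_lt_const (pos_iff_ne_zero.mpr hb)).and self_mem_nhdsWithin).exists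
  exact ⟨r, hr, (hμ x r hr).trans_lt hrb⟩

lemma IsFrostman.exists_isFrostman_sqDistSet_one [IsFiniteMeasure μ] (hμ : IsFrostman μ C s)
    (hC : C ≠ ⊤) (hs : 0 < s) (h₀ : μ univ ≠ 0) (hA : IsCompact A) (hμA : ∀ᵐ x ∂μ, x ∈ A) :
    ∃ κ : Measure ℝ, IsFiniteMeasure κ ∧ κ univ ≠ 0 ∧ (∀ᵐ x ∂κ, x ∈ sqDistSet A 1) ∧
      ∃ C' : ℝ≥0∞, C' ≠ ⊤ ∧ IsFrostman κ C' s := by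
  have : NeZero μ := ⟨fun h ↦ h₀ (by simp [h])⟩
  set a := sInf A
  have haA : a ∈ A := hA.sInf_mem hμA.exists
  obtain ⟨c, hc, hlt⟩ := hμ.exists_measure_closedBall_lt hC hs a h₀
  have hpos : μ (Ioi (a + c)) ≠ 0 := by
    intro hzero
    have hcover : μ univ ≤ μ (Metric.closedBall a c ∪ Ioi (a + c)) := by
      refine measure_mono_ae ?_
      filter_upwards [hμA] with x hxA _
      rw [Real.closedBall_eq_Icc]
      have hax : a ≤ x := csInf_le hA.bddBelow hxA
      exact (le_or_gt x (a + c)).imp (fun h ↦ ⟨by linarith, h⟩) id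
    refine hlt.not_ge (hcover.trans ((measure_union_le _ _).trans_eq ?_))
    rw [hzero, add_zero]
  have hmeas : Measurable fun x : ℝ ↦ (x - a) ^ 2 := by fun_prop
  refine ⟨(μ.restrict (Ioi (a + c))).map fun x ↦ (x - a) ^ 2, inferInstance, ?_, ?_, _, ?_,
    hμ.map_restrict hmeas measurableSet_Ioi (L := 1 / (2 * c)) (by positivity) fun x hx y hy ↦ ?_⟩
  · rwa [Measure.map_apply hmeas MeasurableSet.univ, preimage_univ, Measure.restrict_apply_univ]
  · refine (ae_map_iff hmeas.aemeasurable (isCompact_sqDistSet hA 1).measurableSet).mpr ?_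
    filter_upwards [ae_restrict_of_ae hμA] with x hx using sq_sub_mem_sqDistSet_one hx haA
  · finiteness
  · rw [mem_Ioi] at hx hy
    rw [one_div_mul_eq_div, le_div_iff₀ (by positivity),
      show (x - a) ^ 2 - (y - a) ^ 2 = (x - y) * (x - a + (y - a)) by ring, abs_mul]
    refine mul_le_mul_of_nonneg_left ((le_abs_self _).trans' ?_) (abs_nonneg _)
    linarith

lemma exists_one_le_ae_abs_le (hA : IsCompact A) (hμA : ∀ᵐ x ∂μ, x ∈ A) :
    ∃ B : ℝ, 1 ≤ B ∧ ∀ᵐ x ∂μ, |x| ≤ B := by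
  obtain ⟨R, hR⟩ := hA.isBounded.subset_closedBall 0
  refine ⟨max R 1, le_max_right _ _, ?_⟩
  filter_upwards [hμA] with x hx
  exact (mem_closedBall_zero_iff.mp (hR hx)).trans (le_max_left _ _)

lemma IsFrostman.exists_isFrostman_sqDistSet_three [IsFiniteMeasure μ] (hμ : IsFrostman μ C s)
    (hC : C ≠ ⊤) (hs₀ : 1 / 2 < s) (hs : s ≤ 1) (h₀ : μ univ ≠ 0) (hA : IsCompact A)
    (hμA : ∀ᵐ x ∂μ, x ∈ A) {σ : ℝ} (hσ₀ : 0 ≤ σ) (hσ : σ < 2 - (s + 1 / s) / 2) :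
    ∃ η : Measure ℝ, IsFiniteMeasure η ∧ η univ ≠ 0 ∧ (∀ᵐ x ∂η, x ∈ sqDistSet A 3) ∧
      ∃ C' : ℝ≥0∞, C' ≠ ⊤ ∧ IsFrostman η C' σ := by
  obtain ⟨κ, _, hκ₀, hκA, C', hC', hκ⟩ :=
    hμ.exists_isFrostman_sqDistSet_one hC (by linarith) h₀ hA hμA
  obtain ⟨B, hB, hμB⟩ := exists_one_le_ae_abs_le hA hμA
  obtain ⟨D, hD, γ, hγ, hcells⟩ := hμ.exists_sq_measure_floor_shiftedSqDist_div_mem_le_rpow hκ hC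
    hC' hs₀ hs hB hμB hσ
  have hmeas : Measurable fun x : (ℝ × ℝ) × ((ℝ × ℝ) × ℝ) ↦ shiftedSqDist x.1 x.2 := by fun_prop
  set Λ := ((μ.prod μ).prod ((μ.prod μ).prod κ)).map fun x ↦ shiftedSqDist x.1 x.2 with hΛ
  have hΛ₀ : Λ univ ≠ 0 := by
    rw [hΛ, Measure.map_apply hmeas MeasurableSet.univ, preimage_univ]
    simp only [← univ_prod_univ, Measure.prod_prod]
    exact mul_ne_zero (mul_ne_zero h₀ h₀) (mul_ne_zero (mul_ne_zero h₀ h₀) hκ₀)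
  have hΛA : ∀ᵐ x ∂Λ, x ∈ sqDistSet A 3 := by
    refine (ae_map_iff hmeas.aemeasurable (isCompact_sqDistSet hA 3).measurableSet).mpr ?_
    have hμμA := ae_prod_mem_and hμA hμA
    filter_upwards [ae_prod_mem_and hμμA (ae_prod_mem_and hμμA hκA)]
    rintro ⟨⟨p₁, p₂⟩, ⟨q₁, q₂⟩, t⟩ ⟨⟨hp₁, hp₂⟩, ⟨hq₁, hq₂⟩, ht⟩
    exact add_mem_sqDistSet (add_mem_sqDistSet (sq_sub_mem_sqDistSet_one hq₁ hp₁)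
      (sq_sub_mem_sqDistSet_one hq₂ hp₂)) ht
  obtain ⟨η, hηΛ, hη₀, hη⟩ := exists_isFrostman_le_of_sq_measure_floor_div_mem_le hΛ₀ hσ₀ hγ
    (D := D * (2 + Λ univ)) (by finiteness) fun δ hδ hδ1 I hI ↦ by
      have hI' : MeasurableSet {x : ℝ | ⌊x / δ⌋ ∈ I} :=
        (by fun_prop : Measurable fun x : ℝ ↦ ⌊x / δ⌋) I.measurableSet
      rw [hΛ, Measure.map_apply hmeas hI']
      exact hcells δ hδ hδ1 I _ hI
  exact ⟨η, isFiniteMeasure_of_le Λ hηΛ, hη₀, hηΛ.absolutelyContinuous.ae_le hΛA, hη⟩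

end FrostmanOnSqDistSet

section SqDistLaw

variable {μ : Measure ℝ} {C : ℝ≥0∞} {s B : ℝ}

/-- The law of `(x - y) ^ 2` for independent `x` and `y` of law `μ`. -/
noncomputable def sqDistLaw (μ : Measure ℝ) : Measure ℝ :=
  (μ.prod μ).map fun p ↦ (p.1 - p.2) ^ 2

instance [IsFiniteMeasure μ] : IsFiniteMeasure (sqDistLaw μ) := by
  unfold sqDistLaw
  infer_instance

lemma sqDistLaw_univ_ne_zero [SFinite μ] (h₀ : μ univ ≠ 0) : sqDistLaw μ univ ≠ 0 := by
  rw [sqDistLaw, Measure.map_apply (by fun_prop) MeasurableSet.univ, preimage_univ,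
    ← univ_prod_univ, Measure.prod_prod]
  exact mul_ne_zero h₀ h₀

lemma ae_sqDistLaw_mem_sqDistSet_one {A : Set ℝ} (hA : IsCompact A) (hμA : ∀ᵐ x ∂μ, x ∈ A) :
    ∀ᵐ x ∂sqDistLaw μ, x ∈ sqDistSet A 1 := by
  refine (ae_map_iff (by fun_prop) (isCompact_sqDistSet hA 1).measurableSet).mpr ?_
  filter_upwards [ae_prod_mem_and hμA hμA] with p hp using sq_sub_mem_sqDistSet_one hp.1 hp.2

lemma charFun_sqDistLaw [IsFiniteMeasure μ] (t : ℝ) :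
    charFun (sqDistLaw μ) t =
      ∫ y, Complex.exp (↑(t * y ^ 2) * Complex.I) * quadCharFun μ t (-(2 * t * y)) ∂μ := by
  have hintg : Integrable
      (fun p : ℝ × ℝ ↦ Complex.exp (↑(t * (p.1 - p.2) ^ 2) * Complex.I)) (μ.prod μ) :=
    .of_bound (by fun_prop) 1 (ae_of_all _ fun p ↦ (Complex.norm_exp_ofReal_mul_I _).le)
  simp only [charFun_apply_real, sqDistLaw]
  rw [integral_map (by fun_prop) (by fun_prop)]
  simp only [← Complex.ofReal_mul]
  rw [integral_prod_symm _ hintg]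
  simp only [quadCharFun, weightedCharFun, ← integral_const_mul, ← Complex.exp_add]
  congr! 5
  push_cast
  ring

lemma enorm_sq_charFun_sqDistLaw_le [IsFiniteMeasure μ] (t : ℝ) :
    ‖charFun (sqDistLaw μ) t‖ₑ ^ 2 ≤
      μ univ * ∫⁻ y, ‖quadCharFun μ t (-(2 * t * y))‖ₑ ^ 2 ∂μ := by
  have hle : ‖charFun (sqDistLaw μ) t‖ₑ ≤ ∫⁻ y, ‖quadCharFun μ t (-(2 * t * y))‖ₑ ∂μ := by
    rw [charFun_sqDistLaw]
    refine (enorm_integral_le_lintegral_enorm _).trans_eq (lintegral_congr fun y ↦ ?_)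
    rw [enorm_mul, ← ofReal_norm, Complex.norm_exp_ofReal_mul_I, ENNReal.ofReal_one,
      one_mul]
  exact (pow_le_pow_left' hle 2).trans (sq_lintegral_le _ (by fun_prop))

lemma gaussWeight_add_mul_le {t x y : ℝ} (hB : 1 ≤ B) (ht : 1 ≤ |t|) (hy : |y| ≤ B) :
    gaussWeight (x + 2 * t * y) ≤ ENNReal.ofReal (Real.exp 1) *
      (gaussWeight (x / (4 * B * |t|)) * gaussWeight ((x + 2 * t * y) / 2)) := by
  unfold gaussWeight
  rw [← ENNReal.ofReal_mul (by positivity), ← ENNReal.ofReal_mul (by positivity),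
    ← Real.exp_add, ← Real.exp_add]
  refine ENNReal.ofReal_le_ofReal (Real.exp_le_exp.mpr ?_)
  obtain ⟨u, rfl⟩ : ∃ u, x = u - 2 * t * y := ⟨x + 2 * t * y, by ring⟩
  have hty : (t * y) ^ 2 ≤ (B * |t|) ^ 2 := by
    rw [← sq_abs, abs_mul, mul_comm B]
    gcongr
  have hBt : 1 ≤ (B * |t|) ^ 2 := one_le_pow₀ (one_le_mul_of_one_le_of_one_le hB ht)
  have hx : ((u - 2 * t * y) / (4 * B * |t|)) ^ 2 ≤ u ^ 2 / 8 + 1 / 2 := by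
    rw [div_pow, mul_assoc 4, mul_pow, div_le_iff₀ (by positivity)]
    nlinarith [sq_nonneg u, sq_nonneg (u + 2 * t * y)]
  nlinarith [sq_nonneg u]

lemma IsFrostman.lintegral_enorm_sq_quadCharFun_le [IsFiniteMeasure μ] (hμ : IsFrostman μ C s)
    (hs : s ≤ 1) (hB : 1 ≤ B) (hμB : ∀ᵐ z ∂μ, |z| ≤ B) {t : ℝ} (ht : 1 ≤ |t|) :
    ∫⁻ y, ‖quadCharFun μ t (-(2 * t * y))‖ₑ ^ 2 ∂μ ≤ ENNReal.ofReal (Real.exp 1) *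
      ((∫⁻ x, ‖weightedCharFun μ (quadPhaseGrowth t) x‖ₑ ^ 2 * gaussWeight (x / (4 * B * |t|))) *
        (gaussLayerConst * (C * ENNReal.ofReal (|t| ^ (-s))))) := by
  have ht₀ : 0 < |t| := by linarith
  set F : ℝ → ℝ≥0∞ := fun x ↦ ‖weightedCharFun μ (quadPhaseGrowth t) x‖ₑ ^ 2
  have hFmeas : Measurable F := by fun_prop
  have hinner (x : ℝ) : ∫⁻ y, gaussWeight ((x + 2 * t * y) / 2) ∂μ ≤
      gaussLayerConst * (C * ENNReal.ofReal (|t| ^ (-s))) := by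
    refine (lintegral_mono fun y ↦ gaussWeight_le_gaussWeight (le_of_eq ?_)).trans
      (hμ.lintegral_gaussWeight_mul_sub_le hs ht₀ (-(x / (2 * t))))
    have : (x + 2 * t * y) / 2 = -(t * (-(x / (2 * t)) - y)) := by
      field_simp [abs_pos.mp ht₀]
      ring
    rw [this, abs_neg, abs_mul, abs_mul, abs_abs]
  calc ∫⁻ y, ‖quadCharFun μ t (-(2 * t * y))‖ₑ ^ 2 ∂μ
    _ ≤ ∫⁻ y, ENNReal.ofReal (Real.exp 1) * (∫⁻ x, F x * gaussWeight (x / (4 * B * |t|)) *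
          gaussWeight ((x + 2 * t * y) / 2)) ∂μ := by
        refine lintegral_mono_ae ?_
        filter_upwards [hμB] with y hy
        refine (enorm_sq_quadCharFun_le hμB t _).trans ?_
        rw [← lintegral_const_mul _ (by fun_prop)]
        refine lintegral_mono fun x ↦ ?_
        rw [sub_neg_eq_add]
        refine (mul_le_mul_right (gaussWeight_add_mul_le hB ht hy) _).trans_eq ?_
        ring
    _ = ENNReal.ofReal (Real.exp 1) * ∫⁻ x, F x * gaussWeight (x / (4 * B * |t|)) *
          ∫⁻ y, gaussWeight ((x + 2 * t * y) / 2) ∂μ := by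
        rw [lintegral_const_mul' _ _ ENNReal.ofReal_ne_top,
          lintegral_lintegral_swap (by fun_prop)]
        congr! 3 with x
        exact lintegral_const_mul _ (by fun_prop)
    _ ≤ _ := by
        rw [← lintegral_mul_const _ (by fun_prop)]
        exact mul_le_mul_right (lintegral_mono fun x ↦ mul_le_mul_right (hinner x) _) _

lemma IsFrostman.exists_enorm_sq_charFun_sqDistLaw_le_of_one_le_abs [IsFiniteMeasure μ]
    (hμ : IsFrostman μ C s) (hC : C ≠ ⊤) (hs : s ≤ 1) (hB : 1 ≤ B) (hμB : ∀ᵐ z ∂μ, |z| ≤ B) :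
    ∃ D : ℝ≥0∞, D ≠ ⊤ ∧ ∀ t : ℝ, 1 ≤ |t| →
      ‖charFun (sqDistLaw μ) t‖ₑ ^ 2 ≤ D * ENNReal.ofReal (|t| ^ (1 - 2 * s)) := by
  have hconst := gaussLayerConst_ne_top
  set L := ENNReal.ofReal (√(2 * Real.pi)) * (ENNReal.ofReal (Real.exp (B ^ 2 / 2)) ^ 2 *
    (μ univ * (gaussLayerConst * C))) with hL
  refine ⟨μ univ * (ENNReal.ofReal (Real.exp 1) * (L * ENNReal.ofReal ((4 * B) ^ (1 - s)) *
    (gaussLayerConst * C))), by finiteness, fun t ht ↦ ?_⟩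
  have ht₀ : 0 < |t| := by linarith
  refine ((enorm_sq_charFun_sqDistLaw_le t).trans (mul_le_mul_right
    ((hμ.lintegral_enorm_sq_quadCharFun_le hs hB hμB ht).trans
      (mul_le_mul_right (mul_le_mul_left
        (hμ.lintegral_enorm_sq_weightedCharFun_mul_gaussWeight_le hs (measurable_quadPhaseGrowth t)
          (ae_norm_quadPhaseGrowth_le hμB t) (by positivity)) _) _)) _)).trans_eq ?_
  rw [← hL, Real.mul_rpow (by positivity) ht₀.le, ENNReal.ofReal_mul (by positivity),
    show 1 - 2 * s = (1 - s) + -s by ring, Real.rpow_add ht₀, ENNReal.ofReal_mul (by positivity)]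
  ring

lemma IsFrostman.exists_enorm_charFun_sqDistLaw_le [IsFiniteMeasure μ] (hμ : IsFrostman μ C s)
    (hC : C ≠ ⊤) (hs₀ : 1 / 2 ≤ s) (hs : s ≤ 1) (hB : 1 ≤ B) (hμB : ∀ᵐ z ∂μ, |z| ≤ B) :
    ∃ E : ℝ≥0∞, E ≠ ⊤ ∧ ∀ t : ℝ,
      ‖charFun (sqDistLaw μ) t‖ₑ ≤ E * ENNReal.ofReal ((1 + |t|) ^ (-(s - 1 / 2))) := by
  obtain ⟨D, hD, hdecay⟩ := hμ.exists_enorm_sq_charFun_sqDistLaw_le_of_one_le_abs hC hs hB hμB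
  set ν := sqDistLaw μ
  have hweight {t u : ℝ} (hu : 0 < u) (h : 1 + |t| ≤ 2 * u) :
      u ^ (-(s - 1 / 2)) ≤ 2 ^ (s - 1 / 2) * (1 + |t|) ^ (-(s - 1 / 2)) := by
    rw [Real.rpow_neg hu.le, Real.rpow_neg (by positivity), ← div_eq_mul_inv,
      ← Real.div_rpow (by norm_num) (by positivity), ← Real.inv_rpow hu.le]
    refine Real.rpow_le_rpow (by positivity) ?_ (by linarith)
    rw [inv_eq_one_div, div_le_div_iff₀ hu (by positivity)]
    linarith
  refine ⟨(ν univ + (D + 1)) * ENNReal.ofReal (2 ^ (s - 1 / 2)), by finiteness, fun t ↦ ?_⟩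
  rw [mul_assoc, ← ENNReal.ofReal_mul (by positivity)]
  rcases le_or_gt 1 |t| with ht | ht
  · rw [← ENNReal.pow_le_pow_left_iff two_ne_zero, mul_pow, ← ENNReal.ofReal_pow (by positivity)]
    refine (hdecay t ht).trans (mul_le_mul' ?_ (ENNReal.ofReal_le_ofReal ?_))
    · have h1 : 1 ≤ ν univ + (D + 1) := le_add_self.trans le_add_self
      exact (le_self_add.trans le_add_self).trans (le_self_pow₀ h1 two_ne_zero)
    · rw [show 1 - 2 * s = -(s - 1 / 2) * (2 : ℕ) by push_cast; ring, Real.rpow_mul (abs_nonneg t),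
        Real.rpow_natCast]
      gcongr
      exact hweight (by linarith) (by linarith)
  · have hle : ‖charFun ν t‖ₑ ≤ ν univ := by
      rw [← ofReal_norm, ← ofReal_measureReal]
      exact ENNReal.ofReal_le_ofReal (norm_charFun_le t)
    refine hle.trans (le_self_add.trans (le_mul_of_one_le_right' ?_))
    rw [ENNReal.one_le_ofReal]
    simpa using hweight one_pos (t := t) (by linarith)

end SqDistLaw

section InteriorOfSupport

variable {E : Type*} [NormedAddCommGroup E] [InnerProductSpace ℝ E] [FiniteDimensional ℝ E]
  [MeasurableSpace E] [BorelSpace E] {σ : Measure E}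

/-- The Fourier inversion formula for the density of a measure whose characteristic function is
integrable. The factor `2 * π` converts `charFun` to the normalization of `𝓕`. -/
noncomputable def charFunDensity (σ : Measure E) : E → ℂ :=
  𝓕 fun ξ ↦ charFun σ ((2 * Real.pi) • ξ)

lemma continuous_charFunDensity (hσ : Integrable (charFun σ)) : Continuous (charFunDensity σ) :=
  VectorFourier.fourierIntegral_continuous Real.continuous_fourierChar continuous_inner
    (hσ.comp_smul (by positivity))

lemma integral_charFunDensity_mul_schwartz [IsFiniteMeasure σ] (hσ : Integrable (charFun σ))
    (φ : 𝓢(E, ℂ)) : ∫ x, charFunDensity σ x * φ x = ∫ x, φ x ∂σ := by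
  set F : E → ℂ := VectorFourier.fourierIntegral Real.fourierChar σ (innerₗ E) 1
  have hcharFun (ξ : E) : charFun σ ((2 * Real.pi) • ξ) = F (-ξ) := by
    rw [charFun_eq_fourierIntegral', neg_smul, inv_smul_smul₀ (by positivity)]
  calc ∫ x, charFunDensity σ x * φ x
    _ = ∫ ξ, charFun σ ((2 * Real.pi) • ξ) * 𝓕 φ ξ := by
        simpa using! VectorFourier.integral_fourierIntegral_smul_eq_flip (L := innerₗ E)
          Real.continuous_fourierChar continuous_inner (hσ.comp_smul (R := 2 * Real.pi)
            (by positivity)) φ.integrable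
    _ = ∫ ξ, F (-ξ) * 𝓕⁻ φ (-ξ) := by
        congr! 3 with ξ
        · exact hcharFun ξ
        · simp [SchwartzMap.fourier_coe, SchwartzMap.fourierInv_coe, Real.fourierInv_eq_fourier_neg]
    _ = ∫ ξ, F ξ * 𝓕⁻ φ ξ := integral_neg_eq_self (fun ξ ↦ F ξ * 𝓕⁻ φ ξ) volume
    _ = ∫ x, 𝓕 (𝓕⁻ φ) x ∂σ := by
        have hflip := VectorFourier.integral_fourierIntegral_smul_eq_flip (L := innerₗ E) (μ := σ)
          (ν := volume) Real.continuous_fourierChar continuous_inner (integrable_const (1 : ℂ))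
          (𝓕⁻ φ).integrable
        simp only [smul_eq_mul, one_mul, flip_innerₗ] at hflip
        exact hflip
    _ = ∫ x, φ x ∂σ := by rw [FourierTransform.fourier_fourierInv_eq]

lemma eqOn_charFunDensity_zero [IsFiniteMeasure σ] (hσ : Integrable (charFun σ)) {U : Set E}
    (hU : IsOpen U) (hσU : ∀ᵐ x ∂σ, x ∉ U) : EqOn (charFunDensity σ) 0 U := by
  have hcont := continuous_charFunDensity hσ
  refine Measure.eqOn_open_of_ae_eq (μ := volume) ((ae_restrict_iff' hU.measurableSet).mpr ?_) hU
    hcont.continuousOn continuousOn_const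
  refine hU.ae_eq_zero_of_integral_contDiff_smul_eq_zero
    (hcont.locallyIntegrable.locallyIntegrableOn U) fun g hg hgc hgU ↦ ?_
  have hzero : ∀ᵐ x ∂σ, g x = 0 := by
    filter_upwards [hσU] with x hx using image_eq_zero_of_notMem_tsupport fun h ↦ hx (hgU h)
  have hφ := integral_charFunDensity_mul_schwartz hσ
    ((hgc.comp_left Complex.ofReal_zero).toSchwartzMap (Complex.ofRealCLM.contDiff.comp hg))
  calc ∫ x, g x • charFunDensity σ x
    _ = ∫ x, charFunDensity σ x * (g x : ℂ) := by simp only [Complex.real_smul, mul_comm]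
    _ = ∫ x, (g x : ℂ) ∂σ := hφ
    _ = 0 := integral_eq_zero_of_ae (hzero.mono fun x hx ↦ by simp [hx])

lemma interior_nonempty_of_integrable_charFun [IsFiniteMeasure σ] (hσ : Integrable (charFun σ))
    (h₀ : σ univ ≠ 0) {S : Set E} (hS : IsClosed S) (hσS : ∀ᵐ x ∂σ, x ∈ S) :
    (interior S).Nonempty := by
  by_contra! hempty
  have hzero : charFunDensity σ = 0 :=
    (continuous_charFunDensity hσ).ext_on (interior_eq_empty_iff_dense_compl.mp hempty)
      continuous_const (eqOn_charFunDensity_zero hσ hS.isOpen_compl (by simpa using hσS))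
  have hcont : Continuous fun ξ : E ↦ charFun σ ((2 * Real.pi) • ξ) := by fun_prop
  have hinv := hcont.fourierInv_fourier_eq (hσ.comp_smul (by positivity))
    (show Integrable (charFunDensity σ) volume from hzero ▸ integrable_zero E ℂ volume)
  rw [show 𝓕 (fun ξ ↦ charFun σ ((2 * Real.pi) • ξ)) = 0 from hzero] at hinv
  have huniv : σ.real univ = 0 := by simpa [Real.fourierInv_eq] using (congrFun hinv 0).symm
  exact h₀ ((measureReal_eq_zero_iff (by finiteness)).mp huniv)

end InteriorOfSupport

section Convolution

variable {A : Set ℝ} {k l : ℕ} {μ ν : Measure ℝ}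

lemma conv_univ_ne_zero [SFinite ν] (hμ : μ univ ≠ 0) (hν : ν univ ≠ 0) :
    (μ.conv ν) univ ≠ 0 := by
  rw [Measure.conv, Measure.map_apply (by fun_prop) MeasurableSet.univ, preimage_univ,
    ← univ_prod_univ, Measure.prod_prod]
  exact mul_ne_zero hμ hν

lemma ae_conv_mem_sqDistSet (hA : IsCompact A) (hμ : ∀ᵐ x ∂μ, x ∈ sqDistSet A k)
    (hν : ∀ᵐ x ∂ν, x ∈ sqDistSet A l) : ∀ᵐ x ∂μ.conv ν, x ∈ sqDistSet A (k + l) := by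
  refine (ae_map_iff (by fun_prop) (isCompact_sqDistSet hA _).measurableSet).mpr ?_
  filter_upwards [ae_prod_mem_and hμ hν] with p hp using add_mem_sqDistSet hp.1 hp.2

lemma exists_charFun_eq_mul_charFun_pow [IsFiniteMeasure μ] [IsFiniteMeasure ν]
    (hA : IsCompact A) (hμ₀ : μ univ ≠ 0) (hν₀ : ν univ ≠ 0)
    (hμ : ∀ᵐ x ∂μ, x ∈ sqDistSet A k) (hν : ∀ᵐ x ∂ν, x ∈ sqDistSet A 1) (m : ℕ) :
    ∃ σ : Measure ℝ, IsFiniteMeasure σ ∧ σ univ ≠ 0 ∧ (∀ᵐ x ∂σ, x ∈ sqDistSet A (k + m)) ∧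
      ∀ t, charFun σ t = charFun μ t * charFun ν t ^ m := by
  induction m with
  | zero => exact ⟨μ, inferInstance, hμ₀, hμ, fun t ↦ by rw [pow_zero, mul_one]⟩
  | succ m ih =>
    obtain ⟨σ, _, hσ₀, hσA, hσ⟩ := ih
    refine ⟨σ.conv ν, inferInstance, conv_univ_ne_zero hσ₀ hν₀,
      ae_conv_mem_sqDistSet (k := k + m) hA hσA hν, fun t ↦ ?_⟩
    rw [charFun_conv, hσ, pow_succ, mul_assoc]

end Convolution

section Interior

variable {A : Set ℝ} {s : ℝ}

lemma le_one_of_ofReal_lt_dimH (hdim : ENNReal.ofReal s < dimH A) : s ≤ 1 := by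
  rw [← ENNReal.ofReal_le_one, ← Real.dimH_univ]
  exact hdim.le.trans (dimH_mono (subset_univ A))

lemma interior_sqDistSet_nonempty (hA : IsCompact A) (hs : 1 / 2 < s)
    (hdim : ENNReal.ofReal s < dimH A) {m : ℕ} {σ : ℝ} (hσ₀ : 0 ≤ σ)
    (hσ : σ < 2 - (s + 1 / s) / 2) (hm : 1 - σ < m * (s - 1 / 2)) :
    (interior (sqDistSet A (3 + 3 + m))).Nonempty := by
  have hs1 : s ≤ 1 := le_one_of_ofReal_lt_dimH hdim
  have hσ1 : σ ≤ 1 := by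
    have hamgm : 2 ≤ s + 1 / s := by
      rw [← sub_nonneg, show s + 1 / s - 2 = (s - 1) ^ 2 / s by field_simp; ring]
      positivity
    linarith
  obtain ⟨μ, _, hμ₀, hμA, hμ⟩ := exists_isFrostman_of_lt_dimH (by linarith) hA hdim
  obtain ⟨B, hB, hμB⟩ := exists_one_le_ae_abs_le hA hμA
  obtain ⟨η, _, hη₀, hηA, C, hC, hη⟩ := hμ.exists_isFrostman_sqDistSet_three ENNReal.ofReal_ne_top
    hs hs1 hμ₀ hA hμA hσ₀ hσ
  obtain ⟨E, hE, hdecay⟩ :=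
    hμ.exists_enorm_charFun_sqDistLaw_le ENNReal.ofReal_ne_top hs.le hs1 hB hμB
  obtain ⟨ρ, _, hρ₀, hρA, hρ⟩ := exists_charFun_eq_mul_charFun_pow hA
    (conv_univ_ne_zero hη₀ hη₀) (sqDistLaw_univ_ne_zero hμ₀) (ae_conv_mem_sqDistSet hA hηA hηA)
    (ae_sqDistLaw_mem_sqDistSet_one hA hμA) m
  refine interior_nonempty_of_integrable_charFun ⟨by fun_prop, ?_⟩ hρ₀
    (isCompact_sqDistSet hA _).isClosed hρA
  have hpointwise (t : ℝ) : ‖charFun ρ t‖ₑ ≤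
      E ^ m * (‖charFun η t‖ₑ ^ 2 * ENNReal.ofReal ((1 + |t|) ^ (-(m * (s - 1 / 2))))) := by
    have hpow : (1 + |t|) ^ (-(m * (s - 1 / 2))) = ((1 + |t|) ^ (-(s - 1 / 2))) ^ m := by
      rw [← Real.rpow_mul_natCast (by positivity)]
      ring_nf
    rw [hρ, charFun_conv, enorm_mul, enorm_mul, enorm_pow, hpow,
      ENNReal.ofReal_pow (by positivity), ← sq, mul_left_comm, ← mul_pow]
    exact mul_le_mul_right (pow_le_pow_left' (hdecay t) m) _
  refine ((lintegral_mono hpointwise).trans_eq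
    (lintegral_const_mul' _ _ (ENNReal.pow_ne_top hE))).trans_lt ?_
  exact ENNReal.mul_lt_top (ENNReal.pow_lt_top hE.lt_top)
    (hη.lintegral_enorm_sq_charFun_mul_rpow_ne_top hC hσ1 hm).lt_top

end Interior

end MattilaSjolin

theorem mattila_sjolin_product_d_ge_10_general (d : ℕ) (A : Set ℝ) (hA : IsCompact A) (s : ℝ)
    (hs : 1 / 2 < s) (hsd : (1 - s) ^ 2 < ((d : ℝ) - 6) * s * (2 * s - 1))
    (hdim : ENNReal.ofReal s < dimH A) : (interior (distSet (prodSet A d))).Nonempty := by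
  have hs₁ : s ≤ 1 := MattilaSjolin.le_one_of_ofReal_lt_dimH hdim
  have hd : (6 : ℝ) < d := by
    by_contra! hd
    nlinarith [sq_nonneg (1 - s), mul_nonneg (sub_nonneg.mpr hd)
      (mul_nonneg (by linarith : 0 ≤ s) (by linarith : 0 ≤ 2 * s - 1))]
  obtain ⟨m, rfl⟩ : ∃ m, d = 3 + 3 + m := Nat.exists_eq_add_of_le (by exact_mod_cast hd.le)
  obtain ⟨σ, hσ, hσm⟩ : ∃ σ, max 0 (1 - m * (s - 1 / 2)) < σ ∧ σ < 2 - (s + 1 / s) / 2 := by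
    have hcompl : 2 - (s + 1 / s) / 2 = 1 - (1 - s) ^ 2 / (2 * s) := by field_simp; ring
    rw [hcompl]
    refine exists_between (max_lt (sub_pos.mpr ?_) (sub_lt_sub_left ?_ 1))
    · rw [div_lt_one (by positivity)]
      nlinarith
    · rw [div_lt_iff₀ (by positivity)]
      push_cast at hsd
      linarith
  have hsq := MattilaSjolin.interior_sqDistSet_nonempty (m := m) hA hs hdim
    ((le_max_left _ _).trans hσ.le) hσm (by linarith [(le_max_right 0 _).trans_lt hσ])
  exact MattilaSjolin.interior_distSet_prodSet_nonempty hsq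

theorem mattila_sjolin_product_d_ge_10 (d : ℕ) (hd : 10 ≤ d) (A : Set ℝ)
    (hA : IsCompact A)
    (hdim : dimH A >
      ENNReal.ofReal (((d : ℝ) - 2) / (2 * ((d : ℝ) - 4)) - 40 / (57 * ((d : ℝ) - 4)))) :
    (interior (distSet (prodSet A d))).Nonempty := by
  have hd₆ : (6 : ℝ) ≤ d - 4 := by
    have : (10 : ℝ) ≤ d := by exact_mod_cast hd
    linarith
  have hd₀ : (0 : ℝ) < d - 4 := by linarith
  set u : ℝ := 17 / (57 * ((d : ℝ) - 4)) with hu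
  have hthreshold :
      ((d : ℝ) - 2) / (2 * ((d : ℝ) - 4)) - 40 / (57 * ((d : ℝ) - 4)) = 1 / 2 + u := by
    rw [hu]
    field_simp
    ring
  have hdu : ((d : ℝ) - 4) * u = 17 / 57 := by
    rw [hu]
    field_simp
  have hu₀ : 0 < u := div_pos (by norm_num) (mul_pos (by norm_num) hd₀)
  have hu₁ : u ≤ 17 / 342 := by linarith [mul_le_mul_of_nonneg_right hd₆ hu₀.le]
  refine mattila_sjolin_product_d_ge_10_general d A hA (1 / 2 + u) (by linarith) ?_
    (hthreshold ▸ hdim)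
  calc (1 - (1 / 2 + u)) ^ 2 < (1 + 2 * u) * (17 / 57 - 2 * u) := by nlinarith
    _ = ((d : ℝ) - 6) * (1 / 2 + u) * (2 * (1 / 2 + u) - 1) := by rw [← hdu]; ring
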